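/- Let 𝚫 ∈ Ã. Then there exists a gentle quiver 𝚫' without branch arrows and without branch triangles which is reflection-equivalent to 𝚫 (i.e. obtained from 𝚫 by a finite sequence of reflections and coreflections). -/

import Mathlib

/-! Common formalization infrastructure for gentle quivers (Bobinski–Buan,
    "Derived equivalence classification of gentle cluster tilted algebras"). -/

/-- A (finite) quiver with (length-two, monomial) relations.  Vertices and
arrows are natural numbers; `V` and `A` are the finite sets of vertices and
arrows, `src`/`tgt` give the start and terminus of each arrow, and `rel` is the
set of relations, a relation `(a, b)` standing for the length-two path
`a·b` (so `src a = tgt b`). -/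
structure QuivRel where
  V : Finset ℕ
  A : Finset ℕ
  src : ℕ → ℕ
  tgt : ℕ → ℕ
  rel : Finset (ℕ × ℕ)

namespace GentleQuiv

/-- Two vertices are adjacent if some arrow joins them (in either direction). -/
def Adj (Q : QuivRel) (x y : ℕ) : Prop :=
  ∃ a ∈ Q.A, (Q.src a = x ∧ Q.tgt a = y) ∨ (Q.src a = y ∧ Q.tgt a = x)

/-- A quiver is connected if any two of its vertices are joined by a walk. -/
def Connected (Q : QuivRel) : Prop :=
  ∀ x ∈ Q.V, ∀ y ∈ Q.V, Relation.ReflTransGen (Adj Q) x y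

/-- `l = [α₁, …, αₙ]` is a (nonempty) path in the quiver: consecutive arrows
compose, i.e. `s αᵢ = t αᵢ₊₁`. -/
def IsPathList (Q : QuivRel) (l : List ℕ) : Prop :=
  l ≠ [] ∧ (∀ a ∈ l, a ∈ Q.A) ∧ l.Chain' (fun a b => Q.src a = Q.tgt b)

/-- The path `l` contains a subpath (two consecutive arrows) lying in `R`. -/
def HasRelSubpath (Q : QuivRel) (l : List ℕ) : Prop :=
  ∃ a b, (a, b) ∈ Q.rel ∧ [a, b] <:+: l

/-- Gentle quiver: connected, relations are composable pairs of arrows, at most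
two arrows in/out of every vertex, the usual gentleness conditions on
relations, and a global bound forcing finite dimensionality. -/
def IsGentle (Q : QuivRel) : Prop :=
  Q.V.Nonempty ∧
  (∀ a ∈ Q.A, Q.src a ∈ Q.V ∧ Q.tgt a ∈ Q.V) ∧
  Connected Q ∧
  (∀ ρ ∈ Q.rel, ρ.1 ∈ Q.A ∧ ρ.2 ∈ Q.A ∧ Q.src ρ.1 = Q.tgt ρ.2) ∧
  (∀ x, (Q.A.filter fun a => Q.src a = x).card ≤ 2) ∧
  (∀ x, (Q.A.filter fun a => Q.tgt a = x).card ≤ 2) ∧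
  (∀ a ∈ Q.A, (Q.A.filter fun b => Q.src b = Q.tgt a ∧ (b, a) ∉ Q.rel).card ≤ 1) ∧
  (∀ a ∈ Q.A, (Q.A.filter fun c => Q.tgt c = Q.src a ∧ (a, c) ∉ Q.rel).card ≤ 1) ∧
  (∀ a ∈ Q.A, (Q.A.filter fun b => (b, a) ∈ Q.rel).card ≤ 1) ∧
  (∀ a ∈ Q.A, (Q.A.filter fun c => (a, c) ∈ Q.rel).card ≤ 1) ∧
  (∃ n : ℕ, ∀ l : List ℕ, IsPathList Q l → l.length = n → HasRelSubpath Q l)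

/-- A choice of functions `σ, τ : Δ₁ → {±1}` as in Avella-Alaminos–Geiss. -/
structure SigmaTau (Q : QuivRel) where
  σ : ℕ → ℤ
  τ : ℕ → ℤ
  σ_pm : ∀ a ∈ Q.A, σ a = 1 ∨ σ a = -1
  τ_pm : ∀ a ∈ Q.A, τ a = 1 ∨ τ a = -1
  σ_src : ∀ a ∈ Q.A, ∀ b ∈ Q.A, a ≠ b → Q.src a = Q.src b → σ a = -σ b
  τ_tgt : ∀ a ∈ Q.A, ∀ b ∈ Q.A, a ≠ b → Q.tgt a = Q.tgt b → τ a = -τ b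
  rel_iff : ∀ a ∈ Q.A, ∀ b ∈ Q.A, Q.src a = Q.tgt b → ((a, b) ∈ Q.rel ↔ σ a = τ b)

/-- A thread: either a trivial path/antipath `1_{x,ε}` at a vertex `x` with a
sign `ε`, or a sequence of arrows of positive length. -/
inductive Thread where
  | triv (x : ℕ) (ε : ℤ) : Thread
  | arrows (l : List ℕ) : Thread
deriving DecidableEq

/-- Source of a thread. -/
def Thread.source (Q : QuivRel) : Thread → ℕ
  | .triv x _ => x
  | .arrows l => Q.src l.getLast!

/-- Target of a thread. -/
def Thread.target (Q : QuivRel) : Thread → ℕ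
  | .triv x _ => x
  | .arrows l => Q.tgt l.head!

/-- `σω` (for paths and antipaths alike; `σ 1_{x,ε} = ε = σ 1'_{x,ε}`). -/
def Thread.sigma {Q : QuivRel} (st : SigmaTau Q) : Thread → ℤ
  | .triv _ ε => ε
  | .arrows l => st.σ l.getLast!

/-- `τω` when `ω` is regarded as a path (`τ 1_{x,ε} = -ε`). -/
def Thread.tauPath {Q : QuivRel} (st : SigmaTau Q) : Thread → ℤ
  | .triv _ ε => -ε
  | .arrows l => st.τ l.head!

/-- `τω` when `ω` is regarded as an antipath (`τ 1'_{x,ε} = ε`). -/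
def Thread.tauAnti {Q : QuivRel} (st : SigmaTau Q) : Thread → ℤ
  | .triv _ ε => ε
  | .arrows l => st.τ l.head!

/-- Length of a thread. -/
def Thread.len : Thread → ℕ
  | .triv _ _ => 0
  | .arrows l => l.length

/-- A path in `𝚫` of positive length (no two consecutive arrows in `R`). -/
def IsPermList (Q : QuivRel) (l : List ℕ) : Prop :=
  IsPathList Q l ∧ l.Chain' (fun a b => (a, b) ∉ Q.rel)

/-- An antipath in `𝚫` of positive length (all consecutive pairs in `R`). -/
def IsAntiList (Q : QuivRel) (l : List ℕ) : Prop :=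
  l ≠ [] ∧ (∀ a ∈ l, a ∈ Q.A) ∧ l.Chain' (fun a b => (a, b) ∈ Q.rel)

/-- A thread is a path in `𝚫` (including trivial ones). -/
def IsPathThread (Q : QuivRel) : Thread → Prop
  | .triv x ε => x ∈ Q.V ∧ (ε = 1 ∨ ε = -1)
  | .arrows l => IsPermList Q l

/-- A thread is an antipath in `𝚫` (including trivial ones). -/
def IsAntiThread (Q : QuivRel) : Thread → Prop
  | .triv x ε => x ∈ Q.V ∧ (ε = 1 ∨ ε = -1)
  | .arrows l => IsAntiList Q l

/-- `w ∈ ℳ`: `w` is a maximal path of `𝚫`. -/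
def InM (Q : QuivRel) (st : SigmaTau Q) (w : Thread) : Prop :=
  IsPathThread Q w ∧
  (¬ ∃ a ∈ Q.A, Q.src a = w.target Q ∧ st.σ a = -(w.tauPath st)) ∧
  (¬ ∃ b ∈ Q.A, Q.tgt b = w.source Q ∧ st.τ b = -(w.sigma st))

/-- `w ∈ 𝒩`: `w` is a maximal antipath of `𝚫`. -/
def InN (Q : QuivRel) (st : SigmaTau Q) (w : Thread) : Prop :=
  IsAntiThread Q w ∧
  (¬ ∃ a ∈ Q.A, Q.src a = w.target Q ∧ st.σ a = w.tauAnti st) ∧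
  (¬ ∃ b ∈ Q.A, Q.tgt b = w.source Q ∧ st.τ b = w.sigma st)

/-- The graph of the bijection `Φ = φ ∘ ψ : 𝒩 → 𝒩`:  `PhiRel Q st w w'` holds
iff `w, w' ∈ 𝒩` and the maximal path `ψ w` (with `s(ψw) = sw`, `σ(ψw) = -σw`)
satisfies `t w' = t (ψ w)` and `τ w' = -τ(ψ w)`, i.e. `w' = φ (ψ w) = Φ w`. -/
def PhiRel (Q : QuivRel) (st : SigmaTau Q) (w w' : Thread) : Prop :=
  InN Q st w ∧ InN Q st w' ∧
  ∃ m : Thread, InM Q st m ∧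
    m.source Q = w.source Q ∧ m.sigma st = -(w.sigma st) ∧
    w'.target Q = m.target Q ∧ w'.tauAnti st = -(m.tauPath st)

/-- `O` is an orbit of the `ℤ`-action on `𝒩` induced by `Φ`. -/
def NOrbit (Q : QuivRel) (st : SigmaTau Q) (O : Set Thread) : Prop :=
  ∃ w, InN Q st w ∧ O = {w' | Relation.EqvGen (PhiRel Q st) w w'}

/-- `p(𝒪) = |𝒪|` for an orbit `𝒪 ∈ 𝒩/ℤ`. -/
noncomputable def pN (O : Set Thread) : ℕ := O.ncard

/-- `q(𝒪) = Σ_{ω ∈ 𝒪} ℓ(ω)` for an orbit `𝒪 ∈ 𝒩/ℤ`. -/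
noncomputable def qN (O : Set Thread) : ℕ := ∑ᶠ w ∈ O, Thread.len w

/-- `a ∈ 𝒞`: the arrow `a` occurs in no maximal antipath. -/
def InC (Q : QuivRel) (st : SigmaTau Q) (a : ℕ) : Prop :=
  a ∈ Q.A ∧ ¬ ∃ l : List ℕ, InN Q st (.arrows l) ∧ a ∈ l

/-- The graph of the bijection `Ψ : 𝒞 → 𝒞`. -/
def PsiRel (Q : QuivRel) (st : SigmaTau Q) (a b : ℕ) : Prop :=
  InC Q st a ∧ InC Q st b ∧ Q.tgt b = Q.src a ∧ st.τ b = st.σ a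

/-- `O` is an orbit of the `ℤ`-action on `𝒞` induced by `Ψ`. -/
def COrbit (Q : QuivRel) (st : SigmaTau Q) (O : Set ℕ) : Prop :=
  ∃ a, InC Q st a ∧ O = {b | Relation.EqvGen (PsiRel Q st) a b}

/-- The Avella-Alaminos–Geiss invariant `f_𝚫 : ℕ² → ℕ`:  `f_𝚫 (p,q)` counts the
orbits `𝒪 ∈ 𝒩/ℤ ⊔ 𝒞/ℤ` with `p(𝒪) = p` and `q(𝒪) = q`. -/
noncomputable def fInv (Q : QuivRel) (st : SigmaTau Q) : ℕ × ℕ → ℕ := fun pq =>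
  {O : Set Thread | NOrbit Q st O ∧ pN O = pq.1 ∧ qN O = pq.2}.ncard +
  {O : Set ℕ | COrbit Q st O ∧ pq.1 = 0 ∧ O.ncard = pq.2}.ncard

/-- `[p, q] : ℕ² → ℕ`, the characteristic function of `{(p, q)}`. -/
def charFn (p q : ℕ) : ℕ × ℕ → ℕ := fun pq => if pq = (p, q) then 1 else 0

/-- Tree type: `|Δ₀| = |Δ₁| + 1`. -/
def TreeType (Q : QuivRel) : Prop := Q.V.card = Q.A.card + 1

/-- Removing a set of arrows (keeping all vertices); relations containing a
removed arrow are discarded. -/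
def deleteArrows (Q : QuivRel) (S : Finset ℕ) : QuivRel where
  V := Q.V
  A := Q.A \ S
  src := Q.src
  tgt := Q.tgt
  rel := Q.rel.filter fun ρ => ρ.1 ∉ S ∧ ρ.2 ∉ S

/-- Branch arrow: removing it disconnects the quiver. -/
def BranchArrow (Q : QuivRel) (a : ℕ) : Prop :=
  a ∈ Q.A ∧ ¬ Connected (deleteArrows Q {a})

/-- Cycle arrow: removing it leaves the quiver connected. -/
def CycleArrow (Q : QuivRel) (a : ℕ) : Prop :=
  a ∈ Q.A ∧ Connected (deleteArrows Q {a})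

/-- Branch relation: a relation one of whose arrows is a branch arrow. -/
def BranchRel (Q : QuivRel) (ρ : ℕ × ℕ) : Prop :=
  ρ ∈ Q.rel ∧ (BranchArrow Q ρ.1 ∨ BranchArrow Q ρ.2)

/-- A relation `ρ = (α, β)` is isolated if the antipath `(α, β)` is a maximal
antipath, i.e. `ρ ∈ 𝒩`. -/
def Isolated (Q : QuivRel) (st : SigmaTau Q) (ρ : ℕ × ℕ) : Prop :=
  ρ ∈ Q.rel ∧ InN Q st (.arrows [ρ.1, ρ.2])

/-- `Q'` is obtained from `Q` by completing the relations from `R₀`, the new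
arrow attached to `ρ ∈ R₀` being `γ ρ`. -/
structure IsCompletion (Q : QuivRel) (R0 : Finset (ℕ × ℕ)) (γ : ℕ × ℕ → ℕ)
    (Q' : QuivRel) : Prop where
  subset : R0 ⊆ Q.rel
  fresh : ∀ ρ ∈ R0, γ ρ ∉ Q.A
  inj : ∀ ρ ∈ R0, ∀ ρ' ∈ R0, γ ρ = γ ρ' → ρ = ρ'
  V_eq : Q'.V = Q.V
  A_eq : Q'.A = Q.A ∪ R0.image γ
  src_old : ∀ a ∈ Q.A, Q'.src a = Q.src a
  tgt_old : ∀ a ∈ Q.A, Q'.tgt a = Q.tgt a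
  src_new : ∀ ρ ∈ R0, Q'.src (γ ρ) = Q.tgt ρ.1
  tgt_new : ∀ ρ ∈ R0, Q'.tgt (γ ρ) = Q.src ρ.2
  rel_eq : Q'.rel = Q.rel ∪ R0.image (fun ρ => (γ ρ, ρ.1)) ∪
      R0.image (fun ρ => (ρ.2, γ ρ))

/-- A 3-cycle: three pairwise distinct arrows forming an oriented cycle. -/
def Is3Cycle (Q : QuivRel) (a0 a1 a2 : ℕ) : Prop :=
  a0 ∈ Q.A ∧ a1 ∈ Q.A ∧ a2 ∈ Q.A ∧ a0 ≠ a1 ∧ a1 ≠ a2 ∧ a0 ≠ a2 ∧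
  Q.src a0 = Q.tgt a1 ∧ Q.src a1 = Q.tgt a2 ∧ Q.src a2 = Q.tgt a0

/-- A triangle: a 3-cycle all of whose three compositions are relations. -/
def IsTriangleTriple (Q : QuivRel) (a0 a1 a2 : ℕ) : Prop :=
  Is3Cycle Q a0 a1 a2 ∧ (a0, a1) ∈ Q.rel ∧ (a1, a2) ∈ Q.rel ∧ (a2, a0) ∈ Q.rel

/-- The (unordered) set of arrows of a triangle. -/
def TriangleSet (Q : QuivRel) (O : Finset ℕ) : Prop :=
  ∃ a0 a1 a2, O = {a0, a1, a2} ∧ IsTriangleTriple Q a0 a1 a2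

/-- Branch triangle: removing any two of its arrows disconnects the quiver. -/
def BranchTriangle (Q : QuivRel) (O : Finset ℕ) : Prop :=
  TriangleSet Q O ∧ ∀ S ⊆ O, S.card = 2 → ¬ Connected (deleteArrows Q S)

/-- Free relation: a relation neither of whose arrows lies in `𝒞`. -/
def FreeRel (Q : QuivRel) (st : SigmaTau Q) (ρ : ℕ × ℕ) : Prop :=
  ρ ∈ Q.rel ∧ ¬ InC Q st ρ.1 ∧ ¬ InC Q st ρ.2

/-- The class `𝒜`: gentle quivers with `f_𝚫 = m·[0,3] + [p+m+2, p]`. -/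
def ClassA (Q : QuivRel) (st : SigmaTau Q) : Prop :=
  IsGentle Q ∧ ∃ m p : ℕ, ∀ x, fInv Q st x = m * charFn 0 3 x + charFn (p + m + 2) p x

/-- The class `Ã`: gentle quivers with
`f_𝚫 = (m₁+m₂)·[0,3] + [p+m₁, p] + [q+m₂, q]`, `p+m₁ > 0`, `q+m₂ > 0`. -/
def ClassAtilde (Q : QuivRel) (st : SigmaTau Q) : Prop :=
  IsGentle Q ∧ ∃ m1 m2 p q : ℕ, 0 < p + m1 ∧ 0 < q + m2 ∧
    ∀ x, fInv Q st x =
      (m1 + m2) * charFn 0 3 x + charFn (p + m1) p x + charFn (q + m2) q x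

/-- Isomorphism of quivers with relations. -/
def IsoQR (Q Q' : QuivRel) : Prop :=
  ∃ fV fA : ℕ → ℕ,
    Set.BijOn fV ↑Q.V ↑Q'.V ∧ Set.BijOn fA ↑Q.A ↑Q'.A ∧
    (∀ a ∈ Q.A, Q'.src (fA a) = fV (Q.src a) ∧ Q'.tgt (fA a) = fV (Q.tgt a)) ∧
    (∀ a ∈ Q.A, ∀ b ∈ Q.A, ((a, b) ∈ Q.rel ↔ (fA a, fA b) ∈ Q'.rel))

/-- The quiver has no loops. -/
def NoLoops (Q : QuivRel) : Prop := ∀ a ∈ Q.A, Q.src a ≠ Q.tgt a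

/-- The reflection at `x` is defined: every arrow starting at `x` admits a
(necessarily unique) companion arrow ending at `x` not bound by a relation. -/
def CanReflect (Q : QuivRel) (x : ℕ) : Prop :=
  x ∈ Q.V ∧ ∀ a ∈ Q.A, Q.src a = x → ∃ b ∈ Q.A, Q.tgt b = x ∧ (a, b) ∉ Q.rel

/-- `Q'` is the reflection of the gentle loop-free quiver `Q` at the vertex
`x`, following Brenner–Butler tilting. -/
def IsReflection (Q : QuivRel) (x : ℕ) (Q' : QuivRel) : Prop :=
  IsGentle Q ∧ NoLoops Q ∧ CanReflect Q x ∧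
  Q'.V = Q.V ∧ Q'.A = Q.A ∧
  (∀ a ∈ Q.A, Q.tgt a = x → Q'.src a = x ∧ Q'.tgt a = Q.src a) ∧
  (∀ a ∈ Q.A, Q.src a = x →
    ∀ b ∈ Q.A, Q.tgt b = x → (a, b) ∉ Q.rel → Q'.src a = Q.src b) ∧
  (∀ a ∈ Q.A, Q.tgt a ≠ x → Q.src a ≠ x → Q'.src a = Q.src a) ∧
  (∀ a ∈ Q.A, Q.tgt a ≠ x →
    ((∃ b ∈ Q.A, Q.tgt b = x ∧ Q.src b = Q.tgt a ∧ (b, a) ∈ Q.rel) → Q'.tgt a = x) ∧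
    ((¬ ∃ b ∈ Q.A, Q.tgt b = x ∧ Q.src b = Q.tgt a ∧ (b, a) ∈ Q.rel) →
      Q'.tgt a = Q.tgt a)) ∧
  (∀ a b : ℕ, (a, b) ∈ Q'.rel ↔
    (((a, b) ∈ Q.rel ∧ Q.tgt a ≠ x ∧ Q.src a ≠ x) ∨
     (a ∈ Q.A ∧ b ∈ Q.A ∧ Q.src a = x ∧ Q.tgt b = x ∧ (a, b) ∉ Q.rel) ∨
     (a ∈ Q.A ∧ b ∈ Q.A ∧ Q.tgt a = x ∧
       ∃ c ∈ Q.A, c ≠ a ∧ Q.tgt c = x ∧ Q.src c = Q.tgt b ∧ (c, b) ∈ Q.rel)))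

/-- The opposite quiver with relations. -/
def opQR (Q : QuivRel) : QuivRel where
  V := Q.V
  A := Q.A
  src := Q.tgt
  tgt := Q.src
  rel := Q.rel.image fun ρ => (ρ.2, ρ.1)

/-- Coreflection: the dual of reflection. -/
def IsCoreflection (Q : QuivRel) (x : ℕ) (Q' : QuivRel) : Prop :=
  IsReflection (opQR Q) x (opQR Q')

/-- One step of reflection equivalence: a reflection, a coreflection, or an
isomorphism of quivers with relations. -/
def RefStep (Q Q' : QuivRel) : Prop :=
  (∃ x, IsReflection Q x Q') ∨ (∃ x, IsCoreflection Q x Q') ∨ IsoQR Q Q'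

/-- Reflection equivalence: a finite sequence of reflections/coreflections,
up to isomorphism of quivers with relations. -/
def RefEquiv : QuivRel → QuivRel → Prop := Relation.ReflTransGen RefStep

/-- A cyclic orientation of a `1`-cycle quiver without branch arrows (i.e. a
cycle): enumerations of the vertices and arrows by `ZMod n` such that the
`i`-th arrow joins the `i`-th and `(i+1)`-st vertices. -/
structure CyclicOrientation (Q : QuivRel) (n : ℕ) where
  ev : ZMod n → ℕ
  ea : ZMod n → ℕ
  ev_mem : ∀ i, ev i ∈ Q.V
  ea_mem : ∀ i, ea i ∈ Q.A
  ev_inj : Function.Injective ev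
  ea_inj : Function.Injective ea
  ev_surj : ∀ v ∈ Q.V, ∃ i, ev i = v
  ea_surj : ∀ a ∈ Q.A, ∃ i, ea i = a
  compat : ∀ i : ZMod n,
    (Q.src (ea i) = ev i ∧ Q.tgt (ea i) = ev (i + 1)) ∨
    (Q.src (ea i) = ev (i + 1) ∧ Q.tgt (ea i) = ev i)

/-- Clockwise arrow with respect to a cyclic orientation. -/
def Clockwise (Q : QuivRel) {n : ℕ} (co : CyclicOrientation Q n) (a : ℕ) : Prop :=
  a ∈ Q.A ∧ ∃ i : ZMod n, co.ea i = a ∧ Q.src a = co.ev i ∧ Q.tgt a = co.ev (i + 1)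

/-- Anticlockwise arrow with respect to a cyclic orientation. -/
def Anticlockwise (Q : QuivRel) {n : ℕ} (co : CyclicOrientation Q n) (a : ℕ) : Prop :=
  a ∈ Q.A ∧ ∃ i : ZMod n, co.ea i = a ∧ Q.src a = co.ev (i + 1) ∧ Q.tgt a = co.ev i

end GentleQuiv

/-!
A gentle quiver is encoded by a ribbon graph, whose edges are the vertices of the quiver and whose
corners are its arrows. Its nodes are the maximal antipaths and the orbits in `𝒞`, its boundary
components are given by the orbits of `Φ`. The invariant of a quiver in `Ã` says that there are as
many nodes as edges, so the graph contains exactly one cycle `Z`, and linear algebra over `ZMod 2`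
finds it. There are also two orbits of `Φ`, and a graph with a single cycle has at most two boundary
components, so every one of them is open, which bounds the lengths of all paths.

A reflection at an edge `x` slides the half-edges preceding the two halves of `x` along `x`. If
something hangs off the cycle in a way producing a branch arrow or a branch triangle, then sliding
half-edges, first inside the branch and finally at the edge next to the cycle, puts a further edge
on the cycle. Hence a cycle which reflections and coreflections cannot make longer has neither.
-/

namespace GentleQuiv

/-! ### Ribbon graphs -/

theorem connected_iff {Q : QuivRel} : Connected Q ↔
    ∀ P : ℕ → Prop, (∀ a ∈ Q.A, P (Q.src a) ↔ P (Q.tgt a)) →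
      ∀ x ∈ Q.V, ∀ y ∈ Q.V, P x → P y := by
  constructor
  · intro h P hP x hx y hy px
    have walk := h x hx y hy
    clear hy
    induction walk with
    | refl => exact px
    | tail _ hs ih =>
      obtain ⟨a, ha, ⟨rfl, rfl⟩ | ⟨rfl, rfl⟩⟩ := hs
      · exact (hP a ha).1 ih
      · exact (hP a ha).2 ih
  · intro h x hx y hy
    refine h (Relation.ReflTransGen (Adj Q) x) (fun a ha => ⟨fun w => ?_, fun w => ?_⟩)
      x hx y hy .refl
    · exact w.tail ⟨a, ha, .inl ⟨rfl, rfl⟩⟩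
    · exact w.tail ⟨a, ha, .inr ⟨rfl, rfl⟩⟩

/-- A half-edge of a ribbon graph: the edge it belongs to, with a sign telling the two halves of
that edge apart. -/
abbrev HalfEdge := ℕ × Bool

/-- The other half of the same edge. -/
def opp (s : HalfEdge) : HalfEdge := (s.1, !s.2)

@[simp] theorem opp_opp (s : HalfEdge) : opp (opp s) = s := by simp [opp]

@[simp] theorem opp_fst (s : HalfEdge) : (opp s).1 = s.1 := rfl

theorem opp_ne (s : HalfEdge) : opp s ≠ s := fun h => by
  simpa [opp] using congrArg Prod.snd h

theorem opp_injective : Function.Injective opp := fun s t h => by rw [← opp_opp s, h, opp_opp]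

theorem eq_or_eq_opp {s t : HalfEdge} (h : s.1 = t.1) : s = t ∨ s = opp t := by
  obtain ⟨x, b⟩ := s
  obtain ⟨y, c⟩ := t
  obtain rfl : x = y := h
  cases b <;> cases c <;> simp [opp]

theorem eq_opp_of_ne {s t : HalfEdge} (h : s.1 = t.1) (hne : s ≠ t) : s = opp t :=
  (eq_or_eq_opp h).resolve_left hne

/-- The ribbon graph of a gentle quiver with signs. Its edges are the vertices `V` of the quiver and
its corners are the arrows `A`: the arrow `a` leads from the half-edge `src a` to the half-edge
`tgt a` following it around their common node. A relation is a pair of consecutive corners, so the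
nodes correspond to the maximal antipaths and to the orbits in `𝒞`. -/
structure RibbonGraph where
  V : Finset ℕ
  A : Finset ℕ
  src : ℕ → HalfEdge
  tgt : ℕ → HalfEdge

namespace RibbonGraph

/-- The quiver with relations encoded by a ribbon graph. -/
def toQuivRel (G : RibbonGraph) : QuivRel where
  V := G.V
  A := G.A
  src a := (G.src a).1
  tgt a := (G.tgt a).1
  rel := (G.A ×ˢ G.A).filter fun p => G.src p.1 = G.tgt p.2

/-- The ribbon graphs which encode locally gentle quivers, i.e. those satisfying all conditions on
gentle quivers except for the bound on the lengths of the paths avoiding `R`. -/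
structure LocallyGentle (G : RibbonGraph) : Prop where
  nonempty : G.V.Nonempty
  src_mem : ∀ a ∈ G.A, (G.src a).1 ∈ G.V
  tgt_mem : ∀ a ∈ G.A, (G.tgt a).1 ∈ G.V
  src_inj : Set.InjOn G.src G.A
  tgt_inj : Set.InjOn G.tgt G.A
  connected : Connected G.toQuivRel

/-- The ribbon graphs which encode gentle quivers without loops. The rank function `rank` says that
there are no oriented cycles without relations. -/
structure Gentle (G : RibbonGraph) : Prop extends LocallyGentle G where
  noLoops : NoLoops G.toQuivRel
  rank : ∃ r : ℕ → ℕ, ∀ a ∈ G.A, ∀ b ∈ G.A, G.src a = opp (G.tgt b) → r b < r a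

variable {G : RibbonGraph}

@[simp] theorem toQuivRel_A : G.toQuivRel.A = G.A := rfl

@[simp] theorem toQuivRel_src (a : ℕ) : G.toQuivRel.src a = (G.src a).1 := rfl

@[simp] theorem toQuivRel_tgt (a : ℕ) : G.toQuivRel.tgt a = (G.tgt a).1 := rfl

theorem mem_rel {a b : ℕ} :
    (a, b) ∈ G.toQuivRel.rel ↔ a ∈ G.A ∧ b ∈ G.A ∧ G.src a = G.tgt b := by
  simp [toQuivRel, and_assoc]

theorem LocallyGentle.eq_of_src (h : G.LocallyGentle) {a b : ℕ} (ha : a ∈ G.A) (hb : b ∈ G.A)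
    (hab : G.src a = G.src b) : a = b := h.src_inj ha hb hab

theorem LocallyGentle.eq_of_tgt (h : G.LocallyGentle) {a b : ℕ} (ha : a ∈ G.A) (hb : b ∈ G.A)
    (hab : G.tgt a = G.tgt b) : a = b := h.tgt_inj ha hb hab

theorem Gentle.src_ne_tgt (h : G.Gentle) {a : ℕ} (ha : a ∈ G.A) : (G.src a).1 ≠ (G.tgt a).1 :=
  h.noLoops a ha

theorem Gentle.hasRelSubpath_of_isPathList (h : G.Gentle) :
    ∃ n : ℕ, ∀ l, IsPathList G.toQuivRel l → l.length = n → HasRelSubpath G.toQuivRel l := by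
  obtain ⟨r, hr⟩ := h.rank
  have length_le : ∀ (l : List ℕ) (a : ℕ), (∀ b ∈ a :: l, b ∈ G.A) →
      (a :: l).IsChain (fun a b => (G.src a).1 = (G.tgt b).1) →
      ¬ HasRelSubpath G.toQuivRel (a :: l) → l.length ≤ r a := by
    intro l
    induction l with
    | nil => simp
    | cons b l ih =>
      intro a hA hchain hrel
      rw [List.isChain_cons_cons] at hchain
      have hlen : l.length ≤ r b := ih b (fun c hc => hA c (List.mem_cons_of_mem _ hc)) hchain.2
        fun ⟨c, d, hcd, hi⟩ => hrel ⟨c, d, hcd, hi.trans (List.suffix_cons _ _).isInfix⟩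
      have ha := hA a (by simp)
      have hb := hA b (by simp)
      have hlt : r b < r a := hr a ha b hb <| eq_opp_of_ne hchain.1 fun e =>
        hrel ⟨a, b, mem_rel.2 ⟨ha, hb, e⟩, ⟨[], l, by simp⟩⟩
      exact hlen.trans_lt hlt
  refine ⟨G.A.sup r + 2, fun l ⟨hne, hA, hchain⟩ hlen => ?_⟩
  by_contra hrel
  obtain ⟨a, l, rfl⟩ := List.exists_cons_of_ne_nil hne
  have h₁ := length_le l a hA hchain hrel
  have h₂ : r a ≤ G.A.sup r := Finset.le_sup (hA a (by simp))
  simp only [List.length_cons] at hlen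
  omega

theorem LocallyGentle.card_filter_src_le (h : G.LocallyGentle) (x : ℕ) :
    (G.A.filter fun a => (G.src a).1 = x).card ≤ 2 := by
  refine (Finset.card_le_card_of_injOn (t := Finset.univ) (fun a => (G.src a).2)
    (fun _ _ => Finset.mem_coe.2 (Finset.mem_univ _)) fun a ha b hb e => ?_).trans (by simp)
  rw [Finset.mem_coe, Finset.mem_filter] at ha hb
  exact h.src_inj ha.1 hb.1 (Prod.ext (ha.2.trans hb.2.symm) e)

/-- The opposite ribbon graph. -/
def op (G : RibbonGraph) : RibbonGraph := ⟨G.V, G.A, G.tgt, G.src⟩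

theorem opQR_toQuivRel : opQR G.toQuivRel = G.op.toQuivRel := by
  unfold opQR toQuivRel op
  congr 1
  ext ⟨a, b⟩
  simp only [Finset.mem_image, Finset.mem_filter, Finset.mem_product, Prod.mk.injEq, Prod.exists]
  grind

theorem LocallyGentle.op (h : G.LocallyGentle) : G.op.LocallyGentle where
  nonempty := h.nonempty
  src_mem := h.tgt_mem
  tgt_mem := h.src_mem
  src_inj := h.tgt_inj
  tgt_inj := h.src_inj
  connected := connected_iff.2 fun P hP =>
    connected_iff.1 h.connected P fun a ha => (hP a ha).symm

theorem Gentle.op (h : G.Gentle) : G.op.Gentle where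
  toLocallyGentle := h.toLocallyGentle.op
  noLoops a ha e := h.noLoops a ha e.symm
  rank := by
    obtain ⟨r, hr⟩ := h.rank
    refine ⟨fun a => G.A.sup r - r a, fun a ha b hb (e : G.tgt a = opp (G.src b)) => ?_⟩
    have hlt : r a < r b := hr b hb a ha (by rw [e, opp_opp])
    have hle : r b ≤ G.A.sup r := Finset.le_sup hb
    change G.A.sup r - r b < G.A.sup r - r a
    omega

theorem Gentle.isGentle (h : G.Gentle) : IsGentle G.toQuivRel := by
  have src_eq {a b : ℕ} (hb : b ∈ G.A ∧ (G.src b).1 = (G.tgt a).1 ∧ (b, a) ∉ G.toQuivRel.rel)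
      (ha : a ∈ G.A) : G.src b = opp (G.tgt a) :=
    eq_opp_of_ne hb.2.1 fun e => hb.2.2 (mem_rel.2 ⟨hb.1, ha, e⟩)
  have tgt_eq {a b : ℕ} (hb : b ∈ G.A ∧ (G.tgt b).1 = (G.src a).1 ∧ (a, b) ∉ G.toQuivRel.rel)
      (ha : a ∈ G.A) : G.tgt b = opp (G.src a) :=
    eq_opp_of_ne hb.2.1 fun e => hb.2.2 (mem_rel.2 ⟨ha, hb.1, e.symm⟩)
  refine ⟨h.nonempty, fun a ha => ⟨h.src_mem a ha, h.tgt_mem a ha⟩, h.connected, ?_,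
    h.card_filter_src_le, h.toLocallyGentle.op.card_filter_src_le, ?_, ?_, ?_, ?_,
    h.hasRelSubpath_of_isPathList⟩
  · rintro ⟨a, b⟩ hr
    obtain ⟨ha, hb, e⟩ := mem_rel.1 hr
    exact ⟨ha, hb, congrArg Prod.fst e⟩
  all_goals
    intro a ha
    rw [Finset.card_le_one]
    intro b hb c hc
    rw [Finset.mem_filter] at hb hc
  · exact h.src_inj hb.1 hc.1 ((src_eq hb ha).trans (src_eq hc ha).symm)
  · exact h.tgt_inj hb.1 hc.1 ((tgt_eq hb ha).trans (tgt_eq hc ha).symm)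
  · exact h.src_inj hb.1 hc.1 ((mem_rel.1 hb.2).2.2.trans (mem_rel.1 hc.2).2.2.symm)
  · exact h.tgt_inj hb.1 hc.1 ((mem_rel.1 hb.2).2.2.symm.trans (mem_rel.1 hc.2).2.2)

end RibbonGraph

/-! ### Reflections -/

namespace RibbonGraph

/-- The condition under which the quiver of `G` has a reflection at `x`. -/
def Reflectable (G : RibbonGraph) (x : ℕ) : Prop :=
  x ∈ G.V ∧ ∀ a ∈ G.A, (G.src a).1 = x → ∃ b ∈ G.A, G.tgt b = opp (G.src a)

open Classical in
/-- The reflection at `x`, on ribbon graphs: the half-edges preceding the two halves of `x` are slid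
along the edge `x` to its other end, where they come to follow `x`. -/
noncomputable def reflect (G : RibbonGraph) (x : ℕ) : RibbonGraph where
  V := G.V
  A := G.A
  src a :=
    if (G.tgt a).1 = x then opp (G.tgt a)
    else if (G.src a).1 = x then G.src (Function.invFunOn G.tgt G.A (opp (G.src a)))
    else G.src a
  tgt a :=
    if (G.tgt a).1 = x then G.src a
    else if ∃ b ∈ G.A, (G.tgt b).1 = x ∧ G.src b = G.tgt a then
      G.tgt (Function.invFunOn G.src G.A (G.tgt a))
    else G.tgt a

variable {G : RibbonGraph} {x : ℕ}

theorem canReflect_toQuivRel (hx : G.Reflectable x) : CanReflect G.toQuivRel x := by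
  refine ⟨hx.1, fun a ha hax => ?_⟩
  obtain ⟨b, hb, hba⟩ := hx.2 a ha hax
  exact ⟨b, hb, (congrArg Prod.fst hba).trans hax,
    fun hab => opp_ne _ (hba.symm.trans (mem_rel.1 hab).2.2.symm)⟩

theorem reflect_src_of_tgt {a : ℕ} (h : (G.tgt a).1 = x) :
    (G.reflect x).src a = opp (G.tgt a) := if_pos h

theorem reflect_tgt_of_tgt {a : ℕ} (h : (G.tgt a).1 = x) : (G.reflect x).tgt a = G.src a :=
  if_pos h

theorem reflect_src_cases (h : G.Gentle) (hx : G.Reflectable x) {a : ℕ} (ha : a ∈ G.A)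
    (hax : (G.tgt a).1 ≠ x) :
    (∃ b ∈ G.A, (G.src a).1 = x ∧ (G.src b).1 ≠ x ∧ G.tgt b = opp (G.src a) ∧
      (G.reflect x).src a = G.src b) ∨
    ((G.src a).1 ≠ x ∧ (G.reflect x).src a = G.src a) := by
  by_cases hsx : (G.src a).1 = x
  · obtain ⟨b, hb, hba⟩ := hx.2 a ha hsx
    refine .inl ⟨b, hb, hsx, fun e => h.noLoops b hb (e.trans (hsx.symm.trans ?_)), hba, ?_⟩
    · exact (congrArg Prod.fst hba).symm
    · simp only [reflect, if_neg hax, if_pos hsx, ← hba, h.tgt_inj.leftInvOn_invFunOn hb]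
  · exact .inr ⟨hsx, by simp only [reflect, if_neg hax, if_neg hsx]⟩

theorem reflect_tgt_cases (h : G.Gentle) {a : ℕ} (hax : (G.tgt a).1 ≠ x) :
    (∃ b ∈ G.A, (G.tgt b).1 = x ∧ G.src b = G.tgt a ∧ (G.reflect x).tgt a = G.tgt b) ∨
    ((∀ b ∈ G.A, (G.tgt b).1 = x → G.src b ≠ G.tgt a) ∧ (G.reflect x).tgt a = G.tgt a) := by
  by_cases hex : ∃ b ∈ G.A, (G.tgt b).1 = x ∧ G.src b = G.tgt a
  · obtain ⟨b, hb, hbx, hba⟩ := id hex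
    refine .inl ⟨b, hb, hbx, hba, ?_⟩
    simp only [reflect]
    rw [if_neg hax, if_pos hex, ← hba, h.src_inj.leftInvOn_invFunOn hb]
  · exact .inr ⟨fun b hb hbx hba => hex ⟨b, hb, hbx, hba⟩, (if_neg hax).trans (if_neg hex)⟩

section Gentle

variable (h : G.Gentle) (hx : G.Reflectable x)
include h

theorem reflect_src_inj (hx : G.Reflectable x) : Set.InjOn (G.reflect x).src G.A := by
  intro a ha c hc e
  rw [Finset.mem_coe] at ha hc
  grind [reflect_src_of_tgt, reflect_src_cases, h.eq_of_src, h.eq_of_tgt, opp_opp, opp_fst]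

theorem reflect_tgt_inj : Set.InjOn (G.reflect x).tgt G.A := by
  intro a ha c hc e
  rw [Finset.mem_coe] at ha hc
  grind [reflect_tgt_of_tgt, reflect_tgt_cases, h.eq_of_src, h.eq_of_tgt, h.src_ne_tgt]

include hx

theorem reflect_noLoops : NoLoops (G.reflect x).toQuivRel := by
  intro a ha (e : ((G.reflect x).src a).1 = ((G.reflect x).tgt a).1)
  have ha : a ∈ G.A := ha
  obtain ⟨r, hr⟩ := h.rank
  by_cases hax : (G.tgt a).1 = x
  · rw [reflect_src_of_tgt hax, reflect_tgt_of_tgt hax] at e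
    exact h.src_ne_tgt ha e.symm
  · grind [reflect_src_cases, reflect_tgt_cases, eq_or_eq_opp, h.src_ne_tgt, opp_opp, opp_fst]

theorem reflect_connected : Connected (G.reflect x).toQuivRel := by
  refine connected_iff.2 fun P hP => connected_iff.1 h.connected P fun a ha => ?_
  change ∀ a ∈ G.A, P ((G.reflect x).src a).1 ↔ P ((G.reflect x).tgt a).1 at hP
  change P (G.src a).1 ↔ P (G.tgt a).1
  have ha : a ∈ G.A := ha
  have into_x {b : ℕ} (hb : b ∈ G.A) (hbx : (G.tgt b).1 = x) : P (G.src b).1 ↔ P x := by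
    grind [reflect_src_of_tgt, reflect_tgt_of_tgt, opp_fst]
  by_cases hax : (G.tgt a).1 = x
  · rw [hax, into_x ha hax]
  · grind [reflect_src_cases, reflect_tgt_cases, opp_fst]

theorem reflect_rank : ∃ r : ℕ → ℕ, ∀ a ∈ G.A, ∀ b ∈ G.A,
    (G.reflect x).src a = opp ((G.reflect x).tgt b) → r b < r a := by
  classical
  obtain ⟨r, hr⟩ := h.rank
  let f (s : HalfEdge) : ℕ :=
    if ∃ g ∈ G.A, G.tgt g = s then 2 * r (Function.invFunOn G.tgt G.A s) + 2 else 0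
  have f_tgt {g : ℕ} (hg : g ∈ G.A) : f (G.tgt g) = 2 * r g + 2 := by
    simp only [f, h.tgt_inj.leftInvOn_invFunOn hg]
    exact if_pos ⟨g, hg, rfl⟩
  have f_of_not {s : HalfEdge} (hs : ∀ g ∈ G.A, G.tgt g ≠ s) : f s = 0 :=
    if_neg fun ⟨g, hg, e⟩ => hs g hg e
  clear_value f
  refine ⟨fun c => if (G.tgt c).1 = x then f (G.src c) else 2 * r c + 1, fun a ha c hc e => ?_⟩
  have mem_tgt : (∃ g ∈ G.A, G.tgt g = G.src c) ∨ ∀ g ∈ G.A, G.tgt g ≠ G.src c := by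
    by_contra! hs
    grind
  by_cases hax : (G.tgt a).1 = x
  · grind [reflect_src_of_tgt, reflect_tgt_of_tgt, reflect_tgt_cases, opp_injective, opp_fst,
      h.src_ne_tgt, h.eq_of_tgt]
  · grind [reflect_src_cases, reflect_tgt_of_tgt, reflect_tgt_cases, opp_opp, opp_fst]

theorem Gentle.reflect : (G.reflect x).Gentle where
  nonempty := h.nonempty
  src_mem a ha := by
    have ha : a ∈ G.A := ha
    grind [reflect_src_of_tgt, reflect_src_cases, h.src_mem, h.tgt_mem, opp_fst,
      RibbonGraph.reflect]
  tgt_mem a ha := by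
    have ha : a ∈ G.A := ha
    grind [reflect_tgt_of_tgt, reflect_tgt_cases, h.src_mem, h.tgt_mem, RibbonGraph.reflect]
  src_inj := reflect_src_inj h hx
  tgt_inj := reflect_tgt_inj h
  connected := reflect_connected h hx
  noLoops := reflect_noLoops h hx
  rank := reflect_rank h hx

theorem mem_rel_reflect {a b : ℕ} (ha : a ∈ G.A) (hb : b ∈ G.A) :
    (G.reflect x).src a = (G.reflect x).tgt b ↔
      (G.src a = G.tgt b ∧ (G.tgt a).1 ≠ x ∧ (G.src a).1 ≠ x) ∨
      ((G.src a).1 = x ∧ G.tgt b = opp (G.src a)) ∨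
      ((G.tgt a).1 = x ∧ ∃ c ∈ G.A, G.tgt c = opp (G.tgt a) ∧ G.src c = G.tgt b) := by
  constructor <;> by_cases hax : (G.tgt a).1 = x <;> by_cases hbx : (G.tgt b).1 = x <;>
    grind [reflect_src_of_tgt, reflect_tgt_of_tgt, reflect_src_cases, reflect_tgt_cases,
      h.eq_of_src, h.eq_of_tgt, h.src_ne_tgt, opp_opp, opp_fst]

theorem isReflection_reflect : IsReflection G.toQuivRel x (G.reflect x).toQuivRel := by
  refine ⟨h.isGentle, h.noLoops, canReflect_toQuivRel hx, rfl, rfl, fun a _ hax => ?_,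
    fun a ha hax b hb hbx hab => ?_, fun a ha hax hax' => ?_, fun a ha hax => ?_, fun a b => ?_⟩
  · exact ⟨(congrArg Prod.fst (reflect_src_of_tgt hax)).trans hax,
      congrArg Prod.fst (reflect_tgt_of_tgt hax)⟩
  · grind [reflect_src_cases, h.eq_of_tgt, h.src_ne_tgt, eq_or_eq_opp, mem_rel, toQuivRel_A,
      toQuivRel_src, toQuivRel_tgt]
  · grind [reflect_src_cases, toQuivRel_A, toQuivRel_src, toQuivRel_tgt]
  · grind [reflect_tgt_cases, mem_rel, toQuivRel_A, toQuivRel_src, toQuivRel_tgt]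
  · have hA : (G.reflect x).A = G.A := rfl
    grind [mem_rel, mem_rel_reflect, eq_or_eq_opp, opp_ne, opp_fst, h.eq_of_tgt, toQuivRel_A,
      toQuivRel_src, toQuivRel_tgt]

end Gentle

/-- One step of the equivalence: a reflection or a coreflection at some edge. -/
def ReflStep (G G' : RibbonGraph) : Prop :=
  ∃ x, G.Reflectable x ∧ G' = G.reflect x ∨ G.op.Reflectable x ∧ G'.op = G.op.reflect x

/-- `G'` is obtained from `G` by reflections and coreflections. -/
def Reaches : RibbonGraph → RibbonGraph → Prop := Relation.ReflTransGen ReflStep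

variable {G' : RibbonGraph}

theorem Reflectable.reaches (hx : G.Reflectable x) : G.Reaches (G.reflect x) :=
  .single ⟨x, .inl ⟨hx, rfl⟩⟩

theorem ReflStep.op (s : G.ReflStep G') : G.op.ReflStep G'.op := by
  obtain ⟨x, ⟨hx, rfl⟩ | ⟨hx, e⟩⟩ := s
  · exact ⟨x, .inr ⟨hx, rfl⟩⟩
  · exact ⟨x, .inl ⟨hx, e⟩⟩

theorem Reaches.op (s : G.Reaches G') : G.op.Reaches G'.op :=
  s.lift RibbonGraph.op fun _ _ => ReflStep.op

theorem ReflStep.gentle (s : G.ReflStep G') (h : G.Gentle) : G'.Gentle := by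
  obtain ⟨x, ⟨hx, rfl⟩ | ⟨hx, e⟩⟩ := s
  · exact h.reflect hx
  · exact (e ▸ h.op.reflect hx : G'.op.Gentle).op

theorem ReflStep.refStep (s : G.ReflStep G') (h : G.Gentle) :
    RefStep G.toQuivRel G'.toQuivRel := by
  obtain ⟨x, ⟨hx, rfl⟩ | ⟨hx, e⟩⟩ := s
  · exact .inl ⟨x, isReflection_reflect h hx⟩
  · refine .inr (.inl ⟨x, ?_⟩)
    rw [IsCoreflection, opQR_toQuivRel, opQR_toQuivRel, e]
    exact isReflection_reflect h.op hx

theorem Reaches.gentle (s : G.Reaches G') (h : G.Gentle) : G'.Gentle := by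
  induction s with
  | refl => exact h
  | tail _ s ih => exact s.gentle ih

theorem Reaches.refEquiv (s : G.Reaches G') (h : G.Gentle) :
    RefEquiv G.toQuivRel G'.toQuivRel := by
  induction s with
  | refl => exact .refl
  | tail s₁ s₂ ih => exact ih.tail (s₂.refStep (Reaches.gentle s₁ h))

theorem Reaches.V_eq (s : G.Reaches G') : G'.V = G.V := by
  induction s with
  | refl => rfl
  | tail _ s ih =>
    obtain ⟨x, ⟨-, rfl⟩ | ⟨-, e⟩⟩ := s
    · exact ih
    · exact (congrArg V e).trans ih

end RibbonGraph

/-! ### Cycles and their behaviour under reflections -/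

namespace RibbonGraph

/-- The half-edge `t` follows `s` around their common node. -/
def Next (G : RibbonGraph) (s t : HalfEdge) : Prop := ∃ a ∈ G.A, G.src a = s ∧ G.tgt a = t

variable {G : RibbonGraph} {s t u v : HalfEdge}

theorem Next.mem_left (h : G.LocallyGentle) (hst : G.Next s t) : s.1 ∈ G.V := by
  obtain ⟨a, ha, rfl, -⟩ := hst
  exact h.src_mem a ha

theorem Next.mem_right (h : G.LocallyGentle) (hst : G.Next s t) : t.1 ∈ G.V := by
  obtain ⟨a, ha, -, rfl⟩ := hst
  exact h.tgt_mem a ha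

theorem Next.fst_ne (h : G.Gentle) (hst : G.Next s t) : s.1 ≠ t.1 := by
  obtain ⟨a, ha, rfl, rfl⟩ := hst
  exact h.src_ne_tgt ha

theorem Next.right_unique (h : G.LocallyGentle) (ht : G.Next s t) (hu : G.Next s u) : t = u := by
  obtain ⟨a, ha, rfl, rfl⟩ := ht
  obtain ⟨b, hb, hba, rfl⟩ := hu
  rw [h.eq_of_src hb ha hba]

theorem Next.left_unique (h : G.LocallyGentle) (hs : G.Next s t) (hu : G.Next u t) : s = u := by
  obtain ⟨a, ha, rfl, rfl⟩ := hs
  obtain ⟨b, hb, rfl, hba⟩ := hu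
  rw [h.eq_of_tgt hb ha hba]

theorem op_next : G.op.Next s t ↔ G.Next t s := by simp only [Next, op, and_comm (a := _ = s)]

theorem reflectable_iff {x : ℕ} :
    G.Reflectable x ↔ x ∈ G.V ∧ ∀ q u, q.1 = x → G.Next q u → ∃ y, G.Next y (opp q) := by
  refine and_congr_right fun _ => ⟨?_, fun hx a ha hax => ?_⟩
  · rintro hx q _ hq ⟨a, ha, rfl, rfl⟩
    obtain ⟨b, hb, hba⟩ := hx a ha hq
    exact ⟨_, b, hb, rfl, hba⟩
  · obtain ⟨_, b, hb, -, hba⟩ := hx _ _ hax ⟨a, ha, rfl, rfl⟩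
    exact ⟨b, hb, hba⟩

section Reflect

variable {x : ℕ} {y q : HalfEdge}

theorem Next.reflect_opp (hyq : G.Next y q) (hq : q.1 = x) : (G.reflect x).Next (opp q) y := by
  obtain ⟨a, ha, rfl, rfl⟩ := hyq
  exact ⟨a, ha, reflect_src_of_tgt hq, reflect_tgt_of_tgt hq⟩

variable (h : G.Gentle)
include h

theorem Next.reflect_trans (hx : G.Reflectable x) (huy : G.Next u y) (hyq : G.Next y q)
    (hq : q.1 = x) (hu : u.1 ≠ x) : (G.reflect x).Next u q := by
  obtain ⟨a, ha, rfl, rfl⟩ := huy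
  obtain ⟨b, hb, hba, rfl⟩ := hyq
  refine ⟨a, ha, ?_, ?_⟩ <;>
    grind [reflect_src_cases, reflect_tgt_cases, h.eq_of_src, h.src_ne_tgt]

theorem Next.reflect_of_ne (hx : G.Reflectable x) (hst : G.Next s t) (hs : s.1 ≠ x) (ht : t.1 ≠ x)
    (htx : ∀ q, q.1 = x → ¬ G.Next t q) : (G.reflect x).Next s t := by
  obtain ⟨a, ha, rfl, rfl⟩ := hst
  refine ⟨a, ha, ?_, ?_⟩
  · grind [reflect_src_cases]
  · grind [reflect_tgt_cases, Next]

theorem next_of_next_reflect (hx : G.Reflectable x) (hq : q.1 = x)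
    (hqt : (G.reflect x).Next q t) : G.Next t (opp q) := by
  obtain ⟨a, ha, rfl, rfl⟩ := hqt
  replace ha : a ∈ G.A := ha
  by_cases hax : (G.tgt a).1 = x
  · exact ⟨a, ha, (reflect_tgt_of_tgt hax).symm, by rw [reflect_src_of_tgt hax, opp_opp]⟩
  · obtain ⟨b, -, -, hb, -, e⟩ | ⟨ha', e⟩ := reflect_src_cases h hx ha hax
    · exact absurd (e ▸ hq) hb
    · exact absurd (e ▸ hq) ha'

theorem not_next_reflect (hx : G.Reflectable x) (hyq : G.Next y (opp q)) (hq : q.1 = x)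
    (hlast : ∀ t, ¬ G.Next q t) : ¬ (G.reflect x).Next y t := by
  rintro ⟨a, ha, hay, -⟩
  replace ha : a ∈ G.A := ha
  obtain ⟨b, hb, rfl, hbq⟩ := hyq
  by_cases hax : (G.tgt a).1 = x
  · rw [reflect_src_of_tgt hax] at hay
    refine h.src_ne_tgt hb ?_
    rw [← hay, hbq, opp_fst, opp_fst, hax, hq]
  · obtain ⟨c, hc, -, -, hca, e⟩ | ⟨-, e⟩ := reflect_src_cases h hx ha hax
    · obtain rfl : c = b := h.eq_of_src hc hb (e.symm.trans hay)
      exact hlast _ ⟨a, ha, opp_injective (hca.symm.trans hbq), rfl⟩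
    · obtain rfl : a = b := h.eq_of_src ha hb (e.symm.trans hay)
      exact hax ((congrArg Prod.fst hbq).trans hq)

end Reflect

/-- A function on half-edges which factors through the nodes. -/
def IsNodeFun (G : RibbonGraph) (P : HalfEdge → ZMod 2) : Prop :=
  ∀ a ∈ G.A, P (G.src a) = P (G.tgt a)

/-- Two half-edges lie at the same node. -/
def SameNode (G : RibbonGraph) (s t : HalfEdge) : Prop := ∀ P, G.IsNodeFun P → P s = P t

/-- The mod 2 function `w` on edges is the coboundary of a function on nodes. -/
def IsCoboundary (G : RibbonGraph) (w : ℕ → ZMod 2) : Prop :=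
  ∃ P, G.IsNodeFun P ∧ ∀ s : HalfEdge, s.1 ∈ G.V → P s + P (opp s) = w s.1

/-- The edges in `Z` form the only cycle of the graph: coboundaries are the functions vanishing on
`Z`, so that `Z` spans the first homology with coefficients mod 2. -/
structure IsCycle (G : RibbonGraph) (Z : Finset ℕ) : Prop where
  subset : Z ⊆ G.V
  nonempty : Z.Nonempty
  isCoboundary_iff : ∀ w, G.IsCoboundary w ↔ ∑ v ∈ Z, w v = 0

theorem Next.fun_eq {P : HalfEdge → ZMod 2} (hst : G.Next s t) (hP : G.IsNodeFun P) :
    P s = P t := by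
  obtain ⟨a, ha, rfl, rfl⟩ := hst
  exact hP a ha

theorem Next.sameNode (hst : G.Next s t) : G.SameNode s t := fun _ => hst.fun_eq

theorem SameNode.symm (hst : G.SameNode s t) : G.SameNode t s := fun P hP => (hst P hP).symm

theorem SameNode.trans (hst : G.SameNode s t) (htu : G.SameNode t u) : G.SameNode s u :=
  fun P hP => (hst P hP).trans (htu P hP)

theorem IsNodeFun.op {P : HalfEdge → ZMod 2} (hP : G.IsNodeFun P) : G.op.IsNodeFun P :=
  fun a ha => (hP a ha).symm

theorem IsCycle.op {Z : Finset ℕ} (hZ : G.IsCycle Z) : G.op.IsCycle Z where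
  subset := hZ.subset
  nonempty := hZ.nonempty
  isCoboundary_iff w := (hZ.isCoboundary_iff w).symm.trans
    ⟨fun ⟨P, hP, hw⟩ => ⟨P, hP.op, hw⟩, fun ⟨P, hP, hw⟩ => ⟨P, hP.op, hw⟩⟩ |>.symm

open Classical in
/-- The indicator function of the half-edges slid along the edge `x` by the reflection at `x`. -/
noncomputable def slid (G : RibbonGraph) (x : ℕ) (s : HalfEdge) : ZMod 2 :=
  if ∃ q, q.1 = x ∧ G.Next s q then 1 else 0

/-- The transport of node functions along the reflection at `x`: the value at a half-edge slid along
`x` becomes the value at the other end of `x`. -/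
noncomputable def shift (G : RibbonGraph) (x : ℕ) (P : HalfEdge → ZMod 2) (s : HalfEdge) : ZMod 2 :=
  P s + G.slid x s * (P (x, true) + P (x, false))

theorem slid_of_next {x : ℕ} {q : HalfEdge} (hsq : G.Next s q) (hq : q.1 = x) : G.slid x s = 1 :=
  if_pos ⟨q, hq, hsq⟩

theorem slid_of_forall_not {x : ℕ} (hs : ∀ q, q.1 = x → ¬ G.Next s q) : G.slid x s = 0 :=
  if_neg fun ⟨q, hq, hsq⟩ => hs q hq hsq

theorem eq_zero_or_one (a : ZMod 2) : a = 0 ∨ a = 1 := by decide +revert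

theorem add_opp (P : HalfEdge → ZMod 2) (s : HalfEdge) :
    P s + P (opp s) = P (s.1, true) + P (s.1, false) := by
  obtain ⟨x, _ | _⟩ := s
  · exact add_comm _ _
  · rfl

section Reflect

variable {x : ℕ} (h : G.Gentle) {P : HalfEdge → ZMod 2}
include h

theorem slid_of_fst_eq (hs : s.1 = x) : G.slid x s = 0 :=
  slid_of_forall_not fun _ hq hsq => hsq.fst_ne h (hs.trans hq.symm)

theorem shift_shift : G.shift x (G.shift x P) = P := by
  ext s
  grind [shift, slid_of_fst_eq]

theorem slid_src {a : ℕ} (ha : a ∈ G.A) (hax : (G.tgt a).1 ≠ x) : G.slid x (G.src a) = 0 :=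
  slid_of_forall_not fun _ hq hsq => hax (hsq.right_unique h.toLocallyGentle ⟨a, ha, rfl, rfl⟩ ▸ hq)

theorem shift_of_fst_eq (hs : s.1 = x) : G.shift x P s = P s := by
  rw [shift, slid_of_fst_eq h hs, zero_mul, add_zero]

omit h in
theorem shift_of_next (hst : G.Next s t) (ht : t.1 = x) :
    G.shift x P s = P s + P t + P (opp t) := by
  rw [shift, slid_of_next hst ht, ← ht, ← add_opp, one_mul, add_assoc]

theorem shift_reflect_src (hx : G.Reflectable x)
    (hP : ∀ b ∈ G.A, (G.tgt b).1 = x → P (G.src b) = P (G.tgt b)) {a : ℕ} (ha : a ∈ G.A)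
    (hax : (G.tgt a).1 ≠ x) : G.shift x P ((G.reflect x).src a) = P (G.src a) := by
  obtain ⟨b, hb, hsx, -, hba, e⟩ | ⟨-, e⟩ := reflect_src_cases h hx ha hax
  · have hbx : (G.tgt b).1 = x := (congrArg Prod.fst hba).trans hsx
    rw [e, shift_of_next ⟨b, hb, rfl, rfl⟩ hbx, hP b hb hbx, hba, opp_opp,
      CharTwo.add_self_eq_zero, zero_add]
  · rw [e, shift, slid_src h ha hax, zero_mul, add_zero]

theorem shift_reflect_tgt (hP : ∀ b ∈ G.A, (G.tgt b).1 = x → P (G.src b) = P (G.tgt b)) {a : ℕ}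
    (hax : (G.tgt a).1 ≠ x) : G.shift x P ((G.reflect x).tgt a) = P (G.tgt a) := by
  obtain ⟨b, hb, hbx, hba, e⟩ | ⟨hq, e⟩ := reflect_tgt_cases h hax
  · rw [e, shift_of_fst_eq h hbx, ← hP b hb hbx, hba]
  · rw [e, shift, slid_of_forall_not, zero_mul, add_zero]
    rintro _ hqx ⟨b, hb, hba, rfl⟩
    exact hq b hb hqx hba

theorem isNodeFun_shift_iff (hx : G.Reflectable x) :
    (G.reflect x).IsNodeFun (G.shift x P) ↔ G.IsNodeFun P := by
  have iff_of_tgt {a : ℕ} (ha : a ∈ G.A) (hax : (G.tgt a).1 = x) :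
      G.shift x P ((G.reflect x).src a) = G.shift x P ((G.reflect x).tgt a) ↔
        P (G.src a) = P (G.tgt a) := by
    rw [reflect_src_of_tgt hax, reflect_tgt_of_tgt hax, shift_of_next ⟨a, ha, rfl, rfl⟩ hax,
      shift_of_fst_eq h ((opp_fst _).trans hax)]
    grind
  suffices hne : (∀ b ∈ G.A, (G.tgt b).1 = x → P (G.src b) = P (G.tgt b)) →
      ∀ a ∈ G.A, (G.tgt a).1 ≠ x →
        (G.shift x P ((G.reflect x).src a) = G.shift x P ((G.reflect x).tgt a) ↔
          P (G.src a) = P (G.tgt a)) by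
    refine ⟨fun hP => ?_, fun hP a ha => ?_⟩
    · have hPx : ∀ b ∈ G.A, (G.tgt b).1 = x → P (G.src b) = P (G.tgt b) :=
        fun b hb hbx => (iff_of_tgt hb hbx).1 (hP b hb)
      intro a ha
      by_cases hax : (G.tgt a).1 = x
      · exact hPx a ha hax
      · exact (hne hPx a ha hax).1 (hP a ha)
    · by_cases hax : (G.tgt a).1 = x
      · exact (iff_of_tgt ha hax).2 (hP a ha)
      · exact (hne (fun b hb _ => hP b hb) a ha hax).2 (hP a ha)
  intro hP a ha hax
  rw [shift_reflect_src h hx hP ha hax, shift_reflect_tgt h hP hax]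

theorem IsNodeFun.reflect (hs : G.Reflectable s.1) (hP : G.IsNodeFun P)
    (hPs : P s = P (opp s)) : (G.reflect s.1).IsNodeFun P := by
  have hshift : G.shift s.1 P = P := by
    ext t
    rw [shift, ← add_opp P s, hPs, CharTwo.add_self_eq_zero, mul_zero, add_zero]
  exact hshift ▸ (isNodeFun_shift_iff h hs).2 hP

theorem isCoboundary_reflect_iff (hx : G.Reflectable x) {w : ℕ → ZMod 2} :
    (G.reflect x).IsCoboundary w ↔
      G.IsCoboundary fun v => w v + w x * (G.slid x (v, true) + G.slid x (v, false)) := by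
  have slid_x (b : Bool) : G.slid x (x, b) = 0 := slid_of_fst_eq h rfl
  constructor
  · rintro ⟨P, hP, hw⟩
    refine ⟨G.shift x P, ?_, fun s hs => ?_⟩
    · rwa [← isNodeFun_shift_iff h hx, shift_shift h]
    · have hwx : P (x, true) + P (x, false) = w x := hw (x, true) hx.1
      simp only [shift, hwx, ← hw s hs, ← add_opp (G.slid x) s]
      ring
  · rintro ⟨P, hP, hw⟩
    refine ⟨G.shift x P, (isNodeFun_shift_iff h hx).2 hP, fun s hs => ?_⟩
    simp only at hw
    have hwx : P (x, true) + P (x, false) = w x := by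
      refine (hw (x, true) hx.1).trans ?_
      rw [slid_x, slid_x, add_zero, mul_zero, add_zero]
    have hws := hw s hs
    rw [← add_opp (G.slid x) s] at hws
    simp only [shift, hwx]
    grind

variable {Z : Finset ℕ}

theorem IsCycle.reflect_of_sum (hZ : G.IsCycle Z) (hx : G.Reflectable x) {Z' : Finset ℕ}
    (hsub : Z' ⊆ G.V) (hne : Z'.Nonempty)
    (hsum : ∀ w : ℕ → ZMod 2, ∑ v ∈ Z', w v =
      ∑ v ∈ Z, w v + w x * ∑ v ∈ Z, (G.slid x (v, true) + G.slid x (v, false))) :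
    (G.reflect x).IsCycle Z' where
  subset := hsub
  nonempty := hne
  isCoboundary_iff w := by
    rw [isCoboundary_reflect_iff h hx, hZ.isCoboundary_iff, Finset.sum_add_distrib,
      ← Finset.mul_sum, hsum]

theorem IsCycle.reflect_of_forall (hZ : G.IsCycle Z) (hx : G.Reflectable x)
    (hs : ∀ s q, G.Next s q → q.1 = x → s.1 ∉ Z) : (G.reflect x).IsCycle Z := by
  refine hZ.reflect_of_sum h hx hZ.subset hZ.nonempty fun w => ?_
  have hslid {v : ℕ} (hv : v ∈ Z) (b : Bool) : G.slid x (v, b) = 0 :=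
    slid_of_forall_not fun q hq hsq => hs _ q hsq hq hv
  have hsum : ∑ v ∈ Z, (G.slid x (v, true) + G.slid x (v, false)) = 0 :=
    Finset.sum_eq_zero fun v hv => by rw [hslid hv, hslid hv, add_zero]
  rw [hsum, mul_zero, add_zero]

theorem IsCycle.reflect_insert (hZ : G.IsCycle Z) (hx : G.Reflectable x) (hxZ : x ∉ Z)
    {y q : HalfEdge} (hyq : G.Next y q) (hq : q.1 = x) (hy : y.1 ∈ Z)
    (hs : ∀ s q, G.Next s q → q.1 = x → s.1 ∈ Z → s = y) :
    (G.reflect x).IsCycle (insert x Z) := by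
  refine hZ.reflect_of_sum h hx (Finset.insert_subset hx.1 hZ.subset) ⟨x, by simp⟩ fun w => ?_
  have hslid {s : HalfEdge} (hsZ : s.1 ∈ Z) (hsy : s ≠ y) : G.slid x s = 0 :=
    slid_of_forall_not fun q hq hsq => hsy (hs _ q hsq hq hsZ)
  have hsum : ∑ v ∈ Z, (G.slid x (v, true) + G.slid x (v, false)) = 1 := by
    rw [Finset.sum_eq_single_of_mem y.1 hy fun v hv hvy => ?_, ← add_opp, slid_of_next hyq hq,
      hslid (s := opp y) hy (opp_ne y), add_zero]
    rw [hslid hv fun e => hvy (congrArg Prod.fst e), hslid hv fun e => hvy (congrArg Prod.fst e),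
      add_zero]
  rw [Finset.sum_insert hxZ, hsum, mul_one, add_comm]

end Reflect

end RibbonGraph

/-! ### Branches -/

namespace RibbonGraph

variable {G : RibbonGraph} {Z : Finset ℕ} {c q s t u l : HalfEdge} {P W : HalfEdge → ZMod 2}
  {w : ℕ → ZMod 2} {m n : ℕ}

theorem IsNodeFun.mul (hP : G.IsNodeFun P) (hW : G.IsNodeFun W) :
    G.IsNodeFun fun s => P s * W s := fun a ha => congrArg₂ (· * ·) (hP a ha) (hW a ha)

theorem IsCycle.exists_of_sum_eq_zero (hZ : G.IsCycle Z) (hw : ∑ v ∈ Z, w v = 0) (q : HalfEdge)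
    (k : ZMod 2) :
    ∃ P, G.IsNodeFun P ∧ (∀ s : HalfEdge, s.1 ∈ G.V → P s + P (opp s) = w s.1) ∧ P q = k := by
  obtain ⟨P, hP, hPw⟩ := (hZ.isCoboundary_iff w).2 hw
  refine ⟨fun s => P s + (P q + k), fun a ha => congrArg (· + _) (hP a ha), fun s hs => ?_,
    by grind⟩
  rw [← hPw s hs]
  grind

theorem IsCycle.sum_mul_eq_zero (hZ : G.IsCycle Z) (hP : G.IsNodeFun P) (hW : G.IsNodeFun W)
    (hWw : ∀ s : HalfEdge, s.1 ∈ G.V → W s + W (opp s) = w s.1)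
    (hPW : ∀ s : HalfEdge, s.1 ∈ G.V → W s * (P s + P (opp s)) = 0) :
    ∑ v ∈ Z, P (v, true) * w v = 0 := by
  refine (hZ.isCoboundary_iff _).1 ⟨_, hP.mul hW, fun s hs => ?_⟩
  have h₁ := hPW s hs
  have h₂ := hPW (opp s) hs
  rw [opp_opp] at h₂
  obtain ⟨v, _ | _⟩ := s
  all_goals
    simp only [← hWw _ hs, opp, Bool.not_true, Bool.not_false] at h₁ h₂ ⊢
    grind

/-- `P` is the indicator function of the nodes lying on the side of `h` once the edge of `h` is cut,
and the cycle `Z` lies on the other side. -/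
structure IsBranch (G : RibbonGraph) (Z : Finset ℕ) (h : HalfEdge) (P : HalfEdge → ZMod 2) :
    Prop where
  isNodeFun : G.IsNodeFun P
  add_opp_of_ne : ∀ s : HalfEdge, s.1 ∈ G.V → s.1 ≠ h.1 → P s + P (opp s) = 0
  apply_self : P h = 1
  apply_opp : P (opp h) = 0
  apply_of_mem : ∀ s : HalfEdge, s.1 ∈ Z → P s = 0

theorem IsCycle.exists_bridge (hZ : G.IsCycle Z) (hq : q.1 ∈ G.V) (hqZ : q.1 ∉ Z) :
    ∃ P, G.IsNodeFun P ∧ (∀ s : HalfEdge, s.1 ∈ G.V → s.1 ≠ q.1 → P s + P (opp s) = 0) ∧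
      P q = 0 ∧ P (opp q) = 1 := by
  obtain ⟨P, hP, hδ, hPq⟩ := hZ.exists_of_sum_eq_zero (w := Pi.single q.1 1)
    (Finset.sum_eq_zero fun v hv => Pi.single_eq_of_ne (ne_of_mem_of_not_mem hv hqZ) _) q 0
  refine ⟨P, hP, fun s hs hsq => (hδ s hs).trans (Pi.single_eq_of_ne hsq _), hPq, ?_⟩
  simpa [hPq] using hδ q hq

theorem apply_fst_true (hs : P s + P (opp s) = 0) : P (s.1, true) = P s := by
  obtain ⟨v, _ | _⟩ := s
  · exact (CharTwo.add_eq_zero.1 hs).symm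
  · rfl

theorem IsCycle.exists_isBranch (hZ : G.IsCycle Z) (hq : q.1 ∈ G.V) (hqZ : q.1 ∉ Z) (hc : c.1 ∈ Z)
    (hqc : G.SameNode q c) : ∃ P, G.IsBranch Z (opp q) P := by
  obtain ⟨P, hP, hδ, hPq, hPq'⟩ := hZ.exists_bridge hq hqZ
  refine ⟨P, hP, hδ, hPq', by rwa [opp_opp], fun e he => ?_⟩
  by_contra hPe
  have hZ_ne {s : HalfEdge} (hs : s.1 ∈ Z) : s.1 ≠ q.1 := ne_of_mem_of_not_mem hs hqZ
  have apply_true {s : HalfEdge} (hs : s.1 ∈ Z) : P (s.1, true) = P s :=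
    apply_fst_true (hδ s (hZ.subset hs) (hZ_ne hs))
  obtain ⟨W, hW, hWδ, hWq⟩ := hZ.exists_of_sum_eq_zero
    (w := Pi.single e.1 1 + Pi.single c.1 1)
    (by simp [Finset.sum_add_distrib, he, hc, CharTwo.add_self_eq_zero]) q 0
  have hsum := hZ.sum_mul_eq_zero hP hW hWδ fun s hs => by
    by_cases hsq : s.1 = q.1
    · have hWq' := hWδ q hq
      rw [Pi.add_apply, Pi.single_eq_of_ne (hZ_ne he).symm, Pi.single_eq_of_ne (hZ_ne hc).symm]
        at hWq'
      grind [eq_or_eq_opp]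
    · rw [hδ s hs hsq, mul_zero]
  simp only [Pi.add_apply, mul_add, Finset.sum_add_distrib, Pi.single_apply, mul_ite, mul_one,
    mul_zero, Finset.sum_ite_eq', he, hc, if_true, apply_true, ← hqc P hP, hPq, add_zero] at hsum
  exact hPe hsum

theorem IsBranch.exists_isBranch (hZ : G.IsCycle Z) (hP : G.IsBranch Z s P) (hl : l.1 ∈ G.V)
    (hsl : G.SameNode s l) (hls : l ≠ s) :
    ∃ Q, G.IsBranch Z (opp l) Q ∧ Q s = 0 ∧ ∀ u, P u = 0 → Q u = 0 := by
  have hPl : P l = 1 := (hsl P hP.isNodeFun).symm.trans hP.apply_self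
  have hlZ : l.1 ∉ Z := fun e => by simp [hP.apply_of_mem l e] at hPl
  have hls' : l.1 ≠ s.1 := fun e => by
    rw [eq_opp_of_ne e hls, hP.apply_opp] at hPl
    exact zero_ne_one hPl
  obtain ⟨W, hW, hδ, hWl, hWl'⟩ := hZ.exists_bridge hl hlZ
  have hPl' : P l + P (opp l) = 0 := hP.add_opp_of_ne l hl hls'
  have hWs : W s = 0 := (hsl W hW).trans hWl
  refine ⟨fun u => P u * W u, ⟨hP.isNodeFun.mul hW, fun t ht htl => ?_, ?_, ?_, ?_⟩, ?_, ?_⟩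
  · have := hδ t ht htl
    have := hP.add_opp_of_ne t ht
    grind [eq_or_eq_opp]
  · grind
  · exact mul_eq_zero_of_right _ (by rwa [opp_opp])
  · exact fun t ht => mul_eq_zero_of_left (hP.apply_of_mem t ht) _
  · exact mul_eq_zero_of_right _ hWs
  · exact fun u hu => mul_eq_zero_of_left hu _

theorem IsBranch.reflect (h : G.Gentle) (hl : G.Reflectable l.1) (hP : G.IsBranch Z s P)
    (hPl : P l = P (opp l)) : (G.reflect l.1).IsBranch Z s P :=
  { hP with isNodeFun := hP.isNodeFun.reflect h hl hPl }

/-- The half-edge `t` is the `n`-th one after `s` around their common node. -/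
def Steps (G : RibbonGraph) : ℕ → HalfEdge → HalfEdge → Prop
  | 0, s, t => s = t
  | n + 1, s, t => ∃ u, G.Next s u ∧ G.Steps n u t

theorem steps_one : G.Steps 1 s t ↔ G.Next s t := by simp [Steps]

theorem Steps.trans (hst : G.Steps m s t) (htu : G.Steps n t u) : G.Steps (m + n) s u := by
  induction m generalizing s with
  | zero =>
    obtain rfl : s = t := hst
    rwa [zero_add]
  | succ m ih =>
    obtain ⟨v, hsv, hvt⟩ := hst
    rw [Nat.add_right_comm]
    exact ⟨v, hsv, ih hvt⟩

theorem Steps.tail (hst : G.Steps n s t) (htu : G.Next t u) : G.Steps (n + 1) s u :=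
  hst.trans (steps_one.2 htu)

theorem Steps.exists_next_right (hst : G.Steps (n + 1) s t) :
    ∃ u, G.Steps n s u ∧ G.Next u t := by
  induction n generalizing s with
  | zero => exact ⟨s, rfl, steps_one.1 hst⟩
  | succ n ih =>
    obtain ⟨v, hsv, hvt⟩ := hst
    obtain ⟨u, hvu, hut⟩ := ih hvt
    exact ⟨u, ⟨v, hsv, hvu⟩, hut⟩

theorem op_steps : G.op.Steps n s t ↔ G.Steps n t s := by
  induction n generalizing s with
  | zero => exact eq_comm
  | succ n ih =>
    refine ⟨fun ⟨u, hsu, hut⟩ => (ih.1 hut).tail (op_next.1 hsu), fun hts => ?_⟩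
    obtain ⟨u, htu, hus⟩ := hts.exists_next_right
    exact ⟨u, op_next.2 hus, ih.2 htu⟩

theorem Steps.sameNode (hst : G.Steps n s t) : G.SameNode s t := by
  induction n generalizing s with
  | zero => exact fun P _ => congrArg P hst
  | succ n ih =>
    obtain ⟨u, hsu, hut⟩ := hst
    exact hsu.sameNode.trans (ih hut)

theorem Steps.of_add (h : G.LocallyGentle) (hst : G.Steps m s t) (hsu : G.Steps (m + n) s u) :
    G.Steps n t u := by
  induction m generalizing s with
  | zero =>
    obtain rfl : s = t := hst
    rwa [zero_add] at hsu
  | succ m ih =>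
    obtain ⟨v, hsv, hvt⟩ := hst
    rw [Nat.add_right_comm] at hsu
    obtain ⟨w, hsw, hwu⟩ := hsu
    exact ih hvt (hsv.right_unique h hsw ▸ hwu)

theorem Steps.eq_or_exists_next (hst : G.Steps n s t) : s = t ∨ ∃ u, G.Next s u := by
  cases n with
  | zero => exact .inl hst
  | succ n => exact .inr ⟨_, hst.choose_spec.1⟩

theorem Steps.mem (h : G.LocallyGentle) (hst : G.Steps n s t) (hs : s.1 ∈ G.V) : t.1 ∈ G.V := by
  cases n with
  | zero => exact (show s = t from hst) ▸ hs
  | succ n =>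
    obtain ⟨u, -, hut⟩ := hst.exists_next_right
    exact hut.mem_right h

theorem exists_steps_last (h : G.LocallyGentle) (hs : s.1 ∈ G.V)
    (hcyc : ∀ n y, G.Next y s → ¬ G.Steps n s y) :
    ∃ n l, G.Steps n s l ∧ ∀ u, ¬ G.Next l u := by
  by_contra! hlast
  let R : Set HalfEdge := {t | ∃ n, G.Steps n s t}
  have hR : R.Finite := ((G.V ×ˢ Finset.univ).finite_toSet).subset fun t ⟨n, hst⟩ => by
    simpa using hst.mem h hs
  choose! f hf using fun t (ht : t ∈ R) => hlast _ t ht.choose_spec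
  have hmaps : Set.MapsTo f R R := fun t ht => ⟨_, ht.choose_spec.tail (hf t ht)⟩
  have hinj : Set.InjOn f R := fun t ht u hu e => (hf t ht).left_unique h (e ▸ hf u hu)
  obtain ⟨y, hy, hys⟩ := ((hR.injOn_iff_bijOn_of_mapsTo hmaps).1 hinj).surjOn ⟨0, rfl⟩
  exact hcyc _ y (hys ▸ hf y hy) hy.choose_spec

theorem Steps.reflect (h : G.Gentle) (hl : G.Reflectable l.1) (hW : G.IsNodeFun W)
    (hWl : W l ≠ W (opp l)) (hsl : G.Steps (n + 2) s l) (hmin : ∀ m < n + 2, ¬ G.Steps m s l) :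
    (G.reflect l.1).Steps (n + 1) s l := by
  have hs : s.1 ≠ l.1 := fun e => by
    obtain rfl | rfl := eq_or_eq_opp e
    · exact hmin 0 (by omega) rfl
    · exact hWl (hsl.sameNode W hW).symm
  induction n generalizing s with
  | zero =>
    obtain ⟨u, hsu, hul⟩ := hsl
    exact steps_one.2 (hsu.reflect_trans h hl (steps_one.1 hul) rfl hs)
  | succ n ih =>
    obtain ⟨u, hsu, hul⟩ := hsl
    have hmin' : ∀ m < n + 2, ¬ G.Steps m u l := fun m hm hul' =>
      hmin (m + 1) (by omega) ⟨u, hsu, hul'⟩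
    have hWu : W u = W l := hul.sameNode W hW
    have hu : u.1 ≠ l.1 := fun e => by
      obtain rfl | rfl := eq_or_eq_opp e
      · exact hmin' 0 (by omega) rfl
      · exact hWl hWu.symm
    refine ⟨u, hsu.reflect_of_ne h hl hs hu fun q hq huq => ?_, ih hul hmin' hu⟩
    obtain rfl | rfl := eq_or_eq_opp hq
    · exact hmin' 1 (by omega) (steps_one.2 huq)
    · exact hWl (hWu.symm.trans (huq.fun_eq hW))

/-- The half-edges in the support of a function. -/
def support (G : RibbonGraph) (P : HalfEdge → ZMod 2) : Finset HalfEdge :=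
  (G.V ×ˢ Finset.univ).filter fun s => P s ≠ 0

/-- The outcome of a sequence of reflections inside a branch `P` which lets some half-edge precede
the first half-edge `s` of the branch, and changes neither the cycle nor the other side. -/
def Unlocks (G : RibbonGraph) (Z : Finset ℕ) (s : HalfEdge) (P : HalfEdge → ZMod 2) : Prop :=
  ∃ G' : RibbonGraph, G.Reaches G' ∧ G'.IsCycle Z ∧ (∃ y, G'.Next y s) ∧
    ∀ t u, P t = 0 → P u = 0 → G.Next t u → G'.Next t u

section Branch

variable (h : G.Gentle) (hP : G.IsBranch Z s P)
include h hP

theorem IsBranch.next_reflect (hl : G.Reflectable l.1) (hPl : P l = 1) (hPl' : P (opp l) = 1)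
    {t u : HalfEdge} (ht : P t = 0) (hu : P u = 0) (htu : G.Next t u) :
    (G.reflect l.1).Next t u := by
  have hPx {q : HalfEdge} (hq : q.1 = l.1) : P q ≠ 0 := by
    obtain rfl | rfl := eq_or_eq_opp hq <;> simp [hPl, hPl']
  refine htu.reflect_of_ne h hl (fun e => hPx e ht) (fun e => hPx e hu) fun q hq huq => hPx hq ?_
  rw [← huq.fun_eq hP.isNodeFun, hu]

theorem IsBranch.isCycle_reflect (hZ : G.IsCycle Z) (hl : G.Reflectable l.1) (hPl : P l = 1)
    (hPl' : P (opp l) = 1) : (G.reflect l.1).IsCycle Z :=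
  hZ.reflect_of_forall h hl fun t q htq hq ht => by
    have hPt := hP.apply_of_mem t ht
    rw [htq.fun_eq hP.isNodeFun] at hPt
    obtain rfl | rfl := eq_or_eq_opp hq <;> simp_all

theorem IsBranch.unlocks_of_reflect (hl : G.Reflectable l.1) (hPl : P l = 1) (hPl' : P (opp l) = 1)
    (hG : (G.reflect l.1).Unlocks Z s P) : G.Unlocks Z s P := by
  obtain ⟨G', hGG', hZ', hs', hnext⟩ := hG
  exact ⟨G', hl.reaches.trans hGG', hZ', hs', fun t u ht hu htu =>
    hnext t u ht hu (hP.next_reflect h hl hPl hPl' ht hu htu)⟩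

end Branch

theorem reflectable_of_last (h : G.Gentle) (hsl : G.Next s l) (hlast : ∀ u, ¬ G.Next l u) :
    G.Reflectable l.1 := by
  refine reflectable_iff.2 ⟨hsl.mem_right h.toLocallyGentle, fun q u hq hqu => ?_⟩
  obtain rfl | rfl := eq_or_eq_opp hq
  · exact absurd hqu (hlast u)
  · exact ⟨s, by rwa [opp_opp]⟩

theorem Steps.eq_of_last (h : G.LocallyGentle) (hst : G.Steps m s t) (hsl : G.Steps n s l)
    (hmn : n ≤ m) (hlast : ∀ u, ¬ G.Next l u) : n = m := by
  obtain ⟨k, rfl⟩ := Nat.exists_eq_add_of_le hmn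
  cases k with
  | zero => rfl
  | succ k => exact absurd (hsl.of_add h hst).choose_spec.1 (hlast _)

theorem support_card_lt (hPW : ∀ u, P u = 0 → W u = 0) (hs : s.1 ∈ G.V) (hPs : P s ≠ 0)
    (hWs : W s = 0) : (G.support W).card < (G.support P).card := by
  refine Finset.card_lt_card <| (Finset.ssubset_iff_of_subset fun t ht => ?_).2 ⟨s, ?_, ?_⟩
  · rw [support, Finset.mem_filter] at ht ⊢
    exact ⟨ht.1, mt (hPW t) ht.2⟩
  · simpa [support] using ⟨hs, hPs⟩
  · simp [support, hWs]

theorem IsBranch.apply_of_last (h : G.Gentle) (hP : G.IsBranch Z s P) (hsl : G.Steps (n + 1) s l)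
    (hlast : ∀ u, ¬ G.Next l u) : P l = 1 ∧ P (opp l) = 1 := by
  have hPl : P l = 1 := (hsl.sameNode P hP.isNodeFun).symm.trans hP.apply_self
  have hl : l.1 ≠ s.1 := fun e => by
    obtain rfl | rfl := eq_or_eq_opp e
    · exact hlast _ hsl.choose_spec.1
    · exact zero_ne_one (hP.apply_opp.symm.trans hPl)
  obtain ⟨u, -, hul⟩ := hsl.exists_next_right
  exact ⟨hPl, (CharTwo.add_eq_zero.1
    (hP.add_opp_of_ne l (hul.mem_right h.toLocallyGentle) hl)).symm.trans hPl⟩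

theorem IsBranch.reflect_last (h : G.Gentle) (hZ : G.IsCycle Z) (hP : G.IsBranch Z s P)
    (hsl : G.Steps (n + 2) s l) (hlast : ∀ u, ¬ G.Next l u) :
    G.Reflectable l.1 ∧ (G.reflect l.1).IsCycle Z ∧ (G.reflect l.1).IsBranch Z s P ∧
      (G.reflect l.1).Steps (n + 1) s l ∧ ((G.reflect l.1).Unlocks Z s P → G.Unlocks Z s P) := by
  obtain ⟨hPl, hPl'⟩ := hP.apply_of_last h hsl hlast
  obtain ⟨u, -, hul⟩ := hsl.exists_next_right
  have hl := reflectable_of_last h hul hlast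
  have hlZ : l.1 ∉ Z := fun hlZ => by simp [hP.apply_of_mem l hlZ] at hPl
  obtain ⟨W, hW, -, hWl, hWl'⟩ := hZ.exists_bridge hl.1 hlZ
  refine ⟨hl, hP.isCycle_reflect h hZ hl hPl hPl', hP.reflect h hl (hPl.trans hPl'.symm), ?_,
    hP.unlocks_of_reflect h hl hPl hPl'⟩
  exact hsl.reflect h hl hW (by simp [hWl, hWl']) fun m hm hsl' =>
    hm.ne (hsl.eq_of_last h.toLocallyGentle hsl' hm.le hlast)

-- Reflecting at the last half-edge `l` brings it one step closer to `s`. A half-edge preceding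
-- `opp l` then becomes the last one, but its branch is smaller than the branch of `opp l`.
theorem IsBranch.unlocks (h : G.Gentle) (hZ : G.IsCycle Z) (hP : G.IsBranch Z s P)
    (hsl : G.Steps (n + 1) s l) (hlast : ∀ u, ¬ G.Next l u) : G.Unlocks Z s P := by
  induction n generalizing G l with
  | zero =>
    obtain ⟨hPl, hPl'⟩ := hP.apply_of_last h hsl hlast
    rw [zero_add, steps_one] at hsl
    have hl := reflectable_of_last h hsl hlast
    exact hP.unlocks_of_reflect h hl hPl hPl' ⟨_, .refl, hP.isCycle_reflect h hZ hl hPl hPl',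
      ⟨_, hsl.reflect_opp rfl⟩, fun _ _ _ _ => id⟩
  | succ n ih =>
    obtain ⟨W, hW⟩ : ∃ W, G.IsBranch Z (opp l) W := by
      obtain ⟨u, -, hul⟩ := hsl.exists_next_right
      obtain ⟨W, hW, -⟩ := hP.exists_isBranch hZ (hul.mem_right h.toLocallyGentle)
        hsl.sameNode fun e => hlast hsl.choose (e.symm ▸ hsl.choose_spec.1)
      exact ⟨W, hW⟩
    induction hk : (G.support W).card using Nat.strong_induction_on generalizing G l W with
    | _ k ihk =>
      obtain ⟨hl, hZ', hP', hsl', himp⟩ := hP.reflect_last h hZ hsl hlast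
      apply himp
      by_cases hy : ∃ y, G.Next y (opp l)
      · obtain ⟨y, hy⟩ := hy
        obtain ⟨U, hU, hUl, hUW⟩ := hW.exists_isBranch hZ (hy.mem_left h.toLocallyGentle)
          hy.sameNode.symm (ne_of_apply_ne Prod.fst (hy.fst_ne h))
        have hWl' : W (opp l) ≠ 0 := hW.apply_self ▸ one_ne_zero
        have hUl' : U l = U (opp l) := (hUW l (opp_opp l ▸ hW.apply_opp)).trans hUl.symm
        have hyl : (G.reflect l.1).Next l y := by simpa using hy.reflect_opp rfl
        exact ihk _ (hk ▸ support_card_lt hUW (s := opp l) hl.1 hWl' hUl) (h.reflect hl) hZ' hP'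
          (hsl'.tail hyl) (fun t => not_next_reflect h hl hy rfl hlast) U
          (hU.reflect h hl hUl') rfl
      · exact ih (h.reflect hl) hZ' hP' hsl' fun t hlt =>
          hy ⟨t, next_of_next_reflect h hl rfl hlt⟩

/-- Some sequence of reflections turns `G` into a ribbon graph with a cycle longer than `Z`. -/
def Grows (G : RibbonGraph) (Z : Finset ℕ) : Prop :=
  ∃ (G' : RibbonGraph) (Z' : Finset ℕ), G.Reaches G' ∧ G'.IsCycle Z' ∧ Z.card < Z'.card

theorem Reaches.grows {G' : RibbonGraph} (hGG' : G.Reaches G') (hG' : G'.Grows Z) : G.Grows Z := by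
  obtain ⟨G'', Z', hG'', hZ', hcard⟩ := hG'
  exact ⟨G'', Z', hGG'.trans hG'', hZ', hcard⟩

theorem IsCycle.grows_or_steps (h : G.Gentle) (hZ : G.IsCycle Z) (hx : G.Reflectable q.1)
    (hcq : G.Steps (n + 1) c q) (hmin : ∀ m < n + 1, ¬ G.Steps m c q) (hc : c.1 ∈ Z)
    (hqZ : q.1 ∉ Z) :
    G.Grows Z ∨ (G.reflect q.1).IsCycle Z ∧ (G.reflect q.1).Steps n c q ∧
      ∃ y, (G.reflect q.1).Next (opp q) y := by
  obtain ⟨P, hP⟩ := hZ.exists_isBranch hx.1 hqZ hc hcq.sameNode.symm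
  obtain ⟨y, hcy, hyq⟩ := hcq.exists_next_right
  have hpred : ∀ s t, G.Next s t → t.1 = q.1 → s.1 ∈ Z → s = y := fun s t hst ht hs => by
    obtain rfl | rfl := eq_or_eq_opp ht
    · exact hst.left_unique h.toLocallyGentle hyq
    · have hPs := hP.apply_of_mem s hs
      simp [hst.fun_eq hP.isNodeFun, hP.apply_self] at hPs
  by_cases hy : y.1 ∈ Z
  · exact .inl ⟨_, _, hx.reaches, hZ.reflect_insert h hx hqZ hyq rfl hy hpred, by
      rw [Finset.card_insert_of_notMem hqZ]
      exact Nat.lt_succ_self _⟩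
  · refine .inr ⟨hZ.reflect_of_forall h hx fun s t hst ht hs => hy (hpred s t hst ht hs ▸ hs), ?_,
      y, hyq.reflect_opp rfl⟩
    cases n with
    | zero => exact absurd ((show c = y from hcy) ▸ hc) hy
    | succ n =>
      have hPq : P q = 0 := by simpa using hP.apply_opp
      exact hcq.reflect h hx hP.isNodeFun (by simp [hPq, hP.apply_self]) hmin

theorem Steps.imp {G' : RibbonGraph} (hP : G.IsNodeFun P)
    (hnext : ∀ t u, P t = 0 → P u = 0 → G.Next t u → G'.Next t u) (hst : G.Steps n s t)
    (hPt : P t = 0) : G'.Steps n s t := by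
  induction n generalizing s with
  | zero => exact hst
  | succ n ih =>
    obtain ⟨u, hsu, hut⟩ := hst
    have hPu : P u = 0 := (hut.sameNode P hP).trans hPt
    exact ⟨u, hnext s u ((hsu.fun_eq hP).trans hPu) hPu hsu, ih hut⟩

theorem IsCycle.exists_reaches_next_opp (h : G.Gentle) (hZ : G.IsCycle Z) (hcq : G.Steps n c q)
    (hc : c.1 ∈ Z) (hqZ : q.1 ∉ Z) (hqV : q.1 ∈ G.V) {y : HalfEdge} (hy : G.Next (opp q) y) :
    ∃ G' : RibbonGraph, G.Reaches G' ∧ G'.IsCycle Z ∧ G'.Steps n c q ∧ ∃ y, G'.Next y (opp q) := by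
  by_cases hfirst : ∃ y, G.Next y (opp q)
  · exact ⟨G, .refl, hZ, hcq, hfirst⟩
  obtain ⟨P, hP⟩ := hZ.exists_isBranch hqV hqZ hc hcq.sameNode.symm
  obtain ⟨m, l, hl, hlast⟩ := exists_steps_last (s := opp q) h.toLocallyGentle hqV
    fun n y hyq _ => hfirst ⟨y, hyq⟩
  obtain ⟨m, rfl⟩ : ∃ k, m = k + 1 := Nat.exists_eq_succ_of_ne_zero fun hm => by
    subst hm
    exact hlast y ((show opp q = l from hl) ▸ hy)
  obtain ⟨G', hGG', hZ', hy', hnext⟩ := hP.unlocks h hZ hl hlast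
  exact ⟨G', hGG', hZ', hcq.imp hP.isNodeFun hnext (by simpa using hP.apply_opp), hy'⟩

-- Each reflection at `q` brings `q` one step closer to `c`, until one puts its edge on the cycle.
-- It needs `q` to be last or a half-edge preceding `opp q`, and `unlocks` can achieve the latter.
theorem IsCycle.grows (h : G.Gentle) (hZ : G.IsCycle Z) (hcq : G.Steps n c q) (hc : c.1 ∈ Z)
    (hqZ : q.1 ∉ Z)
    (hq : (∀ u, ¬ G.Next q u) ∨ (∃ y, G.Next y (opp q)) ∨ ∃ y, G.Next (opp q) y) : G.Grows Z := by
  induction n using Nat.strong_induction_on generalizing G with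
  | _ n ih =>
    have hqV : q.1 ∈ G.V := hcq.mem h.toLocallyGentle (hZ.subset hc)
    wlog hq' : (∀ u, ¬ G.Next q u) ∨ ∃ y, G.Next y (opp q) generalizing G
    · obtain ⟨y, hy⟩ := (or_assoc.2 hq).resolve_left hq'
      obtain ⟨G', hGG', hZ', hcq', hy'⟩ := hZ.exists_reaches_next_opp h hcq hc hqZ hqV hy
      exact hGG'.grows <| this (hGG'.gentle h) hZ' hcq' (.inr (.inl hy')) (hGG'.V_eq ▸ hqV)
        (.inr hy')
    obtain ⟨n, rfl⟩ : ∃ k, n = k + 1 := Nat.exists_eq_succ_of_ne_zero fun hn => by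
      subst hn
      exact hqZ ((show c = q from hcq) ▸ hc)
    by_cases hmin : ∃ m < n + 1, G.Steps m c q
    · obtain ⟨m, hm, hcq'⟩ := hmin
      exact ih m hm h hZ hcq' hq
    have hx : G.Reflectable q.1 := reflectable_iff.2 ⟨hqV, fun t u ht htu => by
      obtain rfl | rfl := eq_or_eq_opp ht
      · exact hq'.resolve_left fun hlast => hlast u htu
      · obtain ⟨y, -, hyq⟩ := hcq.exists_next_right
        exact ⟨y, by rwa [opp_opp]⟩⟩
    obtain hG | ⟨hZ', hcq', hy⟩ := hZ.grows_or_steps h hx hcq (by simpa using hmin) hc hqZ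
    · exact hG
    · exact hx.reaches.grows (ih n (Nat.lt_succ_self n) (h.reflect hx) hZ' hcq' (.inr (.inr hy)))

end RibbonGraph

/-! ### Maximal cycles -/

namespace RibbonGraph

variable {G : RibbonGraph} {Z : Finset ℕ} {c d q s t : HalfEdge} {p : ℕ → Prop} {n : ℕ}

theorem IsCycle.iff_of_cut (hZ : G.IsCycle Z) (hc : c.1 ∈ Z) (hd : d.1 ∈ Z)
    (hp : ∀ b ∈ G.A, G.SameNode (G.src b) c ∨ (p (G.src b).1 ↔ p (G.tgt b).1)) :
    p c.1 ↔ p d.1 := by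
  classical
  let w : ℕ → ZMod 2 := Pi.single c.1 1 + Pi.single d.1 1
  let f : ℕ → ZMod 2 := fun v => if p v then 1 else 0
  obtain ⟨W, hW, hδ, hWc⟩ := hZ.exists_of_sum_eq_zero (w := w)
    (by simp [w, Finset.sum_add_distrib, hc, hd, CharTwo.add_self_eq_zero]) c 1
  have hsum : ∑ v ∈ Z, f v * w v = 0 := by
    refine (hZ.isCoboundary_iff _).1 ⟨fun s => f s.1 * (1 + W s), fun b hb => ?_, fun s hs => ?_⟩
    · obtain hbc | hb' := hp b hb
      · have h₁ : W (G.src b) = 1 := (hbc W hW).trans hWc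
        have h₂ : W (G.tgt b) = 1 := (hW b hb).symm.trans h₁
        simp only [h₁, h₂, CharTwo.add_self_eq_zero, mul_zero]
      · simp only [f, hb', hW b hb]
    · simp only [opp_fst, ← hδ s hs]
      grind
  simp only [w, Pi.add_apply, mul_add, Finset.sum_add_distrib, Pi.single_apply, mul_ite, mul_one,
    mul_zero, Finset.sum_ite_eq', hc, hd, if_true] at hsum
  grind

theorem IsCycle.exists_ne_sameNode (hZ : G.IsCycle Z) (hc : c.1 ∈ Z) :
    ∃ d, d ≠ c ∧ d.1 ∈ Z ∧ G.SameNode c d := by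
  classical
  by_contra! hne
  let P : HalfEdge → ZMod 2 := fun s => if G.SameNode c s then 1 else 0
  have hP : G.IsNodeFun P := fun a ha => by
    have hst : G.SameNode (G.src a) (G.tgt a) := fun Q hQ => hQ a ha
    exact if_congr ⟨fun e => e.trans hst, fun e => e.trans hst.symm⟩ rfl rfl
  have hPc : P c = 1 := if_pos fun _ _ => rfl
  have hP_ne {s : HalfEdge} (hs : s.1 ∈ Z) (hsc : s ≠ c) : P s = 0 := if_neg (hne s hsc hs)
  have hsum := (hZ.isCoboundary_iff fun v => P (v, true) + P (v, false)).1 ⟨P, hP, fun s _ => by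
    obtain ⟨v, _ | _⟩ := s
    exacts [add_comm _ _, rfl]⟩
  rw [Finset.sum_eq_single_of_mem c.1 hc fun v hv hvc => by
    rw [hP_ne hv (ne_of_apply_ne Prod.fst hvc), hP_ne hv (ne_of_apply_ne Prod.fst hvc), add_zero]]
    at hsum
  have hPc' := hP_ne (s := opp c) hc (opp_ne c)
  obtain ⟨v, _ | _⟩ := c
  all_goals
    simp only [opp, Bool.not_true, Bool.not_false] at hPc'
    simp [hPc, hPc'] at hsum

theorem Gentle.connected_deleteArrows (h : G.Gentle) {S : Finset ℕ}
    (hS : ∀ p : ℕ → Prop, (∀ b ∈ G.A, b ∉ S → (p (G.src b).1 ↔ p (G.tgt b).1)) →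
      ∀ b ∈ G.A, b ∈ S → (p (G.src b).1 ↔ p (G.tgt b).1)) :
    Connected (deleteArrows G.toQuivRel S) := by
  refine connected_iff.2 fun p hp => connected_iff.1 h.connected p fun b hb => ?_
  have hp' : ∀ b ∈ G.A, b ∉ S → (p (G.src b).1 ↔ p (G.tgt b).1) := fun b hb hbS =>
    hp b (Finset.mem_sdiff.2 ⟨hb, hbS⟩)
  by_cases hbS : b ∈ S
  exacts [hS p hp' b hb hbS, hp' b hb hbS]

theorem IsCycle.connected_deleteArrows_of_triangle (h : G.Gentle) (hZ : G.IsCycle Z) {a₀ a₁ a₂ : ℕ}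
    (ha : IsTriangleTriple G.toQuivRel a₀ a₁ a₂) (hsrc : (G.src a₀).1 ∈ Z)
    (htgt : (G.tgt a₀).1 ∈ Z) : Connected (deleteArrows G.toQuivRel {a₀, a₂}) := by
  obtain ⟨⟨ha₀, ha₁, ha₂, h₀₁, h₁₂, -⟩, hr₀, hr₁, hr₂⟩ := ha
  refine h.connected_deleteArrows fun p hp => ?_
  have e₀ := (mem_rel.1 hr₀).2.2
  have e₁ := (mem_rel.1 hr₁).2.2
  have e₂ := (mem_rel.1 hr₂).2.2
  have hst : G.SameNode (G.src a₀) (G.tgt a₀) := fun P hP => hP a₀ ha₀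
  have hst' : G.SameNode (G.src a₀) (G.src a₂) := e₂ ▸ hst
  have h₁ := hp a₁ ha₁ (by simp [h₀₁.symm, h₁₂])
  have h₀ := hZ.iff_of_cut hsrc htgt fun b hb => (by
    by_cases hbS : b ∈ ({a₀, a₂} : Finset ℕ)
    · obtain rfl | rfl : b = a₀ ∨ b = a₂ := by simpa using hbS
      exacts [.inl fun _ _ => rfl, .inl hst'.symm]
    · exact .inr (hp b hb hbS))
  grind

theorem eq_or_eq_or_eq_of_sameNode_of_triangle (h : G.Gentle) {a₀ a₁ a₂ : ℕ}
    (ha : IsTriangleTriple G.toQuivRel a₀ a₁ a₂) (hs : G.SameNode (G.src a₀) s) :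
    s = G.src a₀ ∨ s = G.src a₁ ∨ s = G.src a₂ := by
  classical
  obtain ⟨-, hr₀, hr₁, hr₂⟩ := ha
  rw [mem_rel] at hr₀ hr₁ hr₂
  have hs' := hs (fun s => if s = G.src a₀ ∨ s = G.src a₁ ∨ s = G.src a₂ then 1 else 0)
    fun b hb => by grind [h.eq_of_src, h.eq_of_tgt]
  grind

theorem isTriangleTriple_rotate {Q : QuivRel} {a₀ a₁ a₂ : ℕ} (ha : IsTriangleTriple Q a₀ a₁ a₂) :
    IsTriangleTriple Q a₁ a₂ a₀ := by
  obtain ⟨⟨ha₀, ha₁, ha₂, h₀₁, h₁₂, h₀₂, e₀, e₁, e₂⟩, hr₀, hr₁, hr₂⟩ := ha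
  exact ⟨⟨ha₁, ha₂, ha₀, h₁₂, h₀₂.symm, h₀₁.symm, e₁, e₂, e₀⟩, hr₁, hr₂, hr₀⟩

/-- The half-edge `q` is reached from an edge of `Z` by steps around its node, in one of the two
directions. -/
def Linked (G : RibbonGraph) (Z : Finset ℕ) (q : HalfEdge) : Prop :=
  ∃ c, c.1 ∈ Z ∧ ∃ n, G.Steps n c q ∨ G.Steps n q c

theorem linked_of_mem (hq : q.1 ∈ Z) : G.Linked Z q := ⟨q, hq, 0, .inl rfl⟩

theorem op_linked : G.op.Linked Z q ↔ G.Linked Z q := by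
  simp only [Linked, op_steps, or_comm]

theorem Linked.next (h : G.Gentle) (hs : G.Linked Z s) (hst : G.Next s t) : G.Linked Z t := by
  obtain ⟨c, hc, n, hcs | hsc⟩ := hs
  · exact ⟨c, hc, n + 1, .inl (hcs.tail hst)⟩
  · cases n with
    | zero => exact ⟨c, hc, 1, .inl (steps_one.2 ((show s = c from hsc) ▸ hst))⟩
    | succ n =>
      obtain ⟨u, hsu, huc⟩ := hsc
      exact ⟨c, hc, n, .inr (hst.right_unique h.toLocallyGentle hsu ▸ huc)⟩

theorem Linked.of_steps (h : G.Gentle) (hs : G.Linked Z s) (hst : G.Steps n s t) :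
    G.Linked Z t := by
  induction n generalizing s with
  | zero => exact (show s = t from hst) ▸ hs
  | succ n ih =>
    obtain ⟨u, hsu, hut⟩ := hst
    exact ih (hs.next h hsu) hut

theorem Linked.exists_sameNode (hq : G.Linked Z q) : ∃ c, c.1 ∈ Z ∧ G.SameNode q c := by
  obtain ⟨c, hc, n, hcq | hqc⟩ := hq
  exacts [⟨c, hc, hcq.sameNode.symm⟩, ⟨c, hc, hqc.sameNode⟩]

/-- The cycle `Z` cannot be made longer by reflections or by coreflections. -/
structure IsMaximalCycle (G : RibbonGraph) (Z : Finset ℕ) : Prop extends G.IsCycle Z where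
  not_grows : ¬ G.Grows Z
  not_op_grows : ¬ G.op.Grows Z

theorem IsMaximalCycle.op (hZ : G.IsMaximalCycle Z) : G.op.IsMaximalCycle Z :=
  ⟨hZ.toIsCycle.op, hZ.not_op_grows, hZ.not_grows⟩

section IsMaximalCycle

variable (h : G.Gentle) (hZ : G.IsMaximalCycle Z)
include h hZ

theorem IsMaximalCycle.not_next_opp (hq : G.Linked Z q) (hqZ : q.1 ∉ Z) :
    ¬ G.Next (opp q) s := fun hs => by
  obtain ⟨c, hc, n, hcq | hqc⟩ := hq
  · exact hZ.not_grows (hZ.toIsCycle.grows h hcq hc hqZ (.inr (.inr ⟨s, hs⟩)))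
  · exact hZ.not_op_grows (hZ.toIsCycle.op.grows h.op (op_steps.2 hqc) hc hqZ
      (.inr (.inl ⟨s, op_next.2 hs⟩)))

theorem IsMaximalCycle.mem_of_last (hq : G.Linked Z q) (hlast : ∀ u, ¬ G.Next q u) : q.1 ∈ Z := by
  by_contra hqZ
  obtain ⟨c, hc, n, hcq | hqc⟩ := hq
  · exact hZ.not_grows (hZ.toIsCycle.grows h hcq hc hqZ (.inl hlast))
  · obtain rfl | ⟨u, hqu⟩ := hqc.eq_or_exists_next
    exacts [hqZ hc, hlast u hqu]

theorem IsMaximalCycle.linked_of_fst_eq (hq : G.Linked Z q) (hqs : q.1 = s.1)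
    (hst : G.Next s t) : G.Linked Z s := by
  by_cases hqZ : q.1 ∈ Z
  · exact linked_of_mem (hqs ▸ hqZ)
  · obtain rfl | rfl := eq_or_eq_opp hqs
    exacts [hq, absurd (by rwa [opp_opp]) (hZ.not_next_opp h hq hqZ (s := t))]

theorem IsMaximalCycle.linked_src {a : ℕ} (ha : a ∈ G.A) : G.Linked Z (G.src a) := by
  have next_src {b : ℕ} (hb : b ∈ G.A) : G.Next (G.src b) (G.tgt b) := ⟨b, hb, rfl, rfl⟩
  obtain ⟨v, hv⟩ := hZ.nonempty
  obtain ⟨q, hqa, hq⟩ := connected_iff.1 h.connected (fun x => ∃ q, q.1 = x ∧ G.Linked Z q)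
    (fun b hb => ⟨fun ⟨q, hqb, hq⟩ => ⟨_, rfl,
      (hZ.linked_of_fst_eq h hq hqb (next_src hb)).next h (next_src hb)⟩,
      fun ⟨q, hqb, hq⟩ => ⟨_, rfl, op_linked.1 <| ((hZ.op.linked_of_fst_eq h.op (op_linked.2 hq) hqb
        (op_next.2 (next_src hb))).next h.op (op_next.2 (next_src hb)))⟩⟩)
    v (hZ.subset hv) _ (h.src_mem a ha) ⟨(v, true), rfl, linked_of_mem hv⟩
  exact hZ.linked_of_fst_eq h hq hqa (next_src ha)

theorem IsMaximalCycle.exists_mem_of_cut {a : ℕ} (ha : a ∈ G.A)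
    (hp : ∀ b ∈ G.A, b ≠ a → (p (G.src b).1 ↔ p (G.tgt b).1))
    (ht : ∀ n, ¬ G.Steps n (G.tgt a) (G.src a)) :
    ∃ d : HalfEdge, d.1 ∈ Z ∧ G.SameNode (G.tgt a) d ∧ (p (G.tgt a).1 ↔ p d.1) := by
  have ha' : G.Next (G.src a) (G.tgt a) := ⟨a, ha, rfl, rfl⟩
  obtain ⟨n, l, hl, hlast⟩ := exists_steps_last h.toLocallyGentle (h.tgt_mem a ha) fun n y hy hn =>
    ht n (hy.left_unique h.toLocallyGentle ha' ▸ hn)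
  refine ⟨l, hZ.mem_of_last h (((hZ.linked_src h ha).next h ha').of_steps h hl) hlast, hl.sameNode,
    ?_⟩
  generalize G.tgt a = t at hl ht
  induction n generalizing t with
  | zero => exact iff_of_eq (congrArg (fun s => p s.1) hl)
  | succ n ih =>
    obtain ⟨u, ⟨b, hb, rfl, rfl⟩, hu⟩ := hl
    have hba : b ≠ a := by
      rintro rfl
      exact ht 0 rfl
    exact (hp b hb hba).trans (ih _ hu fun m hm => ht (m + 1) ⟨_, ⟨b, hb, rfl, rfl⟩, hm⟩)

theorem IsMaximalCycle.iff_of_forall_ne {a : ℕ} (ha : a ∈ G.A)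
    (hp : ∀ b ∈ G.A, b ≠ a → (p (G.src b).1 ↔ p (G.tgt b).1)) :
    p (G.src a).1 ↔ p (G.tgt a).1 := by
  by_cases ht : ∃ n, G.Steps n (G.tgt a) (G.src a)
  · obtain ⟨n, hn⟩ := ht
    generalize G.tgt a = t at hn
    induction n generalizing t with
    | zero => exact iff_of_eq (congrArg (fun s => p s.1) hn.symm)
    | succ n ih =>
      obtain ⟨u, ⟨b, hb, rfl, rfl⟩, hu⟩ := hn
      by_cases hba : b = a
      · rw [hba]
      · exact (ih _ hu).trans (hp b hb hba).symm
  · push Not at ht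
    obtain ⟨d, hd, -, hpd⟩ := hZ.exists_mem_of_cut h ha hp ht
    obtain ⟨c, hc, hsc, hpc⟩ := hZ.op.exists_mem_of_cut h.op ha (fun b hb hba => (hp b hb hba).symm)
      fun n hn => ht n (op_steps.1 hn)
    have hsc' : G.SameNode (G.src a) c := fun P hP => hsc P hP.op
    refine hpc.trans ((hZ.iff_of_cut hc hd fun b hb => ?_).trans hpd.symm)
    obtain rfl | hba := eq_or_ne b a
    exacts [.inl hsc', .inr (hp b hb hba)]

theorem IsMaximalCycle.not_branchArrow (a : ℕ) : ¬ BranchArrow G.toQuivRel a := fun ⟨ha, hconn⟩ =>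
  hconn <| h.connected_deleteArrows fun p hp b _ hba => by
    obtain rfl := Finset.mem_singleton.1 hba
    exact hZ.iff_of_forall_ne h ha fun b hb hba' => hp b hb (by simpa using hba')

theorem IsMaximalCycle.not_branchTriangle (O : Finset ℕ) : ¬ BranchTriangle G.toQuivRel O := by
  rintro ⟨⟨a₀, a₁, a₂, rfl, ha⟩, hO⟩
  obtain ⟨c, hc, hac⟩ := (hZ.linked_src h ha.1.1).exists_sameNode
  obtain ⟨d, hdc, hd, hcd⟩ := hZ.exists_ne_sameNode hc
  have hc' := eq_or_eq_or_eq_of_sameNode_of_triangle h ha hac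
  have hd' := eq_or_eq_or_eq_of_sameNode_of_triangle h ha (hac.trans hcd)
  have key {b₀ b₁ b₂ : ℕ} (hb : IsTriangleTriple G.toQuivRel b₀ b₁ b₂)
      (hS : {b₀, b₂} ⊆ ({a₀, a₁, a₂} : Finset ℕ)) (h₀ : (G.src b₀).1 ∈ Z)
      (h₁ : (G.tgt b₀).1 ∈ Z) : False :=
    hO _ hS (Finset.card_pair hb.1.2.2.2.2.2.1)
      (hZ.toIsCycle.connected_deleteArrows_of_triangle h hb h₀ h₁)
  have hr₁ := isTriangleTriple_rotate ha
  have hr₂ := isTriangleTriple_rotate hr₁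
  have e₀ := (mem_rel.1 ha.2.2.2).2.2
  have e₁ := (mem_rel.1 hr₁.2.2.2).2.2
  have e₂ := (mem_rel.1 hr₂.2.2.2).2.2
  have k₀ := key ha (by grind)
  have k₁ := key hr₁ (by grind)
  have k₂ := key hr₂ (by grind)
  grind

end IsMaximalCycle

theorem IsCycle.exists_isMaximalCycle (hZ : G.IsCycle Z) :
    ∃ (G' : RibbonGraph) (Z' : Finset ℕ), G.Reaches G' ∧ G'.IsMaximalCycle Z' := by
  induction hk : G.V.card - Z.card using Nat.strong_induction_on generalizing G Z with
  | _ k ih =>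
    have growing {G' Z'} (hGG' : G.Reaches G') (hZ' : G'.IsCycle Z') (hcard : Z.card < Z'.card) :
        ∃ (G' : RibbonGraph) (Z' : Finset ℕ), G.Reaches G' ∧ G'.IsMaximalCycle Z' := by
      have hle : Z'.card ≤ G'.V.card := Finset.card_le_card hZ'.subset
      rw [hGG'.V_eq] at hle
      obtain ⟨G'', Z'', hG'', hZ''⟩ := ih _ (by rw [hGG'.V_eq]; omega) hZ' rfl
      exact ⟨G'', Z'', hGG'.trans hG'', hZ''⟩
    by_cases h₁ : G.Grows Z
    · obtain ⟨G', Z', hGG', hZ', hcard⟩ := h₁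
      exact growing hGG' hZ' hcard
    by_cases h₂ : G.op.Grows Z
    · obtain ⟨G', Z', hGG', hZ', hcard⟩ := h₂
      exact growing (G' := G'.op) hGG'.op hZ'.op hcard
    exact ⟨G, Z, .refl, hZ, h₁, h₂⟩

theorem IsCycle.exists_refEquiv (h : G.Gentle) (hZ : G.IsCycle Z) :
    ∃ Q' : QuivRel, IsGentle Q' ∧ (∀ a : ℕ, ¬ BranchArrow Q' a) ∧
      (∀ O : Finset ℕ, ¬ BranchTriangle Q' O) ∧ RefEquiv G.toQuivRel Q' := by
  obtain ⟨G', Z', hGG', hZ'⟩ := hZ.exists_isMaximalCycle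
  have h' := hGG'.gentle h
  exact ⟨_, h'.isGentle, hZ'.not_branchArrow h', hZ'.not_branchTriangle h', hGG'.refEquiv h⟩

end RibbonGraph

/-! ### Existence of a cycle -/

namespace RibbonGraph

variable {G : RibbonGraph}

/-- The half-edges of a ribbon graph. -/
def halves (G : RibbonGraph) : Finset HalfEdge := G.V ×ˢ Finset.univ

theorem mem_halves {s : HalfEdge} : s ∈ G.halves ↔ s.1 ∈ G.V := by simp [halves]

/-- The nodes of a ribbon graph: the classes of half-edges generated by the corners. -/
def Node (G : RibbonGraph) := Quot fun s t : G.halves => G.Next s t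

instance : Finite G.Node := inferInstanceAs (Finite (Quot _))

/-- The node of a half-edge. -/
def Node.mk (s : HalfEdge) (hs : s.1 ∈ G.V) : G.Node := Quot.mk _ ⟨s, mem_halves.2 hs⟩

theorem Node.exists_mk (c : G.Node) : ∃ s hs, Node.mk s hs = c := by
  obtain ⟨⟨s, hs⟩, rfl⟩ := Quot.exists_rep c
  exact ⟨s, mem_halves.1 hs, rfl⟩

open Classical in
theorem exists_isNodeFun_mk (h : G.LocallyGentle) (F : G.Node → ZMod 2) :
    ∃ P, G.IsNodeFun P ∧ ∀ s hs, P s = F (Node.mk s hs) := by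
  refine ⟨fun s => if hs : s.1 ∈ G.V then F (Node.mk s hs) else 0, fun a ha => ?_,
    fun s hs => dif_pos hs⟩
  simp only [dif_pos (h.src_mem a ha), dif_pos (h.tgt_mem a ha)]
  exact congrArg F (Quot.sound ⟨a, ha, rfl, rfl⟩)

theorem IsNodeFun.exists_node {P : HalfEdge → ZMod 2} (hP : G.IsNodeFun P) :
    ∃ F : G.Node → ZMod 2, ∀ s hs, F (Node.mk s hs) = P s :=
  ⟨Quot.lift (fun s => P s) fun _ _ hst => hst.fun_eq hP, fun _ _ => rfl⟩

/-- The coboundary map from mod 2 functions on nodes to mod 2 functions on edges. -/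
def coboundary (G : RibbonGraph) : (G.Node → ZMod 2) →ₗ[ZMod 2] (G.V → ZMod 2) where
  toFun F v := F (Node.mk (v, true) v.2) + F (Node.mk (v, false) v.2)
  map_add' F F' := by ext v; simp only [Pi.add_apply]; ring
  map_smul' c F := by ext v; simp only [Pi.smul_apply, smul_eq_mul, RingHom.id_apply]; ring

theorem isCoboundary_iff_mem_range (h : G.LocallyGentle) {w : ℕ → ZMod 2} :
    G.IsCoboundary w ↔ (fun v : G.V => w v) ∈ LinearMap.range G.coboundary := by
  constructor
  · rintro ⟨P, hP, hw⟩
    obtain ⟨F, hF⟩ := hP.exists_node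
    exact ⟨F, funext fun v => (congrArg₂ _ (hF _ _) (hF _ _)).trans (hw (v, true) v.2)⟩
  · rintro ⟨F, hF⟩
    obtain ⟨P, hP, hPF⟩ := exists_isNodeFun_mk h F
    refine ⟨P, hP, fun ⟨v, b⟩ hv => ?_⟩
    have hFv : P (v, true) + P (v, false) = w v :=
      (congrArg₂ _ (hPF _ _) (hPF _ _)).trans (congrFun hF ⟨v, hv⟩)
    cases b
    exacts [(add_comm _ _).trans hFv, hFv]

theorem ker_coboundary (h : G.LocallyGentle) : LinearMap.ker G.coboundary = ZMod 2 ∙ 1 := by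
  ext F
  rw [LinearMap.mem_ker, Submodule.mem_span_singleton]
  constructor
  · intro hF
    obtain ⟨P, hP, hPF⟩ := exists_isNodeFun_mk h F
    have fst_eq (v : ℕ) (hv : v ∈ G.V) (b : Bool) : P (v, b) = P (v, true) := by
      have hv' : P (v, true) + P (v, false) = 0 :=
        (congrArg₂ _ (hPF _ _) (hPF _ _)).trans (congrFun hF ⟨v, hv⟩)
      cases b
      exacts [(CharTwo.add_eq_zero.1 hv').symm, rfl]
    obtain ⟨v₀, hv₀⟩ := h.nonempty
    refine ⟨P (v₀, true), funext fun c => ?_⟩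
    obtain ⟨⟨v, b⟩, hv, rfl⟩ := c.exists_mk
    have hconst : P (v, true) = P (v₀, true) := by
      refine connected_iff.1 h.connected (fun x => P (x, true) = P (v₀, true)) (fun a ha => ?_)
        v₀ hv₀ v hv rfl
      have ha' := hP a ha
      rw [fst_eq _ (h.src_mem a ha), fst_eq _ (h.tgt_mem a ha)] at ha'
      exact Eq.congr_left ha'
    simp only [Pi.smul_apply, Pi.one_apply, smul_eq_mul, mul_one]
    rw [← hPF, fst_eq v hv, hconst]
  · rintro ⟨c, rfl⟩
    ext v
    simp [coboundary, CharTwo.add_self_eq_zero]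

theorem finrank_range_coboundary_add_one (h : G.LocallyGentle) :
    Module.finrank (ZMod 2) (LinearMap.range G.coboundary) + 1 = Nat.card G.Node := by
  have : Fintype G.Node := Fintype.ofFinite _
  have : Nonempty G.Node := ⟨Node.mk (_, true) h.nonempty.choose_spec⟩
  have hker : Module.finrank (ZMod 2) (LinearMap.ker G.coboundary) = 1 := by
    rw [ker_coboundary h]
    exact finrank_span_singleton one_ne_zero
  rw [← hker, LinearMap.finrank_range_add_finrank_ker, Module.finrank_fintype_fun_eq_card,
    Nat.card_eq_fintype_card]

theorem exists_isCycle (h : G.LocallyGentle) (hcard : Nat.card G.Node = G.V.card) :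
    ∃ Z, G.IsCycle Z := by
  have hrank : Module.finrank (ZMod 2) (LinearMap.range G.coboundary) + 1 =
      Module.finrank (ZMod 2) (G.V → ZMod 2) := by
    rw [finrank_range_coboundary_add_one h, hcard]
    simp
  obtain ⟨φ, hφ, hle⟩ := Submodule.exists_le_ker_of_lt_top (LinearMap.range G.coboundary) <|
    lt_top_iff_ne_top.2 fun htop => by rw [htop, finrank_top] at hrank; omega
  have hker : LinearMap.range G.coboundary = LinearMap.ker φ := by
    refine Submodule.eq_of_le_of_finrank_eq hle ?_
    have := Module.Dual.finrank_ker_add_one_of_ne_zero hφ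
    omega
  let Z : Finset G.V := Finset.univ.filter fun v => φ (Pi.single v 1) = 1
  have hφ_apply (w : G.V → ZMod 2) : φ w = ∑ v ∈ Z, w v := by
    rw [LinearMap.pi_apply_eq_sum_univ, Finset.sum_filter]
    refine Finset.sum_congr rfl fun v _ => ?_
    have hsingle : (Pi.single v 1 : G.V → ZMod 2) = fun u => if v = u then 1 else 0 :=
      funext fun u => by simp only [Pi.single_apply, eq_comm]
    rw [← hsingle, smul_eq_mul]
    obtain hv | hv := eq_zero_or_one (φ (Pi.single v 1)) <;> rw [hv] <;> simp
  refine ⟨Z.map (.subtype _), fun v hv => ?_, ?_, fun w => ?_⟩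
  · obtain ⟨u, -, rfl⟩ := Finset.mem_map.1 hv
    exact u.2
  · by_contra hZ
    rw [Finset.not_nonempty_iff_eq_empty, Finset.map_eq_empty] at hZ
    exact hφ (LinearMap.ext fun w => by rw [hφ_apply, hZ]; rfl)
  · rw [isCoboundary_iff_mem_range h, hker, LinearMap.mem_ker, hφ_apply, Finset.sum_map]
    rfl

end RibbonGraph

/-! ### The ribbon graph of a gentle quiver -/

/-- The sign distinguishing the two halves of an edge. -/
def sign (s : HalfEdge) : ℤ := if s.2 then 1 else -1

theorem sign_opp (s : HalfEdge) : sign (opp s) = -sign s := by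
  obtain ⟨x, _ | _⟩ := s <;> rfl

theorem sign_eq_or (s : HalfEdge) : sign s = 1 ∨ sign s = -1 := by
  obtain ⟨x, _ | _⟩ := s <;> simp [sign]

theorem eq_iff_fst_eq_and_sign_eq {s t : HalfEdge} : s = t ↔ s.1 = t.1 ∧ sign s = sign t := by
  obtain ⟨x, _ | _⟩ := s <;> obtain ⟨y, _ | _⟩ := t <;> simp [sign]

/-- The half-edge of the edge `x` with sign `ε`. -/
def halfOf (x : ℕ) (ε : ℤ) : HalfEdge := (x, decide (ε = 1))

theorem sign_halfOf {x : ℕ} {ε : ℤ} (hε : ε = 1 ∨ ε = -1) : sign (halfOf x ε) = ε := by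
  obtain rfl | rfl := hε <;> rfl

theorem halfOf_eq_iff {x : ℕ} {ε : ℤ} (hε : ε = 1 ∨ ε = -1) {s : HalfEdge} :
    halfOf x ε = s ↔ x = s.1 ∧ ε = sign s := by
  rw [eq_iff_fst_eq_and_sign_eq, sign_halfOf hε]
  rfl

namespace SigmaTau

variable {Q : QuivRel}

/-- The ribbon graph of a gentle quiver with chosen signs. -/
def ribbonGraph (st : SigmaTau Q) : RibbonGraph where
  V := Q.V
  A := Q.A
  src a := halfOf (Q.src a) (st.σ a)
  tgt a := halfOf (Q.tgt a) (st.τ a)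

variable (st : SigmaTau Q) {a : ℕ} {s : HalfEdge}

theorem src_eq_iff (ha : a ∈ Q.A) : st.ribbonGraph.src a = s ↔ Q.src a = s.1 ∧ st.σ a = sign s :=
  halfOf_eq_iff (st.σ_pm a ha)

theorem tgt_eq_iff (ha : a ∈ Q.A) : st.ribbonGraph.tgt a = s ↔ Q.tgt a = s.1 ∧ st.τ a = sign s :=
  halfOf_eq_iff (st.τ_pm a ha)

theorem sign_src (ha : a ∈ Q.A) : sign (st.ribbonGraph.src a) = st.σ a := sign_halfOf (st.σ_pm a ha)

theorem sign_tgt (ha : a ∈ Q.A) : sign (st.ribbonGraph.tgt a) = st.τ a := sign_halfOf (st.τ_pm a ha)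

theorem mem_rel_iff (hQ : IsGentle Q) {b : ℕ} : (a, b) ∈ Q.rel ↔
    a ∈ Q.A ∧ b ∈ Q.A ∧ st.ribbonGraph.src a = st.ribbonGraph.tgt b := by
  constructor
  · intro hr
    obtain ⟨ha, hb, e⟩ := hQ.2.2.2.1 _ hr
    exact ⟨ha, hb, (st.src_eq_iff ha).2
      ⟨e, ((st.rel_iff a ha b hb e).1 hr).trans (st.sign_tgt hb).symm⟩⟩
  · rintro ⟨ha, hb, e⟩
    obtain ⟨e₁, e₂⟩ := (st.src_eq_iff ha).1 e
    exact (st.rel_iff a ha b hb e₁).2 (e₂.trans (st.sign_tgt hb))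

theorem toQuivRel_ribbonGraph (hQ : IsGentle Q) : st.ribbonGraph.toQuivRel = Q := by
  have hrel : st.ribbonGraph.toQuivRel.rel = Q.rel := by
    ext ⟨a, b⟩
    rw [RibbonGraph.mem_rel, st.mem_rel_iff hQ]
    rfl
  cases Q
  simp only [RibbonGraph.toQuivRel] at hrel ⊢
  rw [hrel]
  rfl

theorem locallyGentle_ribbonGraph (hQ : IsGentle Q) : st.ribbonGraph.LocallyGentle where
  nonempty := hQ.1
  src_mem a ha := (hQ.2.1 a ha).1
  tgt_mem a ha := (hQ.2.1 a ha).2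
  src_inj a ha b hb e := by
    by_contra hab
    obtain ⟨e₁, e₂⟩ := (st.src_eq_iff ha).1 e
    have h₁ := st.σ_src a ha b hb hab e₁
    have h₂ := st.sign_src hb
    have h₃ := st.σ_pm b hb
    omega
  tgt_inj a ha b hb e := by
    by_contra hab
    obtain ⟨e₁, e₂⟩ := (st.tgt_eq_iff ha).1 e
    have h₁ := st.τ_tgt a ha b hb hab e₁
    have h₂ := st.sign_tgt hb
    have h₃ := st.τ_pm b hb
    omega
  connected := by
    rw [st.toQuivRel_ribbonGraph hQ]
    exact hQ.2.2.1

end SigmaTau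

/-! ### First half-edges and open nodes -/

namespace RibbonGraph

variable {G : RibbonGraph} {r r' s t u v : HalfEdge} {m n : ℕ}

/-- The half-edges which follow no other half-edge. Around a node they exist if and only if the
half-edges of that node are linearly, not cyclically, ordered. -/
def firsts (G : RibbonGraph) : Finset HalfEdge := G.halves \ G.A.image G.tgt

theorem mem_firsts : s ∈ G.firsts ↔ s.1 ∈ G.V ∧ ∀ t, ¬ G.Next t s := by
  simp only [firsts, Finset.mem_sdiff, mem_halves, Finset.mem_image, Next]
  grind

theorem mem_firsts_op : s ∈ G.op.firsts ↔ s.1 ∈ G.V ∧ ∀ t, ¬ G.Next s t := by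
  simp only [mem_firsts, op_next]
  rfl

theorem sum_halves {M : Type*} [AddCommMonoid M] (h : G.LocallyGentle) (g : HalfEdge → M) :
    ∑ s ∈ G.halves, g s = ∑ a ∈ G.A, g (G.tgt a) + ∑ r ∈ G.firsts, g r := by
  have hsub : G.A.image G.tgt ⊆ G.halves :=
    Finset.image_subset_iff.2 fun a ha => mem_halves.2 (h.tgt_mem a ha)
  rw [← Finset.sum_sdiff hsub, Finset.sum_image h.tgt_inj, add_comm, firsts]

theorem two_mul_card_V (h : G.LocallyGentle) : 2 * G.V.card = G.A.card + G.firsts.card := by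
  have hsum := sum_halves h fun _ => 1
  simp only [Finset.sum_const, smul_eq_mul, mul_one, halves, Finset.card_product,
    Finset.card_univ, Fintype.card_bool] at hsum
  rw [mul_comm, hsum]

theorem Steps.eq_zero_of_mem_firsts (hst : G.Steps n s t) (ht : t ∈ G.firsts) : n = 0 := by
  cases n with
  | zero => rfl
  | succ n =>
    obtain ⟨u, -, hut⟩ := hst.exists_next_right
    exact absurd hut ((mem_firsts.1 ht).2 u)

theorem Steps.unique_of_firsts (h : G.LocallyGentle) (hr : r ∈ G.firsts) (hr' : r' ∈ G.firsts)
    (hm : G.Steps m r s) (hn : G.Steps n r' s) : m = n ∧ r = r' := by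
  have aux {k l : ℕ} {p q : HalfEdge} (hp : p ∈ G.firsts) (hk : G.Steps k p s)
      (hl : G.Steps l q s) (hkl : k ≤ l) : k = l :=
    (op_steps.2 hl).eq_of_last h.op (op_steps.2 hk) hkl fun u hu =>
      (mem_firsts.1 hp).2 u (op_next.1 hu)
  obtain rfl : m = n := (le_total m n).elim (aux hr hm hn) fun hnm => (aux hr' hn hm hnm).symm
  exact ⟨rfl, (op_steps.2 hm).of_add (n := 0) h.op (op_steps.2 hn)⟩

theorem Next.exists_steps_iff (h : G.LocallyGentle) (hr : r ∈ G.firsts) (huv : G.Next u v) :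
    (∃ n, G.Steps n r u) ↔ ∃ n, G.Steps n r v := by
  constructor
  · rintro ⟨n, hn⟩
    exact ⟨_, hn.tail huv⟩
  · rintro ⟨_ | n, hn⟩
    · obtain rfl : r = v := hn
      exact absurd huv ((mem_firsts.1 hr).2 u)
    · obtain ⟨w, hw, hwv⟩ := hn.exists_next_right
      exact ⟨n, huv.left_unique h hwv ▸ hw⟩

/-- A half-edge is open if going back from it around its node leads to a first half-edge. -/
def IsOpen (G : RibbonGraph) (s : HalfEdge) : Prop := ∃ r ∈ G.firsts, ∃ n, G.Steps n r s

theorem Next.isOpen_iff (h : G.LocallyGentle) (huv : G.Next u v) : G.IsOpen u ↔ G.IsOpen v :=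
  exists_congr fun _ => and_congr_right fun hr => huv.exists_steps_iff h hr

theorem isOpen_of_forall_not_next (h : G.LocallyGentle) (hs : s.1 ∈ G.V)
    (hlast : ∀ t, ¬ G.Next s t) : G.IsOpen s := by
  obtain ⟨n, r, hr, hfirst⟩ := exists_steps_last h.op hs
    fun _ y hy _ => hlast y (op_next.1 hy)
  have hrV : r.1 ∈ G.op.V := hr.mem h.op hs
  exact ⟨r, mem_firsts.2 ⟨hrV, fun t ht => hfirst t (op_next.2 ht)⟩, n, op_steps.1 hr⟩

theorem exists_steps_last_of_mem_firsts (h : G.LocallyGentle) (hr : r ∈ G.firsts) :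
    ∃ l ∈ G.op.firsts, ∃ n, G.Steps n r l := by
  obtain ⟨n, l, hl, hlast⟩ := exists_steps_last h (mem_firsts.1 hr).1
    fun _ y hy _ => (mem_firsts.1 hr).2 y hy
  exact ⟨l, mem_firsts_op.2 ⟨hl.mem h (mem_firsts.1 hr).1, hlast⟩, n, hl⟩

theorem Node.prop_congr {p : HalfEdge → Prop} (hp : ∀ u v, G.Next u v → (p u ↔ p v)) {hs ht}
    (e : (Node.mk s hs : G.Node) = Node.mk t ht) : p s ↔ p t :=
  (congrArg (Quot.lift (fun u : G.halves => p u) fun u v huv => propext (hp u v huv)) e).to_iff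

theorem Next.mk_eq (hst : G.Next s t) (hs ht) : (Node.mk s hs : G.Node) = Node.mk t ht :=
  Quot.sound hst

theorem Steps.mk_eq (h : G.LocallyGentle) (hst : G.Steps n s t) (hs : s.1 ∈ G.V) :
    (Node.mk s hs : G.Node) = Node.mk t (hst.mem h hs) := by
  induction n generalizing s with
  | zero =>
    obtain rfl : s = t := hst
    rfl
  | succ n ih =>
    obtain ⟨u, hsu, hut⟩ := hst
    exact (hsu.mk_eq hs (hsu.mem_right h)).trans (ih hut (hsu.mem_right h))

theorem mk_injOn_firsts (h : G.LocallyGentle) (hr : r ∈ G.firsts) (hr' : r' ∈ G.firsts)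
    (e : (Node.mk r (mem_firsts.1 hr).1 : G.Node) = Node.mk r' (mem_firsts.1 hr').1) : r = r' := by
  obtain ⟨n, hn⟩ := (Node.prop_congr (fun u v huv => huv.exists_steps_iff h hr) e).1 ⟨0, rfl⟩
  obtain rfl := hn.eq_zero_of_mem_firsts hr'
  exact hn

theorem isOpen_iff_exists_mk_eq (h : G.LocallyGentle) (hs : s.1 ∈ G.V) : G.IsOpen s ↔
    ∃ r : G.firsts, (Node.mk r.1 (mem_firsts.1 r.2).1 : G.Node) = Node.mk s hs := by
  constructor
  · rintro ⟨r, hr, n, hn⟩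
    exact ⟨⟨r, hr⟩, hn.mk_eq h _⟩
  · rintro ⟨⟨r, hr⟩, e⟩
    exact (Node.prop_congr (fun u v huv => huv.isOpen_iff h) e).1 ⟨r, hr, 0, rfl⟩

/-- The arrows around a node. -/
def Node.arrows (h : G.LocallyGentle) (c : G.Node) : Set ℕ :=
  {a | ∃ ha : a ∈ G.A, Node.mk (G.src a) (h.src_mem a ha) = c}

/-- The sets formed by the arrows around the nodes without first half-edge, i.e. those with
cyclically ordered half-edges. They correspond to the orbits in `𝒞`. -/
def IsClosedNode (G : RibbonGraph) (h : G.LocallyGentle) (O : Set ℕ) : Prop :=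
  ∃ a, ∃ ha : a ∈ G.A, ¬ G.IsOpen (G.src a) ∧ O = (Node.mk (G.src a) (h.src_mem a ha)).arrows h

theorem card_node (h : G.LocallyGentle) :
    Nat.card G.Node = G.firsts.card + {O | G.IsClosedNode h O}.ncard := by
  let f : G.firsts → G.Node := fun r => Node.mk r.1 (mem_firsts.1 r.2).1
  have hf : Function.Injective f := fun r r' e => Subtype.ext (mk_injOn_firsts h r.2 r'.2 e)
  have hclosed (s : HalfEdge) (hs : s.1 ∈ G.V) : ¬ G.IsOpen s ↔ Node.mk s hs ∉ Set.range f :=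
    (isOpen_iff_exists_mk_eq h hs).not
  have hexists (c : G.Node) (hc : c ∉ Set.range f) :
      ∃ a, ∃ ha : a ∈ G.A, Node.mk (G.src a) (h.src_mem a ha) = c := by
    obtain ⟨s, hs, rfl⟩ := c.exists_mk
    by_contra hlast
    refine (hclosed s hs).2 hc (isOpen_of_forall_not_next h hs ?_)
    rintro _ ⟨a, ha, rfl, -⟩
    exact hlast ⟨a, ha, rfl⟩
  have himage : {O | G.IsClosedNode h O} = Node.arrows h '' (Set.range f)ᶜ := by
    ext O
    constructor
    · rintro ⟨a, ha, hopen, rfl⟩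
      exact ⟨_, (hclosed _ _).1 hopen, rfl⟩
    · rintro ⟨c, hc, rfl⟩
      obtain ⟨a, ha, rfl⟩ := hexists c hc
      exact ⟨a, ha, (hclosed _ _).2 hc, rfl⟩
  have hinj : Set.InjOn (Node.arrows h) (Set.range f)ᶜ := fun c hc c' _ e => by
    obtain ⟨a, ha⟩ := hexists c hc
    exact ha.choose_spec.symm.trans ((Set.ext_iff.1 e a).1 ha).choose_spec
  rw [himage, hinj.ncard_image, ← Set.ncard_add_ncard_compl (Set.range f),
    Set.ncard_range_of_injective hf, Nat.card_eq_fintype_card, Fintype.card_coe]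

end RibbonGraph

/-! ### Walks around nodes -/

namespace RibbonGraph

variable {G : RibbonGraph} {l l' : List ℕ} {r s t u v : HalfEdge} {a m n : ℕ}

/-- The arrows in `l` lead from the half-edge `s` to the half-edge `t` around their common node. As
in an antipath, the arrow listed first is the one passed last. -/
def IsWalk (G : RibbonGraph) : List ℕ → HalfEdge → HalfEdge → Prop
  | [], s, t => s = t
  | a :: l, s, t => a ∈ G.A ∧ G.tgt a = t ∧ G.IsWalk l s (G.src a)

theorem isWalk_cons_iff : G.IsWalk (a :: l) s t ↔ (∀ b ∈ a :: l, b ∈ G.A) ∧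
    (a :: l).IsChain (fun b c => G.src b = G.tgt c) ∧ G.src (a :: l).getLast! = s ∧
      G.tgt a = t := by
  induction l generalizing a t with
  | nil => grind [IsWalk]
  | cons b l ih =>
    grind [IsWalk]

theorem IsWalk.steps (hl : G.IsWalk l s t) : G.Steps l.length s t := by
  induction l generalizing t with
  | nil => exact hl
  | cons a l ih => exact (ih hl.2.2).tail ⟨a, hl.1, rfl, hl.2.1⟩

theorem Steps.exists_isWalk (hst : G.Steps n s t) : ∃ l, G.IsWalk l s t := by
  induction n generalizing t with
  | zero => exact ⟨[], hst⟩
  | succ n ih =>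
    obtain ⟨u, hsu, a, ha, rfl, rfl⟩ := hst.exists_next_right
    obtain ⟨l, hl⟩ := ih hsu
    exact ⟨a :: l, ha, rfl, hl⟩

theorem IsWalk.eq_of_length_eq (h : G.LocallyGentle) (hl : G.IsWalk l s t)
    (hl' : G.IsWalk l' u t) (hlen : l.length = l'.length) : l = l' := by
  induction l generalizing l' t with
  | nil => exact (List.length_eq_zero_iff.1 hlen.symm).symm
  | cons a l ih =>
    obtain _ | ⟨b, l'⟩ := l'
    · cases hlen
    · obtain ⟨ha, hat, hl⟩ := hl
      obtain ⟨hb, hbt, hl'⟩ := hl'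
      obtain rfl := h.eq_of_tgt ha hb (hat.trans hbt.symm)
      rw [ih hl hl' (Nat.succ_injective hlen)]

theorem IsWalk.exists_steps_of_mem (hl : G.IsWalk l s t) (ha : a ∈ l) :
    a ∈ G.A ∧ ∃ n < l.length, G.Steps n s (G.src a) := by
  induction l generalizing t with
  | nil => cases ha
  | cons b l ih =>
    obtain ⟨hb, -, hl⟩ := hl
    obtain rfl | ha := List.mem_cons.1 ha
    · exact ⟨hb, _, l.length.lt_succ_self, hl.steps⟩
    · obtain ⟨haA, n, hn, hsa⟩ := ih hl ha
      exact ⟨haA, n, hn.trans l.length.lt_succ_self, hsa⟩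

theorem IsWalk.nodup (h : G.LocallyGentle) (hr : r ∈ G.firsts) (hl : G.IsWalk l r t) :
    l.Nodup := by
  induction l generalizing t with
  | nil => exact .nil
  | cons a l ih =>
    obtain ⟨-, -, hl⟩ := hl
    refine List.nodup_cons.2 ⟨fun ha => ?_, ih hl⟩
    obtain ⟨-, n, hn, hra⟩ := hl.exists_steps_of_mem ha
    exact hn.ne (hra.unique_of_firsts h hr hr hl.steps).1

theorem IsWalk.mem_of_steps (h : G.LocallyGentle) (hr : r ∈ G.firsts) (hl : G.IsWalk l r t)
    (ha : a ∈ G.A) (hat : G.Steps n (G.tgt a) t) : a ∈ l := by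
  induction l generalizing n t with
  | nil =>
    obtain rfl : r = t := hl
    obtain rfl := hat.eq_zero_of_mem_firsts hr
    exact absurd ⟨a, ha, rfl, hat⟩ ((mem_firsts.1 hr).2 (G.src a))
  | cons b l ih =>
    obtain ⟨hb, hbt, hl⟩ := hl
    cases n with
    | zero =>
      exact List.mem_cons.2 (.inl (h.eq_of_tgt ha hb ((show _ = t from hat).trans hbt.symm)))
    | succ n =>
      obtain ⟨u, hau, hut⟩ := hat.exists_next_right
      exact List.mem_cons_of_mem _ (ih hl (hut.left_unique h ⟨b, hb, rfl, hbt⟩ ▸ hau))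

theorem Steps.exists_steps_of_last (h : G.LocallyGentle) (hsu : G.Steps m s u)
    (hst : G.Steps n s t) (hlast : ∀ v, ¬ G.Next t v) : ∃ k, G.Steps k u t := by
  obtain hmn | hnm := le_total m n
  · obtain ⟨k, rfl⟩ := Nat.exists_eq_add_of_le hmn
    exact ⟨k, hsu.of_add h hst⟩
  · obtain rfl := hsu.eq_of_last h hst hnm hlast
    exact ⟨0, hsu.of_add (n := 0) h hst⟩

theorem Steps.last_unique (h : G.LocallyGentle) (hsu : G.Steps m s u) (hst : G.Steps n s t)
    (hu : ∀ v, ¬ G.Next u v) (ht : ∀ v, ¬ G.Next t v) : u = t := by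
  obtain ⟨k, hk⟩ := hsu.exists_steps_of_last h hst ht
  exact hk.eq_or_exists_next.resolve_right fun ⟨v, hv⟩ => hu v hv

/-- A walk around the whole of an open node. -/
structure IsMaxWalk (G : RibbonGraph) (l : List ℕ) (s t : HalfEdge) : Prop where
  isWalk : G.IsWalk l s t
  mem_left : s ∈ G.firsts
  mem_right : t ∈ G.op.firsts

theorem exists_isMaxWalk (h : G.LocallyGentle) (hr : r ∈ G.firsts) : ∃ l t, G.IsMaxWalk l r t := by
  obtain ⟨t, ht, n, hn⟩ := exists_steps_last_of_mem_firsts h hr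
  obtain ⟨l, hl⟩ := hn.exists_isWalk
  exact ⟨l, t, hl, hr, ht⟩

theorem IsMaxWalk.unique (h : G.LocallyGentle) (hl : G.IsMaxWalk l r t)
    (hl' : G.IsMaxWalk l' r u) : l = l' := by
  obtain rfl : u = t := hl'.isWalk.steps.last_unique h hl.isWalk.steps
    (mem_firsts_op.1 hl'.mem_right).2 (mem_firsts_op.1 hl.mem_right).2
  exact hl.isWalk.eq_of_length_eq h hl'.isWalk
    (hl.isWalk.steps.unique_of_firsts h hl.mem_left hl.mem_left hl'.isWalk.steps).1

/-- The list of arrows of the walk around the open node with first half-edge `r`. -/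
noncomputable def maxWalk (G : RibbonGraph) (r : HalfEdge) : List ℕ :=
  Classical.epsilon fun l => ∃ t, G.IsMaxWalk l r t

theorem exists_isMaxWalk_maxWalk (h : G.LocallyGentle) (hr : r ∈ G.firsts) :
    ∃ t, G.IsMaxWalk (G.maxWalk r) r t :=
  Classical.epsilon_spec (p := fun l => ∃ t, G.IsMaxWalk l r t) (exists_isMaxWalk h hr)

theorem IsMaxWalk.mem_iff (h : G.LocallyGentle) (hl : G.IsMaxWalk l r t) :
    a ∈ l ↔ a ∈ G.A ∧ ∃ n, G.Steps n r (G.src a) := by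
  refine ⟨fun ha => ?_, fun ⟨ha, n, hn⟩ => ?_⟩
  · obtain ⟨haA, n, -, hn⟩ := hl.isWalk.exists_steps_of_mem ha
    exact ⟨haA, n, hn⟩
  · obtain ⟨k, hk⟩ := (hn.tail ⟨a, ha, rfl, rfl⟩).exists_steps_of_last h hl.isWalk.steps
      (mem_firsts_op.1 hl.mem_right).2
    exact hl.isWalk.mem_of_steps h hl.mem_left ha hk

end RibbonGraph

/-! ### Maximal antipaths -/

/-- The thread with list of arrows `l`, where a trivial thread sits at the half-edge `s`. -/
def Thread.ofWalk (s : HalfEdge) : List ℕ → Thread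
  | [] => .triv s.1 (sign s)
  | a :: l => .arrows (a :: l)

namespace SigmaTau

variable {Q : QuivRel} (st : SigmaTau Q) {l : List ℕ} {r s t : HalfEdge} {a : ℕ}

theorem isAntiList_iff (hQ : IsGentle Q) : IsAntiList Q l ↔ l ≠ [] ∧ (∀ b ∈ l, b ∈ Q.A) ∧
    l.IsChain fun b c => st.ribbonGraph.src b = st.ribbonGraph.tgt c := by
  refine and_congr_right fun _ => and_congr_right fun hl => List.IsChain.iff_of_mem_imp ?_
  intro b c hb hc
  rw [st.mem_rel_iff hQ]
  exact ⟨fun hbc => hbc.2.2, fun hbc => ⟨hl b hb, hl c hc, hbc⟩⟩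

theorem mem_firsts_iff : s ∈ st.ribbonGraph.firsts ↔
    s.1 ∈ Q.V ∧ ¬ ∃ b ∈ Q.A, Q.tgt b = s.1 ∧ st.τ b = sign s := by
  rw [RibbonGraph.mem_firsts]
  refine and_congr_right fun _ => ⟨fun hs ⟨b, hb, e⟩ => ?_, fun hs t ⟨b, hb, _, e⟩ => ?_⟩
  · exact hs _ ⟨b, hb, rfl, (st.tgt_eq_iff hb).2 e⟩
  · exact hs ⟨b, hb, (st.tgt_eq_iff hb).1 e⟩

theorem mem_firsts_op_iff : s ∈ st.ribbonGraph.op.firsts ↔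
    s.1 ∈ Q.V ∧ ¬ ∃ b ∈ Q.A, Q.src b = s.1 ∧ st.σ b = sign s := by
  rw [RibbonGraph.mem_firsts_op]
  refine and_congr_right fun _ => ⟨fun hs ⟨b, hb, e⟩ => ?_, fun hs t ⟨b, hb, e, _⟩ => ?_⟩
  · exact hs _ ⟨b, hb, (st.src_eq_iff hb).2 e, rfl⟩
  · exact hs ⟨b, hb, (st.src_eq_iff hb).1 e⟩

theorem inN_triv_iff {x : ℕ} {ε : ℤ} :
    InN Q st (.triv x ε) ↔ ∃ s, x = s.1 ∧ ε = sign s ∧ st.ribbonGraph.IsMaxWalk [] s s := by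
  constructor
  · rintro ⟨⟨hx, hε⟩, htgt, hsrc⟩
    have e := (sign_halfOf (x := x) hε).symm
    refine ⟨halfOf x ε, rfl, e, rfl, st.mem_firsts_iff.2 ⟨hx, ?_⟩, st.mem_firsts_op_iff.2 ⟨hx, ?_⟩⟩
    · rw [← e]; exact hsrc
    · rw [← e]; exact htgt
  · rintro ⟨s, rfl, rfl, hs⟩
    obtain ⟨hx, hsrc⟩ := st.mem_firsts_iff.1 hs.mem_left
    exact ⟨⟨hx, sign_eq_or s⟩, (st.mem_firsts_op_iff.1 hs.mem_right).2, hsrc⟩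

theorem inN_arrows_iff (hQ : IsGentle Q) : InN Q st (.arrows (a :: l)) ↔
    st.ribbonGraph.IsMaxWalk (a :: l) (st.ribbonGraph.src (a :: l).getLast!)
      (st.ribbonGraph.tgt a) := by
  have hlast : (a :: l).getLast! ∈ a :: l := List.getLast_mem (List.cons_ne_nil a l)
  constructor
  · rintro ⟨hanti, htgt, hsrc⟩
    obtain ⟨-, hA, hchain⟩ := (st.isAntiList_iff hQ).1 hanti
    have ha := hA a List.mem_cons_self
    refine ⟨RibbonGraph.isWalk_cons_iff.2 ⟨hA, hchain, rfl, rfl⟩, st.mem_firsts_iff.2 ?_,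
      st.mem_firsts_op_iff.2 ?_⟩
    · rw [st.sign_src (hA _ hlast)]
      exact ⟨(hQ.2.1 _ (hA _ hlast)).1, hsrc⟩
    · rw [st.sign_tgt ha]
      exact ⟨(hQ.2.1 _ ha).2, htgt⟩
  · rintro ⟨hl, hfirst, hlast'⟩
    obtain ⟨hA, hchain, -, -⟩ := RibbonGraph.isWalk_cons_iff.1 hl
    rw [mem_firsts_iff, st.sign_src (hA _ hlast)] at hfirst
    rw [mem_firsts_op_iff, st.sign_tgt (hA a List.mem_cons_self)] at hlast'
    exact ⟨(st.isAntiList_iff hQ).2 ⟨List.cons_ne_nil a l, hA, hchain⟩, hlast'.2, hfirst.2⟩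

theorem inN_iff (hQ : IsGentle Q) {w : Thread} :
    InN Q st w ↔ ∃ s l t, st.ribbonGraph.IsMaxWalk l s t ∧ w = .ofWalk s l := by
  constructor
  · intro hw
    obtain ⟨x, ε⟩ | (_ | ⟨a, l⟩) := w
    · obtain ⟨s, rfl, rfl, hs⟩ := st.inN_triv_iff.1 hw
      exact ⟨s, [], s, hs, rfl⟩
    · exact absurd rfl hw.1.1
    · exact ⟨_, _, _, (st.inN_arrows_iff hQ).1 hw, rfl⟩
  · rintro ⟨s, _ | ⟨a, l⟩, t, hl, rfl⟩
    · obtain rfl : s = t := hl.isWalk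
      exact st.inN_triv_iff.2 ⟨s, rfl, rfl, hl⟩
    · obtain ⟨-, -, rfl, rfl⟩ := RibbonGraph.isWalk_cons_iff.1 hl.isWalk
      exact (st.inN_arrows_iff hQ).2 hl

variable {st}

theorem source_sigma_ofWalk (hl : st.ribbonGraph.IsWalk l s t) :
    (Thread.ofWalk s l).source Q = s.1 ∧ (Thread.ofWalk s l).sigma st = sign s := by
  cases l with
  | nil => exact ⟨rfl, rfl⟩
  | cons a l =>
    obtain ⟨hA, -, hs, -⟩ := RibbonGraph.isWalk_cons_iff.1 hl
    exact (st.src_eq_iff (hA _ (List.getLast_mem (List.cons_ne_nil a l)))).1 hs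

theorem target_tauAnti_ofWalk (hl : st.ribbonGraph.IsWalk l s t) :
    (Thread.ofWalk s l).target Q = t.1 ∧ (Thread.ofWalk s l).tauAnti st = sign t := by
  cases l with
  | nil =>
    obtain rfl : s = t := hl
    exact ⟨rfl, rfl⟩
  | cons a l => exact (st.tgt_eq_iff hl.1).1 hl.2.1

theorem len_ofWalk : (Thread.ofWalk s l).len = l.length := by
  cases l <;> rfl

variable (st)

/-- The maximal antipath starting at the first half-edge `r`. -/
noncomputable def antipath (r : HalfEdge) : Thread := .ofWalk r (st.ribbonGraph.maxWalk r)

theorem inN_antipath (hQ : IsGentle Q) (hr : r ∈ st.ribbonGraph.firsts) :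
    InN Q st (st.antipath r) := by
  obtain ⟨t, ht⟩ := RibbonGraph.exists_isMaxWalk_maxWalk (st.locallyGentle_ribbonGraph hQ) hr
  exact (st.inN_iff hQ).2 ⟨r, _, t, ht, rfl⟩

theorem source_sigma_antipath (hQ : IsGentle Q) (hr : r ∈ st.ribbonGraph.firsts) :
    (st.antipath r).source Q = r.1 ∧ (st.antipath r).sigma st = sign r := by
  obtain ⟨t, ht⟩ := RibbonGraph.exists_isMaxWalk_maxWalk (st.locallyGentle_ribbonGraph hQ) hr
  exact source_sigma_ofWalk ht.isWalk

theorem exists_eq_antipath (hQ : IsGentle Q) {w : Thread} (hw : InN Q st w) :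
    ∃ r ∈ st.ribbonGraph.firsts, w = st.antipath r := by
  have h := st.locallyGentle_ribbonGraph hQ
  obtain ⟨r, l, t, hl, rfl⟩ := (st.inN_iff hQ).1 hw
  obtain ⟨u, hu⟩ := RibbonGraph.exists_isMaxWalk_maxWalk h hl.mem_left
  exact ⟨r, hl.mem_left, congrArg (Thread.ofWalk r) (hl.unique h hu)⟩

theorem bijOn_antipath (hQ : IsGentle Q) :
    Set.BijOn st.antipath st.ribbonGraph.firsts {w | InN Q st w} := by
  refine ⟨fun r hr => st.inN_antipath hQ hr, fun r hr r' hr' e => ?_, fun w hw => ?_⟩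
  · have e₁ := st.source_sigma_antipath hQ hr
    rw [e] at e₁
    have e₂ := st.source_sigma_antipath hQ hr'
    exact eq_iff_fst_eq_and_sign_eq.2 ⟨e₁.1.symm.trans e₂.1, e₁.2.symm.trans e₂.2⟩
  · obtain ⟨r, hr, rfl⟩ := st.exists_eq_antipath hQ hw
    exact ⟨r, hr, rfl⟩

theorem finite_setOf_inN (hQ : IsGentle Q) : {w | InN Q st w}.Finite := by
  rw [← (st.bijOn_antipath hQ).image_eq]
  exact st.ribbonGraph.firsts.finite_toSet.image _

theorem ncard_setOf_inN (hQ : IsGentle Q) :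
    {w | InN Q st w}.ncard = st.ribbonGraph.firsts.card := by
  rw [← (st.bijOn_antipath hQ).image_eq, (st.bijOn_antipath hQ).injOn.ncard_image,
    Set.ncard_coe_finset]

theorem inC_iff (hQ : IsGentle Q) :
    InC Q st a ↔ a ∈ Q.A ∧ ¬ st.ribbonGraph.IsOpen (st.ribbonGraph.src a) := by
  have h := st.locallyGentle_ribbonGraph hQ
  refine and_congr_right fun ha => not_congr ⟨fun ⟨l, hl, hal⟩ => ?_, fun ⟨r, hr, hra⟩ => ?_⟩
  · obtain _ | ⟨b, l⟩ := l
    · cases hal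
    · have hmax := (st.inN_arrows_iff hQ).1 hl
      exact ⟨_, hmax.mem_left, ((hmax.mem_iff h).1 hal).2⟩
  · obtain ⟨l, t, hl⟩ := RibbonGraph.exists_isMaxWalk h hr
    have hal := (hl.mem_iff h).2 ⟨ha, hra⟩
    have hw : InN Q st (.ofWalk r l) := (st.inN_iff hQ).2 ⟨r, l, t, hl, rfl⟩
    obtain _ | ⟨b, l⟩ := l
    · cases hal
    · exact ⟨_, hw, hal⟩

end SigmaTau

theorem eqvGen_prop_congr {α : Type*} {r : α → α → Prop} {p : α → Prop}
    (hp : ∀ x y, r x y → (p x ↔ p y)) {a b : α} (hab : Relation.EqvGen r a b) : p a ↔ p b :=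
  (congrArg (Quot.lift p fun x y hxy => propext (hp x y hxy)) (Quot.eqvGen_sound hab)).to_iff

open scoped Classical in
theorem RibbonGraph.card_filter_isOpen_src {G : RibbonGraph} (h : G.LocallyGentle) :
    (G.A.filter fun a => G.IsOpen (G.src a)).card = ∑ r ∈ G.firsts, (G.maxWalk r).length := by
  have hmem {r : HalfEdge} (hr : r ∈ G.firsts) (a : ℕ) :
      a ∈ G.maxWalk r ↔ a ∈ G.A ∧ ∃ n, G.Steps n r (G.src a) := by
    obtain ⟨t, ht⟩ := exists_isMaxWalk_maxWalk h hr
    exact ht.mem_iff h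
  have hunion : (G.A.filter fun a => G.IsOpen (G.src a)) =
      G.firsts.biUnion fun r => (G.maxWalk r).toFinset := by
    ext a
    simp only [Finset.mem_biUnion, List.mem_toFinset, IsOpen]
    grind
  rw [hunion, Finset.card_biUnion]
  · refine Finset.sum_congr rfl fun r hr => List.toFinset_card_of_nodup ?_
    obtain ⟨t, ht⟩ := exists_isMaxWalk_maxWalk h hr
    exact ht.isWalk.nodup h hr
  · refine fun r hr r' hr' hne => Finset.disjoint_left.2 fun a ha ha' => hne ?_
    obtain ⟨-, m, hm⟩ := (hmem hr a).1 (List.mem_toFinset.1 ha)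
    obtain ⟨-, n, hn⟩ := (hmem hr' a).1 (List.mem_toFinset.1 ha')
    exact (hm.unique_of_firsts h hr hr' hn).2

theorem PsiRel.inC_iff {Q : QuivRel} {st : SigmaTau Q} (a b : ℕ) (h : PsiRel Q st a b) :
    InC Q st a ↔ InC Q st b := iff_of_true h.1 h.2.1

namespace SigmaTau

variable {Q : QuivRel} (st : SigmaTau Q) {a b : ℕ}

theorem finsum_len_add_ncard_setOf_inC (hQ : IsGentle Q) :
    ∑ᶠ w ∈ {w | InN Q st w}, w.len + {a | InC Q st a}.ncard = Q.A.card := by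
  classical
  have hlen : ∑ᶠ w ∈ {w | InN Q st w}, w.len =
      ∑ r ∈ st.ribbonGraph.firsts, (st.ribbonGraph.maxWalk r).length := by
    rw [← finsum_mem_eq_of_bijOn st.antipath (st.bijOn_antipath hQ) fun r _ => len_ofWalk.symm,
      finsum_mem_coe_finset]
  have hC : {a | InC Q st a} =
      (Q.A.filter fun a => ¬ st.ribbonGraph.IsOpen (st.ribbonGraph.src a) : Finset ℕ) := by
    ext a
    rw [Finset.mem_coe, Finset.mem_filter]
    exact st.inC_iff hQ
  rw [hlen, ← RibbonGraph.card_filter_isOpen_src (st.locallyGentle_ribbonGraph hQ), hC,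
    Set.ncard_coe_finset]
  exact Finset.card_filter_add_card_filter_not _

theorem psiRel_iff : PsiRel Q st a b ↔
    InC Q st a ∧ InC Q st b ∧ st.ribbonGraph.tgt b = st.ribbonGraph.src a := by
  refine and_congr_right fun ha => and_congr_right fun hb => ?_
  rw [st.tgt_eq_iff hb.1, st.sign_src ha.1]
  rfl

theorem inC_of_eqvGen (hab : Relation.EqvGen (PsiRel Q st) a b) (ha : InC Q st a) : InC Q st b :=
  (eqvGen_prop_congr PsiRel.inC_iff hab).1 ha

theorem inC_iff_of_tgt_eq_src (hQ : IsGentle Q) (ha : a ∈ Q.A) (hb : b ∈ Q.A)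
    (e : st.ribbonGraph.tgt b = st.ribbonGraph.src a) : InC Q st a ↔ InC Q st b := by
  have hnext : st.ribbonGraph.Next (st.ribbonGraph.src b) (st.ribbonGraph.src a) := ⟨b, hb, rfl, e⟩
  rw [st.inC_iff hQ, st.inC_iff hQ, hnext.isOpen_iff (st.locallyGentle_ribbonGraph hQ)]
  exact and_congr_left fun _ => iff_of_true ha hb

theorem exists_psiRel_left (hQ : IsGentle Q) (hb : InC Q st b) : ∃ a, PsiRel Q st a b := by
  have h := st.locallyGentle_ribbonGraph hQ
  have hnext : st.ribbonGraph.Next (st.ribbonGraph.src b) (st.ribbonGraph.tgt b) :=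
    ⟨b, hb.1, rfl, rfl⟩
  obtain ⟨t, a, ha, e, -⟩ : ∃ t, st.ribbonGraph.Next (st.ribbonGraph.tgt b) t := by
    by_contra! hlast
    exact ((st.inC_iff hQ).1 hb).2 ((hnext.isOpen_iff h).2
      (RibbonGraph.isOpen_of_forall_not_next h (h.tgt_mem b hb.1) hlast))
  exact ⟨a, st.psiRel_iff.2 ⟨(st.inC_iff_of_tgt_eq_src hQ ha hb.1 e.symm).2 hb, hb, e.symm⟩⟩

theorem eqvGen_psiRel_iff (hQ : IsGentle Q) (ha : InC Q st a) :
    Relation.EqvGen (PsiRel Q st) a b ↔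
      b ∈ (RibbonGraph.Node.mk (st.ribbonGraph.src a)
        ((st.locallyGentle_ribbonGraph hQ).src_mem a ha.1)).arrows
          (st.locallyGentle_ribbonGraph hQ) := by
  have h := st.locallyGentle_ribbonGraph hQ
  constructor
  · refine fun hab => (eqvGen_prop_congr (fun c d hcd => ?_) hab).1 ⟨ha.1, rfl⟩
    obtain ⟨⟨hc, -⟩, ⟨hd, -⟩, e⟩ := st.psiRel_iff.1 hcd
    have hdc : st.ribbonGraph.Next (st.ribbonGraph.src d) (st.ribbonGraph.src c) := ⟨d, hd, rfl, e⟩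
    have hmk := hdc.mk_eq (h.src_mem d hd) (h.src_mem c hc)
    exact ⟨fun ⟨_, e⟩ => ⟨hd, hmk.trans e⟩, fun ⟨_, e⟩ => ⟨hc, hmk.symm.trans e⟩⟩
  · rintro ⟨hb, e⟩
    let p (u : HalfEdge) : Prop :=
      ∃ c ∈ Q.A, st.ribbonGraph.src c = u ∧ Relation.EqvGen (PsiRel Q st) a c
    have hp (u v : HalfEdge) (huv : st.ribbonGraph.Next u v) : p u ↔ p v := by
      obtain ⟨d, hd, rfl, rfl⟩ := huv
      constructor
      · rintro ⟨c, hc, e, hac⟩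
        obtain rfl := h.eq_of_src hc hd e
        obtain ⟨c', hc'⟩ := st.exists_psiRel_left hQ (st.inC_of_eqvGen hac ha)
        obtain ⟨hcC', -, e'⟩ := st.psiRel_iff.1 hc'
        exact ⟨c', hcC'.1, e'.symm, hac.trans _ _ _ (.symm _ _ (.rel _ _ hc'))⟩
      · rintro ⟨c, hc, e, hac⟩
        have hcC := st.inC_of_eqvGen hac ha
        have hcd := st.psiRel_iff.2
          ⟨hcC, (st.inC_iff_of_tgt_eq_src hQ hc hd e.symm).1 hcC, e.symm⟩
        exact ⟨d, hd, rfl, hac.trans _ _ _ (.rel _ _ hcd)⟩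
    obtain ⟨c, hc, e', hac⟩ :=
      (RibbonGraph.Node.prop_congr hp e).2 ⟨a, ha.1, rfl, .refl a⟩
    exact h.eq_of_src hc hb e' ▸ hac

theorem cOrbit_iff (hQ : IsGentle Q) {O : Set ℕ} :
    COrbit Q st O ↔ st.ribbonGraph.IsClosedNode (st.locallyGentle_ribbonGraph hQ) O := by
  refine exists_congr fun a => ⟨fun ⟨ha, hO⟩ => ?_, fun ⟨haA, hopen, hO⟩ => ?_⟩
  · exact ⟨ha.1, ((st.inC_iff hQ).1 ha).2, hO.trans (Set.ext fun b => st.eqvGen_psiRel_iff hQ ha)⟩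
  · have ha := (st.inC_iff hQ).2 ⟨haA, hopen⟩
    exact ⟨ha, hO.trans (Set.ext fun b => (st.eqvGen_psiRel_iff hQ ha).symm)⟩

theorem card_node_ribbonGraph (hQ : IsGentle Q) : Nat.card st.ribbonGraph.Node =
    st.ribbonGraph.firsts.card + {O | COrbit Q st O}.ncard := by
  simp only [st.cOrbit_iff hQ, RibbonGraph.card_node (st.locallyGentle_ribbonGraph hQ)]

end SigmaTau

/-! ### Boundary components -/

namespace RibbonGraph

variable {G : RibbonGraph} {f g : HalfEdge → ZMod 2} {S : HalfEdge → Prop} {Z : Finset ℕ}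
  {r r' l s t : HalfEdge}

/-- The ribbon graph with all edges twisted. Its walks are the paths in the gentle quiver, whereas
the walks of the original graph are the antipaths. -/
def twist (G : RibbonGraph) : RibbonGraph := { G with src := fun a => opp (G.src a) }

theorem LocallyGentle.twist (h : G.LocallyGentle) : G.twist.LocallyGentle where
  __ := h
  src_inj _a ha _b hb e := h.src_inj ha hb (opp_injective e)

theorem forall_not_next_twist_iff : (∀ t, ¬ G.twist.Next (opp s) t) ↔ ∀ t, ¬ G.Next s t :=
  forall_congr' fun _ => not_congr <| exists_congr fun _ => and_congr_right fun _ =>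
    and_congr_left fun _ => opp_injective.eq_iff

theorem sum_firsts_eq_sum_firsts_op (h : G.LocallyGentle) {M : Type*} [AddCommMonoid M]
    {u v : HalfEdge → M} (huv : ∀ r ∈ G.firsts, ∀ l ∈ G.op.firsts, ∀ n, G.Steps n r l → u r = v l) :
    ∑ r ∈ G.firsts, u r = ∑ l ∈ G.op.firsts, v l := by
  choose! last hlast n hn using fun r (hr : r ∈ G.firsts) => exists_steps_last_of_mem_firsts h hr
  refine Finset.sum_bij (fun r _ => last r) hlast (fun r hr r' hr' e => ?_) (fun l hl => ?_)
    fun r hr => huv r hr _ (hlast r hr) _ (hn r hr)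
  · exact ((hn r hr).unique_of_firsts h hr hr' (e ▸ hn r' hr')).2
  · obtain ⟨hlV, hl⟩ := mem_firsts_op.1 hl
    obtain ⟨r, hr, m, hm⟩ := isOpen_of_forall_not_next h hlV hl
    exact ⟨r, hr, (hn r hr).last_unique h hm (mem_firsts_op.1 (hlast r hr)).2 hl⟩

/-- A function on half-edges which factors through the boundary components of the ribbon surface:
besides the paths, it is constant along the passages `r, opp l` from the first to the last half-edge
of an open node. -/
structure IsFaceFun (G : RibbonGraph) (f : HalfEdge → ZMod 2) : Prop where
  isNodeFun_twist : G.twist.IsNodeFun f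
  eq_opp_last : ∀ r ∈ G.firsts, ∀ l ∈ G.op.firsts, ∀ n, G.Steps n r l → f r = f (opp l)

theorem IsFaceFun.add (hf : G.IsFaceFun f) (hg : G.IsFaceFun g) : G.IsFaceFun (f + g) where
  isNodeFun_twist a ha := congrArg₂ (· + ·) (hf.isNodeFun_twist a ha) (hg.isNodeFun_twist a ha)
  eq_opp_last r hr l hl n hn :=
    congrArg₂ (· + ·) (hf.eq_opp_last r hr l hl n hn) (hg.eq_opp_last r hr l hl n hn)

theorem IsFaceFun.sum_mul_opp (h : G.LocallyGentle) (hf : G.IsFaceFun f) {P : HalfEdge → ZMod 2}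
    (hP : G.IsNodeFun P) : ∑ s ∈ G.halves, P s * f (opp s) = ∑ s ∈ G.halves, P s * f s := by
  rw [sum_halves h fun s => P s * f s, show G.halves = G.op.halves from rfl, sum_halves h.op]
  congr 1
  · exact Finset.sum_congr rfl fun a ha => congrArg₂ (· * ·) (hP a ha) (hf.isNodeFun_twist a ha)
  · refine (sum_firsts_eq_sum_firsts_op h fun r hr l hl n hn => ?_).symm
    exact congrArg₂ (· * ·) (hn.sameNode P hP) (hf.eq_opp_last r hr l hl n hn)

theorem IsFaceFun.sum_mul_eq_zero (h : G.LocallyGentle) (hf : G.IsFaceFun f) {w : ℕ → ZMod 2}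
    (hw : G.IsCoboundary w) : ∑ v ∈ G.V, w v * (f (v, true) + f (v, false)) = 0 := by
  obtain ⟨P, hP, hPw⟩ := hw
  calc ∑ v ∈ G.V, w v * (f (v, true) + f (v, false))
      = ∑ s ∈ G.halves, P s * (f s + f (opp s)) := by
        rw [halves, Finset.sum_product]
        refine Finset.sum_congr rfl fun v hv => ?_
        rw [← hPw (v, true) hv, Fintype.sum_bool]
        simp only [opp, Bool.not_true, Bool.not_false]
        ring
    _ = ∑ s ∈ G.halves, P s * f s + ∑ s ∈ G.halves, P s * f s := by
        simp only [mul_add, Finset.sum_add_distrib, hf.sum_mul_opp h hP]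
    _ = 0 := CharTwo.add_self_eq_zero _

theorem IsFaceFun.opp_eq (h : G.LocallyGentle) (hf : G.IsFaceFun f) (hZ : G.IsCycle Z) {z : ℕ}
    (hz : z ∈ Z) (hfz : f (z, true) + f (z, false) = 0) (hs : s.1 ∈ G.V) : f (opp s) = f s := by
  classical
  let c : ZMod 2 := if s.1 ∈ Z then 1 else 0
  have hw : G.IsCoboundary (Pi.single s.1 1 + c • Pi.single z 1) := by
    simp only [hZ.isCoboundary_iff, Pi.add_apply, Pi.smul_apply, smul_eq_mul]
    rw [Finset.sum_add_distrib, ← Finset.mul_sum, Finset.sum_pi_single',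
      Finset.sum_pi_single', if_pos hz, mul_one]
    exact CharTwo.add_self_eq_zero _
  have hsum := hf.sum_mul_eq_zero h hw
  simp only [Pi.add_apply, Pi.smul_apply, smul_eq_mul, add_mul, Finset.sum_add_distrib, mul_assoc,
    ← Finset.mul_sum, Pi.single_apply, ite_mul, one_mul, zero_mul, Finset.sum_ite_eq', hs,
    hZ.subset hz, if_true, hfz, mul_zero, add_zero] at hsum
  rw [← add_opp f s] at hsum
  exact (CharTwo.add_eq_zero.1 hsum).symm

theorem IsFaceFun.constant (h : G.LocallyGentle) (hf : G.IsFaceFun f)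
    (hopp : ∀ s : HalfEdge, s.1 ∈ G.V → f (opp s) = f s) (hs : s.1 ∈ G.V) (ht : t.1 ∈ G.V) :
    f s = f t := by
  have hedge (u v : HalfEdge) (hu : u.1 ∈ G.V) (huv : u.1 = v.1) : f u = f v := by
    obtain rfl | rfl := eq_or_eq_opp huv
    · rfl
    · exact hopp v hu
  refine (connected_iff.1 h.connected (fun v => f s = f (v, true)) (fun a ha => ?_) s.1 hs t.1 ht
    (hedge _ _ hs rfl)).trans (hedge _ _ ht rfl)
  exact Eq.congr_right <| calc f ((G.src a).1, true)
    _ = f (opp (G.src a)) := hedge _ _ (h.src_mem a ha) rfl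
    _ = f (G.tgt a) := hf.isNodeFun_twist a ha
    _ = f ((G.tgt a).1, true) := hedge _ _ (h.tgt_mem a ha) rfl

-- A face function is constant if it agrees on the two sides of one edge of the cycle; mod 2, one of
-- `f`, `g` and `f + g` does.
theorem IsCycle.faceFun_constant (hZ : G.IsCycle Z) (h : G.LocallyGentle) (hf : G.IsFaceFun f)
    (hg : G.IsFaceFun g) : ∃ k ∈ ({f, g, f + g} : Set (HalfEdge → ZMod 2)),
      ∀ s t : HalfEdge, s.1 ∈ G.V → t.1 ∈ G.V → k s = k t := by
  obtain ⟨z, hz⟩ := hZ.nonempty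
  have hconst {k : HalfEdge → ZMod 2} (hk : G.IsFaceFun k) (hkz : k (z, true) + k (z, false) = 0)
      (s t : HalfEdge) : s.1 ∈ G.V → t.1 ∈ G.V → k s = k t :=
    hk.constant h fun u => hk.opp_eq h hZ hz hkz
  obtain hfz | hfz := eq_zero_or_one (f (z, true) + f (z, false))
  · exact ⟨f, by simp, hconst hf hfz⟩
  obtain hgz | hgz := eq_zero_or_one (g (z, true) + g (z, false))
  · exact ⟨g, by simp, hconst hg hgz⟩
  refine ⟨f + g, by simp, hconst (hf.add hg) ?_⟩
  rw [Pi.add_apply, Pi.add_apply, add_add_add_comm, hfz, hgz]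
  rfl

open Classical in
/-- The indicator function of the paths, extended to the right, starting at the first half-edges in
`S`. -/
noncomputable def faceFun (G : RibbonGraph) (S : HalfEdge → Prop) (s : HalfEdge) : ZMod 2 :=
  if ∃ r ∈ G.firsts, S r ∧ ∃ n, G.twist.Steps n r s then 1 else 0

/-- The relation `Φ` on maximal antipaths, each given by its first half-edge: a maximal path leads
from `r` to the last half-edge `l` of the node of `r'`. -/
def FaceStep (G : RibbonGraph) (r r' : HalfEdge) : Prop :=
  r ∈ G.firsts ∧ r' ∈ G.firsts ∧
    ∃ l ∈ G.op.firsts, (∃ m, G.twist.Steps m r (opp l)) ∧ ∃ n, G.Steps n r' l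

theorem faceFun_eq_one_iff (h : G.LocallyGentle) (hr : r ∈ G.firsts) {n : ℕ}
    (hrs : G.twist.Steps n r s) : G.faceFun S s = 1 ↔ S r := by
  have hiff : (∃ r ∈ G.firsts, S r ∧ ∃ n, G.twist.Steps n r s) ↔ S r :=
    ⟨fun ⟨r', hr', hS, m, hm⟩ => (hm.unique_of_firsts h.twist hr' hr hrs).2 ▸ hS,
      fun hS => ⟨r, hr, hS, n, hrs⟩⟩
  simp [faceFun, hiff]

theorem isFaceFun_faceFun (h : G.LocallyGentle) (hS : ∀ r r', G.FaceStep r r' → (S r ↔ S r')) :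
    G.IsFaceFun (G.faceFun S) where
  isNodeFun_twist a ha := by
    have hiff (r : HalfEdge) (hr : r ∈ G.firsts) : (∃ n, G.twist.Steps n r (opp (G.src a))) ↔
        ∃ n, G.twist.Steps n r (G.tgt a) :=
      RibbonGraph.Next.exists_steps_iff h.twist hr ⟨a, ha, rfl, rfl⟩
    classical
    exact if_congr (exists_congr fun r => and_congr_right fun hr =>
      and_congr_right fun _ => hiff r hr) rfl rfl
  eq_opp_last r hr l hl n hn := by
    have hlast := mem_firsts_op.1 hl
    obtain ⟨r', hr', m, hm⟩ := isOpen_of_forall_not_next h.twist (s := opp l) hlast.1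
      (forall_not_next_twist_iff.2 hlast.2)
    have hiff : G.faceFun S r = 1 ↔ G.faceFun S (opp l) = 1 :=
      (faceFun_eq_one_iff h hr (n := 0) rfl).trans <|
        (hS r' r ⟨hr', hr, l, hl, ⟨m, hm⟩, n, hn⟩).symm.trans (faceFun_eq_one_iff h hr' hm).symm
    obtain e | e := eq_zero_or_one (G.faceFun S (opp l)) <;>
      obtain e' | e' := eq_zero_or_one (G.faceFun S r) <;> simp_all

-- There are at most two boundary components, and `S` tells apart two which have first half-edges.
-- So all of them do, and every path extends to one which starts at a first half-edge.
theorem exists_rank (h : G.LocallyGentle) (hZ : G.IsCycle Z)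
    (hS : ∀ r r', G.FaceStep r r' → (S r ↔ S r')) (hr : r ∈ G.firsts) (hr' : r' ∈ G.firsts)
    (hSr : S r) (hSr' : ¬ S r') :
    ∃ rk : ℕ → ℕ, ∀ a ∈ G.A, ∀ b ∈ G.A, G.src a = opp (G.tgt b) → rk b < rk a := by
  have hopen (s : HalfEdge) (hs : s.1 ∈ G.V) : G.twist.IsOpen s := by
    obtain ⟨k, hk, hconst⟩ := hZ.faceFun_constant h (isFaceFun_faceFun h hS)
      (isFaceFun_faceFun h fun r r' hrr' => (hS r r' hrr').not)
    have hrr' := hconst r r' (mem_firsts.1 hr).1 (mem_firsts.1 hr').1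
    have hrs := hconst r s (mem_firsts.1 hr).1 hs
    have hval (T : HalfEdge → Prop) {r : HalfEdge} (hr : r ∈ G.firsts) :
        G.faceFun T r = 1 ↔ T r := faceFun_eq_one_iff h hr (n := 0) rfl
    obtain rfl | rfl | rfl := hk
    · exact absurd ((hval S hr').1 (hrr' ▸ (hval S hr).2 hSr)) hSr'
    · exact absurd hSr ((hval _ hr).1 (hrr'.trans ((hval _ hr').2 hSr')))
    · by_contra hs'
      have hzero (T : HalfEdge → Prop) : G.faceFun T s = 0 :=
        if_neg fun ⟨r, hr, _, n, hn⟩ => hs' ⟨r, hr, n, hn⟩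
      have hnot := (hval (fun r => ¬ S r) hr).not.2 (not_not.2 hSr)
      rw [Pi.add_apply, Pi.add_apply, hzero, hzero, (hval S hr).2 hSr,
        (eq_zero_or_one _).resolve_right hnot] at hrs
      exact absurd hrs (by decide)
  choose! root hroot rk hrk using hopen
  refine ⟨fun a => rk (G.tgt a), fun a ha b hb e => ?_⟩
  have hb' := h.tgt_mem b hb
  have ha' := h.tgt_mem a ha
  have hstep : G.twist.Steps (rk (G.tgt b) + 1) (root (G.tgt b)) (G.tgt a) :=
    (hrk _ hb').tail ⟨a, ha, by simp [twist, e], rfl⟩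
  exact Nat.lt_of_succ_le
    (hstep.unique_of_firsts h.twist (hroot _ hb') (hroot _ ha') (hrk _ ha')).1.le

end RibbonGraph

namespace SigmaTau

variable {Q : QuivRel} {st : SigmaTau Q} {p : List ℕ} {r r' v : HalfEdge}

theorem source_sigma_ofWalk_twist (hp : st.ribbonGraph.twist.IsWalk p r v) :
    (Thread.ofWalk (opp r) p).source Q = r.1 ∧
      (Thread.ofWalk (opp r) p).sigma st = -sign r := by
  rw [← sign_opp]
  cases p with
  | nil => exact ⟨rfl, rfl⟩
  | cons a p =>
    obtain ⟨hA, -, rfl, -⟩ := RibbonGraph.isWalk_cons_iff.1 hp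
    exact (st.src_eq_iff (hA _ (List.getLast_mem (List.cons_ne_nil a p)))).1 (opp_opp _).symm

theorem target_tauPath_ofWalk_twist (hp : st.ribbonGraph.twist.IsWalk p r v) :
    (Thread.ofWalk (opp r) p).target Q = v.1 ∧
      (Thread.ofWalk (opp r) p).tauPath st = sign v := by
  cases p with
  | nil =>
    obtain rfl : r = v := hp
    exact ⟨rfl, by rw [Thread.ofWalk, Thread.tauPath, sign_opp, neg_neg]⟩
  | cons a p => exact (st.tgt_eq_iff hp.1).1 hp.2.1

theorem isPathThread_ofWalk_twist (hQ : IsGentle Q) (hr : r.1 ∈ Q.V)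
    (hp : st.ribbonGraph.twist.IsWalk p r v) : IsPathThread Q (.ofWalk (opp r) p) := by
  cases p with
  | nil => exact ⟨hr, sign_eq_or _⟩
  | cons a p =>
    obtain ⟨hA, hchain, -, -⟩ := RibbonGraph.isWalk_cons_iff.1 hp
    refine ⟨⟨List.cons_ne_nil a p, hA, hchain.imp fun b c hbc => congrArg Prod.fst hbc⟩,
      hchain.imp fun b c hbc hrel => ?_⟩
    exact opp_ne _ (hbc.trans ((st.mem_rel_iff hQ).1 hrel).2.2.symm)

theorem inM_ofWalk_twist (hQ : IsGentle Q) (hr : r ∈ st.ribbonGraph.firsts)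
    (hv : opp v ∈ st.ribbonGraph.op.firsts) (hp : st.ribbonGraph.twist.IsWalk p r v) :
    InM Q st (.ofWalk (opp r) p) := by
  obtain ⟨hrV, hr⟩ := st.mem_firsts_iff.1 hr
  obtain ⟨-, hv⟩ := st.mem_firsts_op_iff.1 hv
  refine ⟨isPathThread_ofWalk_twist hQ hrV hp, ?_, ?_⟩
  · rw [(target_tauPath_ofWalk_twist hp).1, (target_tauPath_ofWalk_twist hp).2, ← sign_opp]
    exact hv
  · rw [(source_sigma_ofWalk_twist hp).1, (source_sigma_ofWalk_twist hp).2, neg_neg]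
    exact hr

theorem phiRel_antipath (hQ : IsGentle Q) (hrr' : st.ribbonGraph.FaceStep r r') :
    PhiRel Q st (st.antipath r) (st.antipath r') := by
  have h := st.locallyGentle_ribbonGraph hQ
  obtain ⟨hr, hr', l, hl, ⟨m, hm⟩, n, hn⟩ := hrr'
  obtain ⟨p, hp⟩ := hm.exists_isWalk
  obtain ⟨t, ht⟩ := RibbonGraph.exists_isMaxWalk_maxWalk h hr'
  obtain rfl := ht.isWalk.steps.last_unique h hn (RibbonGraph.mem_firsts_op.1 ht.mem_right).2
    (RibbonGraph.mem_firsts_op.1 hl).2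
  obtain ⟨hsource, hsigma⟩ := st.source_sigma_antipath hQ hr
  obtain ⟨htarget, htau⟩ := target_tauAnti_ofWalk ht.isWalk
  obtain ⟨hsource', hsigma'⟩ := source_sigma_ofWalk_twist hp
  obtain ⟨htarget', htau'⟩ := target_tauPath_ofWalk_twist hp
  refine ⟨st.inN_antipath hQ hr, st.inN_antipath hQ hr', .ofWalk (opp r) p,
    inM_ofWalk_twist hQ hr ((opp_opp t).symm ▸ hl) hp, hsource'.trans hsource.symm, ?_,
    htarget.trans htarget'.symm, ?_⟩
  · rw [hsigma', hsigma]
  · rw [htau', sign_opp, neg_neg]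
    exact htau

theorem exists_rank (hQ : IsGentle Q) {Z : Finset ℕ} (hZ : st.ribbonGraph.IsCycle Z)
    {O O' : Set Thread} (hO : NOrbit Q st O) (hO' : NOrbit Q st O') (hne : O ≠ O') :
    ∃ rk : ℕ → ℕ, ∀ a ∈ Q.A, ∀ b ∈ Q.A,
      st.ribbonGraph.src a = opp (st.ribbonGraph.tgt b) → rk b < rk a := by
  obtain ⟨w, hw, rfl⟩ := hO
  obtain ⟨w', hw', rfl⟩ := hO'
  obtain ⟨r, hr, rfl⟩ := st.exists_eq_antipath hQ hw
  obtain ⟨r', hr', rfl⟩ := st.exists_eq_antipath hQ hw'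
  refine RibbonGraph.exists_rank (S := fun u => Relation.EqvGen (PhiRel Q st) (st.antipath r)
    (st.antipath u)) (st.locallyGentle_ribbonGraph hQ) hZ (fun u u' hu => ?_) hr hr' (.refl _)
    fun hrr' => hne ?_
  · have hstep : Relation.EqvGen (PhiRel Q st) (st.antipath u) (st.antipath u') :=
      .rel _ _ (phiRel_antipath hQ hu)
    exact ⟨fun hru => hru.trans _ _ _ hstep, fun hru => hru.trans _ _ _ hstep.symm⟩
  · ext v
    exact ⟨fun hv => hrr'.symm.trans _ _ _ hv, fun hv => hrr'.trans _ _ _ hv⟩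

end SigmaTau

/-! ### The invariant `f_𝚫` -/

section Orbits

variable {α β : Type*} {s : Set α} {r : α → α → Prop}

theorem ncard_eq_finsum_mem_one (hs : s.Finite) : s.ncard = ∑ᶠ _a ∈ s, 1 := by
  lift s to Finset α using hs
  rw [Set.ncard_coe_finset, finsum_mem_coe_finset, Finset.card_eq_sum_ones]

theorem finsum_mem_comp_eq_sum (hs : s.Finite) {f : α → β} {X : Finset β} (hf : ∀ a ∈ s, f a ∈ X)
    (g : β → ℕ) : ∑ᶠ a ∈ s, g (f a) = ∑ x ∈ X, {a | a ∈ s ∧ f a = x}.ncard * g x := by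
  classical
  lift s to Finset α using hs
  rw [finsum_mem_coe_finset, ← Finset.sum_fiberwise_of_maps_to' hf]
  refine Finset.sum_congr rfl fun x _ => ?_
  rw [Finset.sum_const, smul_eq_mul, ← Set.ncard_coe_finset, Finset.coe_filter]
  rfl

/-- The classes in `s` of the equivalence relation generated by `r`. -/
def orbits (r : α → α → Prop) (s : Set α) : Set (Set α) :=
  {O | ∃ a ∈ s, O = {b | Relation.EqvGen r a b}}

theorem finite_orbits (hs : s.Finite) : (orbits r s).Finite := by
  have himage : orbits r s = (fun a => {b | Relation.EqvGen r a b}) '' s :=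
    Set.ext fun O => exists_congr fun a => and_congr_right fun _ => eq_comm
  exact himage ▸ hs.image _

theorem subset_of_mem_orbits (hr : ∀ a b, r a b → (a ∈ s ↔ b ∈ s)) {O : Set α}
    (hO : O ∈ orbits r s) : O ⊆ s := by
  obtain ⟨a, ha, rfl⟩ := hO
  exact fun b hab => (eqvGen_prop_congr hr hab).1 ha

theorem nonempty_of_mem_orbits {O : Set α} (hO : O ∈ orbits r s) : O.Nonempty := by
  obtain ⟨a, -, rfl⟩ := hO
  exact ⟨a, .refl a⟩

theorem finsum_mem_orbits (hs : s.Finite) (hr : ∀ a b, r a b → (a ∈ s ↔ b ∈ s)) (g : α → ℕ) :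
    ∑ᶠ O ∈ orbits r s, ∑ᶠ a ∈ O, g a = ∑ᶠ a ∈ s, g a := by
  have hunion : ⋃₀ orbits r s = s :=
    Set.Subset.antisymm (Set.sUnion_subset fun O => subset_of_mem_orbits hr)
      fun a ha => ⟨_, ⟨a, ha, rfl⟩, .refl a⟩
  rw [← finsum_mem_sUnion _ (finite_orbits hs) fun O hO => hs.subset (subset_of_mem_orbits hr hO),
    hunion]
  rintro _ ⟨a, -, rfl⟩ _ ⟨b, -, rfl⟩ hne
  refine Set.disjoint_left.2 fun c hac hbc => hne (Set.ext fun d => ?_)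
  exact ⟨fun had => hbc.trans _ _ _ (hac.symm.trans _ _ _ had),
    fun hbd => hac.trans _ _ _ (hbc.symm.trans _ _ _ hbd)⟩

end Orbits

theorem PhiRel.inN_iff {Q : QuivRel} {st : SigmaTau Q} (w w' : Thread) (h : PhiRel Q st w w') :
    InN Q st w ↔ InN Q st w' := iff_of_true h.1 h.2.1

namespace SigmaTau

variable {Q : QuivRel} {st : SigmaTau Q} {a b c d m : ℕ}

theorem finite_setOf_inC : {a | InC Q st a}.Finite := Q.A.finite_toSet.subset fun _ ha => ha.1

theorem finite_setOf_nOrbit (hQ : IsGentle Q) : {O | NOrbit Q st O}.Finite :=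
  finite_orbits (st.finite_setOf_inN hQ)

theorem finite_setOf_cOrbit : {O | COrbit Q st O}.Finite := finite_orbits finite_setOf_inC

theorem pN_pos (hQ : IsGentle Q) {O : Set Thread} (hO : NOrbit Q st O) : 0 < pN O :=
  (Set.ncard_pos ((st.finite_setOf_inN hQ).subset (subset_of_mem_orbits PhiRel.inN_iff hO))).2
    (nonempty_of_mem_orbits hO)

theorem finsum_pN (hQ : IsGentle Q) :
    ∑ᶠ O ∈ {O | NOrbit Q st O}, pN O = st.ribbonGraph.firsts.card := by
  have hN := st.finite_setOf_inN hQ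
  rw [← st.ncard_setOf_inN hQ, ncard_eq_finsum_mem_one hN, ← finsum_mem_orbits hN PhiRel.inN_iff]
  exact finsum_mem_congr rfl fun O hO =>
    ncard_eq_finsum_mem_one (hN.subset (subset_of_mem_orbits PhiRel.inN_iff hO))

theorem finsum_qN_add_finsum_ncard (hQ : IsGentle Q) :
    ∑ᶠ O ∈ {O | NOrbit Q st O}, qN O + ∑ᶠ O ∈ {O | COrbit Q st O}, O.ncard = Q.A.card := by
  have hC := finite_setOf_inC (st := st)
  rw [← st.finsum_len_add_ncard_setOf_inC hQ, ncard_eq_finsum_mem_one hC,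
    ← finsum_mem_orbits hC PsiRel.inC_iff,
    ← finsum_mem_orbits (st.finite_setOf_inN hQ) PhiRel.inN_iff]
  congr 1
  exact finsum_mem_congr rfl fun O hO =>
    ncard_eq_finsum_mem_one (hC.subset (subset_of_mem_orbits PsiRel.inC_iff hO))

theorem finsum_orbits_of_fInv_eq (hQ : IsGentle Q)
    (hf : ∀ x, fInv Q st x = m * charFn 0 3 x + charFn a b x + charFn c d x) (g : ℕ × ℕ → ℕ) :
    ∑ᶠ O ∈ {O | NOrbit Q st O}, g (pN O, qN O) + ∑ᶠ O ∈ {O | COrbit Q st O}, g (0, O.ncard) =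
      m * g (0, 3) + g (a, b) + g (c, d) := by
  classical
  have hN := finite_setOf_nOrbit (st := st) hQ
  have hC := finite_setOf_cOrbit (st := st)
  let X : Finset (ℕ × ℕ) := hN.toFinset.image (fun O => (pN O, qN O)) ∪
    hC.toFinset.image (fun O => (0, O.ncard)) ∪ {(0, 3), (a, b), (c, d)}
  rw [finsum_mem_comp_eq_sum (X := X) hN (by grind [Set.Finite.mem_toFinset]),
    finsum_mem_comp_eq_sum (X := X) hC (by grind [Set.Finite.mem_toFinset]),
    ← Finset.sum_add_distrib]
  calc _ = ∑ x ∈ X, fInv Q st x * g x :=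
        Finset.sum_congr rfl fun x _ => by
          simp only [fInv, ← add_mul, Prod.ext_iff, @eq_comm _ 0]; rfl
    _ = m * g (0, 3) + g (a, b) + g (c, d) := by
        simp [hf, charFn, X, add_mul, Finset.sum_add_distrib]

theorem ncard_setOf_nOrbit (hQ : IsGentle Q) (ha : 0 < a) (hc : 0 < c)
    (hf : ∀ x, fInv Q st x = m * charFn 0 3 x + charFn a b x + charFn c d x) :
    {O | NOrbit Q st O}.ncard = 2 := by
  have hsum := finsum_orbits_of_fInv_eq hQ hf fun x => if 0 < x.1 then 1 else 0
  have hN : ∑ᶠ O ∈ {O | NOrbit Q st O}, (if 0 < pN O then 1 else 0) = {O | NOrbit Q st O}.ncard :=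
    (finsum_mem_congr rfl fun O hO => if_pos (pN_pos hQ hO)).trans
      (ncard_eq_finsum_mem_one (finite_setOf_nOrbit hQ)).symm
  rw [hN] at hsum
  simpa [ha, hc] using hsum

theorem ncard_setOf_cOrbit (hQ : IsGentle Q) (ha : 0 < a) (hc : 0 < c)
    (hf : ∀ x, fInv Q st x = m * charFn 0 3 x + charFn a b x + charFn c d x) :
    {O | COrbit Q st O}.ncard = m := by
  have hsum := finsum_orbits_of_fInv_eq hQ hf fun x => if x.1 = 0 then 1 else 0
  have hN : ∑ᶠ O ∈ {O | NOrbit Q st O}, (if pN O = 0 then 1 else 0) = 0 :=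
    finsum_mem_eq_zero_of_forall_eq_zero fun O hO => if_neg (pN_pos hQ hO).ne'
  rw [hN] at hsum
  rw [ncard_eq_finsum_mem_one finite_setOf_cOrbit]
  simpa [ha.ne', hc.ne'] using hsum

theorem card_firsts_of_fInv_eq (hQ : IsGentle Q)
    (hf : ∀ x, fInv Q st x = m * charFn 0 3 x + charFn a b x + charFn c d x) :
    st.ribbonGraph.firsts.card = a + c := by
  have hsum := finsum_orbits_of_fInv_eq hQ hf Prod.fst
  rw [finsum_pN hQ] at hsum
  simpa using hsum

theorem card_A_of_fInv_eq (hQ : IsGentle Q)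
    (hf : ∀ x, fInv Q st x = m * charFn 0 3 x + charFn a b x + charFn c d x) :
    Q.A.card = m * 3 + b + d :=
  (finsum_qN_add_finsum_ncard hQ).symm.trans (finsum_orbits_of_fInv_eq hQ hf Prod.snd)

theorem ncard_ne_one_of_cOrbit (ha : 0 < a) (hc : 0 < c)
    (hf : ∀ x, fInv Q st x = m * charFn 0 3 x + charFn a b x + charFn c d x) {O : Set ℕ}
    (hO : COrbit Q st O) : O.ncard ≠ 1 := by
  intro hO1
  have hf1 := hf (0, 1)
  simp only [fInv, charFn, Prod.mk.injEq, ha.ne, hc.ne] at hf1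
  have hempty := (Set.ncard_eq_zero (finite_setOf_cOrbit.subset fun O hO => hO.1)).1
    (Nat.eq_zero_of_add_eq_zero_left hf1)
  exact hempty.le ⟨hO, trivial, hO1⟩

theorem cOrbit_singleton (hQ : IsGentle Q) (ha : (a, a) ∈ Q.rel) : COrbit Q st {a} := by
  have h := st.locallyGentle_ribbonGraph hQ
  obtain ⟨haA, -, e⟩ := (st.mem_rel_iff hQ).1 ha
  have hC : InC Q st a := (st.inC_iff hQ).2 ⟨haA, fun ⟨r, hr, n, hn⟩ =>
    n.lt_succ_self.ne (hn.unique_of_firsts h hr hr (hn.tail ⟨a, haA, rfl, e.symm⟩)).1⟩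
  refine ⟨a, hC, Set.ext fun b => ⟨?_, fun hab => ?_⟩⟩
  · rintro rfl
    exact .refl _
  · refine (eqvGen_prop_congr (p := (· = a)) (fun x y hxy => ?_) hab).1 rfl
    obtain ⟨hx, hy, exy⟩ := st.psiRel_iff.1 hxy
    constructor
    · rintro rfl
      exact h.eq_of_tgt hy.1 haA (exy.trans e)
    · rintro rfl
      exact h.eq_of_src hx.1 haA (exy.symm.trans e.symm)

theorem card_node_eq_card_V (hQ : IsGentle Q)
    (hcard : Q.A.card = Q.V.card + {O | COrbit Q st O}.ncard) :
    Nat.card st.ribbonGraph.Node = st.ribbonGraph.V.card := by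
  have hnode := st.card_node_ribbonGraph hQ
  have hV : 2 * Q.V.card = Q.A.card + _ :=
    RibbonGraph.two_mul_card_V (st.locallyGentle_ribbonGraph hQ)
  have hVQ : st.ribbonGraph.V.card = Q.V.card := rfl
  omega

theorem gentle_ribbonGraph (hQ : IsGentle Q) (hloop : ∀ a ∈ Q.A, (a, a) ∉ Q.rel)
    (hrank : ∃ rk : ℕ → ℕ, ∀ a ∈ Q.A, ∀ b ∈ Q.A,
      st.ribbonGraph.src a = opp (st.ribbonGraph.tgt b) → rk b < rk a) :
    st.ribbonGraph.Gentle where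
  __ := st.locallyGentle_ribbonGraph hQ
  noLoops a ha e := by
    obtain e | e := eq_or_eq_opp e
    · exact hloop a ha ((st.mem_rel_iff hQ).2 ⟨ha, ha, e⟩)
    · obtain ⟨rk, hrk⟩ := hrank
      exact (hrk a ha a ha e).false
  rank := hrank

end SigmaTau

namespace ClassAtilde

variable {Q : QuivRel} {st : SigmaTau Q}

theorem not_mem_rel_self (h : ClassAtilde Q st) (a : ℕ) : (a, a) ∉ Q.rel := fun ha => by
  obtain ⟨hQ, _, _, _, _, hp, hq, hf⟩ := h
  exact SigmaTau.ncard_ne_one_of_cOrbit hp hq hf (SigmaTau.cOrbit_singleton hQ ha)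
    (Set.ncard_singleton a)

theorem card_A (h : ClassAtilde Q st) :
    Q.A.card = Q.V.card + {O | COrbit Q st O}.ncard := by
  obtain ⟨hQ, m₁, m₂, p, q, hp, hq, hf⟩ := h
  have hC := SigmaTau.ncard_setOf_cOrbit hQ hp hq hf
  have hA := SigmaTau.card_A_of_fInv_eq hQ hf
  have hfirsts := SigmaTau.card_firsts_of_fInv_eq hQ hf
  have hV : 2 * Q.V.card = Q.A.card + _ :=
    RibbonGraph.two_mul_card_V (st.locallyGentle_ribbonGraph hQ)
  omega

theorem nontrivial_setOf_nOrbit (h : ClassAtilde Q st) : {O | NOrbit Q st O}.Nontrivial := by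
  obtain ⟨hQ, _, _, _, _, hp, hq, hf⟩ := h
  have htwo := SigmaTau.ncard_setOf_nOrbit hQ hp hq hf
  exact (Set.one_lt_ncard_iff_nontrivial_and_finite.1 (by rw [htwo]; decide)).1

end ClassAtilde

theorem stmt14_general (Q : QuivRel) (st : SigmaTau Q) (hQ : IsGentle Q)
    (hloop : ∀ a ∈ Q.A, (a, a) ∉ Q.rel)
    (hcard : Q.A.card = Q.V.card + {O | COrbit Q st O}.ncard)
    (horbits : {O | NOrbit Q st O}.Nontrivial) :
    ∃ Q' : QuivRel, IsGentle Q' ∧ (∀ a : ℕ, ¬ BranchArrow Q' a) ∧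
      (∀ O : Finset ℕ, ¬ BranchTriangle Q' O) ∧ RefEquiv Q Q' := by
  obtain ⟨Z, hZ⟩ := RibbonGraph.exists_isCycle (st.locallyGentle_ribbonGraph hQ)
    (SigmaTau.card_node_eq_card_V hQ hcard)
  obtain ⟨O, hO, O', hO', hne⟩ := horbits
  -- The bound `n = 0` in `IsGentle` says nothing about paths; the boundary components bound them.
  have hrank := SigmaTau.exists_rank hQ hZ hO hO' hne
  rw [← st.toQuivRel_ribbonGraph hQ]
  exact hZ.exists_refEquiv (SigmaTau.gentle_ribbonGraph hQ hloop hrank)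

/-- Every `𝚫 ∈ Ã` is reflection-equivalent to a gentle
quiver without branch arrows and without branch triangles. -/
theorem stmt14 (Q : QuivRel) (st : SigmaTau Q) (hA : ClassAtilde Q st) :
    ∃ Q' : QuivRel, IsGentle Q' ∧ (∀ a : ℕ, ¬ BranchArrow Q' a) ∧
      (∀ O : Finset ℕ, ¬ BranchTriangle Q' O) ∧ RefEquiv Q Q' :=
  stmt14_general Q st hA.1 (fun a _ => hA.not_mem_rel_self a) hA.card_A hA.nontrivial_setOf_nOrbit

end GentleQuiv
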